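/- arXiv:1906.12037 — 2 statements merged into one kernel-verified Lean document; each statement's English description precedes it below -/
import Mathlib

section
/- Let a, b, c be pairwise distinct elements of ℂ ∖ {0,1}. Let A = ℂ[x,y₁,y₂,z₁,z₂]/(y₁³ + y₂³ + x(x−1)(x−a)(x−b)(x−c), 1 + z₁³ + z₂³) be the coordinate ring of the product W₀ × F₀ of the affine surface W₀: y₁³ + y₂³ + x(x−1)(x−a)(x−b)(x−c) = 0 and the affine Fermat cubic F₀: 1 + z₁³ + z₂³ = 0, let K = Frac(A), and let σ be the order-3 ℂ-algebra automorphism of K determined by σ(y₁) = ω·y₁, σ(y₂) = ω·y₂, σ(z₁) = ω²·z₁, σ(z₂) = ω²·z₂ (fixing x) — the diagonal G = ℤ/3ℤ action. Then the fixed field K^σ is isomorphic as a ℂ-algebra to the function field Frac(ℂ[x₁,x₂,x₃,y]/(y³ − x₁x₂x₃(1+x₁+x₂+x₃)(1+a·x₁+b·x₂+c·x₃))). In other words, Rohde's singular Calabi–Yau threefold X' = (W × F)/G is birationally equivalent to the cyclic triple cover X of ℙ³ branched along the six hyperplanes X₀=0, X₁=0, X₂=0, X₃=0, X₀+X₁+X₂+X₃=0,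 X₀+aX₁+bX₂+cX₃=0. -/
/-!
Formalization conventions.

* The function field of an affine variety whose coordinate ring `ℂ[x₁,…,xₙ]/I` is an
  integral domain is formalized as `FractionRing` of that coordinate ring (for the total
  rings of fractions of the rings appearing here this is the function field).
* Two such varieties are birationally equivalent iff their function fields are
  isomorphic as `ℂ`-algebras.
-/

noncomputable section
open MvPolynomial

/-- `ω = exp(2πi/3) ∈ ℂ`, a fixed primitive cube root of unity. -/
def ω : ℂ := Complex.exp (2 * Real.pi * Complex.I / 3)

/-- Coordinate ring of the affine hypersurface `f = 0` in `ℂⁿ`. -/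
abbrev HSurf {n : ℕ} (f : MvPolynomial (Fin n) ℂ) : Type :=
  MvPolynomial (Fin n) ℂ ⧸ Ideal.span {f}

/-- Coordinate ring of the affine variety `f = g = 0` in `ℂⁿ`. -/
abbrev HSurf2 {n : ℕ} (f g : MvPolynomial (Fin n) ℂ) : Type :=
  MvPolynomial (Fin n) ℂ ⧸ Ideal.span {f, g}

/-- The image of a polynomial `p` in the function field of the hypersurface `f = 0`. -/
def cls {n : ℕ} (f : MvPolynomial (Fin n) ℂ) (p : MvPolynomial (Fin n) ℂ) :
    FractionRing (HSurf f) :=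
  algebraMap (HSurf f) (FractionRing (HSurf f)) (Ideal.Quotient.mk _ p)

/-- The image of a polynomial `p` in the function field of the variety `f = g = 0`. -/
def cls2 {n : ℕ} (f g : MvPolynomial (Fin n) ℂ) (p : MvPolynomial (Fin n) ℂ) :
    FractionRing (HSurf2 f g) :=
  algebraMap (HSurf2 f g) (FractionRing (HSurf2 f g)) (Ideal.Quotient.mk _ p)

/-- `x(x−1)(x−a)(x−b)(x−c)` in the coordinates of `W₀ × F₀`
(`x = X 0`, `y₁ = X 1`, `y₂ = X 2`, `z₁ = X 3`, `z₂ = X 4`). -/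
def q5 (a b c : ℂ) : MvPolynomial (Fin 5) ℂ :=
  X 0 * (X 0 - 1) * (X 0 - C a) * (X 0 - C b) * (X 0 - C c)

/-- Defining polynomial of the affine surface `W₀ : y₁³ + y₂³ + x(x−1)(x−a)(x−b)(x−c) = 0`,
as an equation in `ℂ⁵`. -/
def pW₀5 (a b c : ℂ) : MvPolynomial (Fin 5) ℂ := X 1 ^ 3 + X 2 ^ 3 + q5 a b c

/-- Defining polynomial of the affine Fermat cubic `F₀ : 1 + z₁³ + z₂³ = 0`, as an
equation in `ℂ⁵`. -/
def pF₀5 : MvPolynomial (Fin 5) ℂ := 1 + X 3 ^ 3 + X 4 ^ 3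

/-- Defining polynomial of the affine hypersurface
`y³ = x₁x₂x₃(1+x₁+x₂+x₃)(1+a·x₁+b·x₂+c·x₃)` in `ℂ⁴`
(variables: `x₁ = X 0`, `x₂ = X 1`, `x₃ = X 2`, `y = X 3`), an affine model of the cyclic
triple cover `X` of `ℙ³` branched along the six hyperplanes
`X₀=0, X₁=0, X₂=0, X₃=0, X₀+X₁+X₂+X₃=0, X₀+aX₁+bX₂+cX₃=0`. -/
def pX₁ (a b c : ℂ) : MvPolynomial (Fin 4) ℂ :=
  X 3 ^ 3 - X 0 * X 1 * X 2 * (1 + X 0 + X 1 + X 2) * (1 + C a * X 0 + C b * X 1 + C c * X 2)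

open scoped Polynomial

theorem prime_cubic {R : Type*} [CommRing R] [IsDomain R] [UniqueFactorizationMonoid R]
    (π p : R) (hπ : Prime π) (h1 : π ∣ p) (h2 : ¬ π ^ 2 ∣ p) :
    Prime (Polynomial.X ^ 3 + Polynomial.C p : R[X]) := by
  have hm : (Polynomial.X ^ 3 + Polynomial.C p : R[X]).Monic := Polynomial.monic_X_pow_add_C p (by norm_num)
  have hd : (Polynomial.X ^ 3 + Polynomial.C p : R[X]).degree = 3 := by
    have := Polynomial.degree_X_pow_add_C (R := R) (n := 3) (by norm_num) p
    simpa using this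
  have hn : (Polynomial.X ^ 3 + Polynomial.C p : R[X]).natDegree = 3 := Polynomial.natDegree_X_pow_add_C
  have : Irreducible (Polynomial.X ^ 3 + Polynomial.C p : R[X]) := by
    apply Polynomial.irreducible_of_eisenstein_criterion (P := Ideal.span {π})
    · exact (Ideal.span_singleton_prime hπ.ne_zero).2 hπ
    · rw [hm.leadingCoeff]
      intro h
      exact hπ.not_isUnit (isUnit_of_dvd_one (Ideal.mem_span_singleton.1 h))
    · intro n hn'
      rw [hd] at hn'
      have : n < 3 := by exact_mod_cast hn'
      rw [Ideal.mem_span_singleton]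
      interval_cases n <;> simp [Polynomial.coeff_X_pow, Polynomial.coeff_C, h1]
    · rw [hd]; norm_num
    · simp only [Polynomial.coeff_add, Polynomial.coeff_X_pow, Polynomial.coeff_C]
      rw [Ideal.span_singleton_pow, Ideal.mem_span_singleton]
      simpa using h2
    · exact hm.isPrimitive
  exact this.prime

theorem prime_descend {R S : Type*} [CommRing R] [CommRing S] [IsDomain R] (φ : R →+* S)
    (hφ : Function.Injective φ) (f : R[X]) (hf : f.Monic) (hp : Prime (f.map φ)) :
    Prime f := by
  refine ⟨hf.ne_zero, fun h => hp.not_isUnit (h.map (Polynomial.mapRingHom φ)), fun g h hgh => ?_⟩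
  have := Polynomial.map_dvd φ hgh
  rw [Polynomial.map_mul] at this
  rcases hp.dvd_or_dvd this with h | h
  · left; exact (Polynomial.map_dvd_map φ hφ hf).1 h
  · right; exact (Polynomial.map_dvd_map φ hφ hf).1 h

abbrev q1 (a b c : ℂ) : ℂ[X] := Polynomial.X * (Polynomial.X - 1) * (Polynomial.X - Polynomial.C a) * (Polynomial.X - Polynomial.C b) * (Polynomial.X - Polynomial.C c)
abbrev fB (a b c : ℂ) : ℂ[X][X][X] := Polynomial.X ^ 3 + Polynomial.C (Polynomial.X ^ 3 + Polynomial.C (q1 a b c))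

theorem prime_fB (a b c : ℂ) (ha0 : a ≠ 0) (hb0 : b ≠ 0) (hc0 : c ≠ 0) : Prime (fB a b c) := by
  have h : Prime (Polynomial.X ^ 3 + Polynomial.C (q1 a b c) : ℂ[X][X]) := by
    apply prime_cubic Polynomial.X _ Polynomial.prime_X
    · exact ⟨(Polynomial.X - 1) * (Polynomial.X - Polynomial.C a) * (Polynomial.X - Polynomial.C b) * (Polynomial.X - Polynomial.C c), by ring⟩
    · intro ⟨g, hg⟩
      have : (Polynomial.X - 1) * (Polynomial.X - Polynomial.C a) * (Polynomial.X - Polynomial.C b) * (Polynomial.X - Polynomial.C c) = Polynomial.X * g := by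
        apply mul_left_cancel₀ (Polynomial.X_ne_zero (R := ℂ))
        rw [q1] at hg
        linear_combination hg
      have := congrArg (Polynomial.eval 0) this
      simp [ha0, hb0, hc0] at this
  exact prime_cubic _ _ h dvd_rfl (fun ⟨g, hg⟩ => h.not_isUnit (IsUnit.of_mul_eq_one g (by
    apply mul_left_cancel₀ h.ne_zero
    linear_combination -hg)))

theorem prime_fF (B : Type*) [CommRing B] [IsDomain B] [CharZero B] :
    Prime (Polynomial.X ^ 3 + Polynomial.C (1 + Polynomial.X ^ 3) : B[X][X]) := by
  apply prime_descend (Polynomial.mapRingHom (algebraMap B (FractionRing B)))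
    (Polynomial.map_injective _ (IsFractionRing.injective B _)) _ (Polynomial.monic_X_pow_add_C _ (by norm_num))
  have : ((Polynomial.X ^ 3 + Polynomial.C (1 + Polynomial.X ^ 3) : B[X][X]).map (Polynomial.mapRingHom (algebraMap B (FractionRing B))))
    = Polynomial.X ^ 3 + Polynomial.C (1 + Polynomial.X ^ 3) := by simp
  rw [this]
  have : CharZero (FractionRing B) := charZero_of_injective_algebraMap (IsFractionRing.injective B _)
  apply prime_cubic (Polynomial.X - Polynomial.C (-1)) _ (Polynomial.prime_X_sub_C _)
  · exact ⟨Polynomial.X ^ 2 - Polynomial.X + 1, by simp; ring⟩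
  · intro ⟨g, hg⟩
    have : Polynomial.X ^ 2 - Polynomial.X + 1 = (Polynomial.X - Polynomial.C (-1)) * g := by
      apply mul_left_cancel₀ (Polynomial.prime_X_sub_C (-1 : FractionRing B)).ne_zero
      simp only [map_neg, map_one] at hg ⊢
      linear_combination hg
    have := congrArg (Polynomial.eval (-1)) this
    simp at this
    norm_num at this

theorem domain_of_leftInv {S T : Type*} [CommRing S] [CommRing T] [IsDomain T]
    (f : S →+* T) (g : T →+* S) (h : g.comp f = RingHom.id S) : IsDomain S := by
  have hi : Function.Injective f := Function.LeftInverse.injective (g := g)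
    (fun x => by simpa using RingHom.congr_fun h x)
  exact hi.isDomain f

theorem domain_HSurf2 (a b c : ℂ) (ha0 : a ≠ 0) (hb0 : b ≠ 0) (hc0 : c ≠ 0) :
    IsDomain (HSurf2 (pW₀5 a b c) pF₀5) := by
  have : IsDomain (AdjoinRoot (fB a b c)) :=
    AdjoinRoot.isDomain_of_prime (prime_fB a b c ha0 hb0 hc0)
  set B := AdjoinRoot (fB a b c) with hB
  have : CharZero B := charZero_of_injective_algebraMap (algebraMap ℂ B).injective
  have hP := prime_fF B
  set fD : B[X][X] := Polynomial.X ^ 3 + Polynomial.C (1 + Polynomial.X ^ 3) with hfD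
  have : IsDomain (AdjoinRoot fD) := AdjoinRoot.isDomain_of_prime hP
  set D := AdjoinRoot fD with hD
  set A := HSurf2 (pW₀5 a b c) pF₀5 with hA
  let ι : B →+* D := (AdjoinRoot.of fD).comp Polynomial.C
  let κ : ℂ →+* D := ι.comp ((AdjoinRoot.of (fB a b c)).comp (Polynomial.C.comp Polynomial.C))
  let v : Fin 5 → D := ![ι (AdjoinRoot.of _ (Polynomial.C Polynomial.X)),
    ι (AdjoinRoot.of _ (Polynomial.X)),
    ι (AdjoinRoot.root _),
    AdjoinRoot.of _ Polynomial.X, AdjoinRoot.root _]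
  let F0 : MvPolynomial (Fin 5) ℂ →+* D := eval₂Hom κ v
  have hF1 : F0 (pW₀5 a b c) = 0 := by
    have h := AdjoinRoot.mk_self (f := fB a b c)
    have h' := congrArg ι h
    simp only [fB, q1, map_add, map_pow, map_mul, map_sub, AdjoinRoot.mk_X, AdjoinRoot.mk_C,
      map_one, map_zero] at h'
    simp [F0, pW₀5, q5, v, κ]
    linear_combination h'
  have hF2 : F0 pF₀5 = 0 := by
    have h := AdjoinRoot.mk_self (f := fD)
    change AdjoinRoot.mk fD (Polynomial.X ^ 3 + Polynomial.C (1 + Polynomial.X ^ 3)) = 0 at h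
    simp only [map_add, map_pow, AdjoinRoot.mk_X, AdjoinRoot.mk_C, map_one] at h
    simp [F0, pF₀5, v]
    linear_combination h
  let F : A →+* D := Ideal.Quotient.lift _ F0 (by
    intro p hp
    have : Ideal.span {pW₀5 a b c, pF₀5} ≤ RingHom.ker F0 := by
      rw [Ideal.span_le]
      rintro x (rfl | rfl)
      · exact hF1
      · exact hF2
    exact this hp)
  let π : MvPolynomial (Fin 5) ℂ →+* A := Ideal.Quotient.mk _
  have hπ1 : π (pW₀5 a b c) = 0 := Ideal.Quotient.eq_zero_iff_mem.2 (Ideal.subset_span (by simp))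
  have hπ2 : π pF₀5 = 0 := Ideal.Quotient.eq_zero_iff_mem.2 (Ideal.subset_span (by simp))
  let g1 : ℂ[X] →+* A := Polynomial.eval₂RingHom (π.comp C) (π (X 0))
  let g2 : ℂ[X][X] →+* A := Polynomial.eval₂RingHom g1 (π (X 1))
  let g3 : B →+* A := AdjoinRoot.lift g2 (π (X 2)) (by
    rw [← hπ1]
    simp [fB, q1, g2, g1, pW₀5, q5, Polynomial.eval₂_pow, Polynomial.eval₂_mul]
    ring)
  let g4 : B[X] →+* A := Polynomial.eval₂RingHom g3 (π (X 3))
  let g5 : D →+* A := AdjoinRoot.lift g4 (π (X 4)) (by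
    rw [← hπ2]
    simp [hfD, g4, pF₀5, Polynomial.eval₂_pow]
    ring)
  have h1 : ∀ r, g1 (Polynomial.C r) = π (C r) := fun r => by simp [g1]
  have h1' : g1 Polynomial.X = π (X 0) := by simp [g1]
  have h2 : ∀ r, g2 (Polynomial.C r) = g1 r := fun r => by simp [g2]
  have h2' : g2 Polynomial.X = π (X 1) := by simp [g2]
  have h3 : ∀ r, g3 (AdjoinRoot.of _ r) = g2 r := fun r => AdjoinRoot.lift_of _
  have h3' : g3 (AdjoinRoot.root _) = π (X 2) := AdjoinRoot.lift_root _
  have h4 : ∀ r, g4 (Polynomial.C r) = g3 r := fun r => by simp [g4]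
  have h4' : g4 Polynomial.X = π (X 3) := by simp [g4]
  have h5 : ∀ r, g5 (AdjoinRoot.of _ r) = g4 r := fun r => AdjoinRoot.lift_of _
  refine domain_of_leftInv F g5 ?_
  apply Ideal.Quotient.ringHom_ext
  apply MvPolynomial.ringHom_ext
  · intro r
    change g5 (F0 (C r)) = π (C r)
    have e : F0 (C r) = κ r := by simp [F0]
    rw [e]
    change g5 (AdjoinRoot.of fD (Polynomial.C (AdjoinRoot.of (fB a b c) (Polynomial.C (Polynomial.C r))))) = _
    rw [h5, h4, h3, h2, h1]
  · intro i
    change g5 (F0 (X i)) = π (X i)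
    have e : F0 (X i) = v i := by simp [F0]
    rw [e]
    fin_cases i
    · change g5 (AdjoinRoot.of fD (Polynomial.C (AdjoinRoot.of (fB a b c) (Polynomial.C Polynomial.X)))) = _
      rw [h5, h4, h3, h2, h1']
      rfl
    · change g5 (AdjoinRoot.of fD (Polynomial.C (AdjoinRoot.of (fB a b c) (Polynomial.X)))) = _
      rw [h5, h4, h3, h2']
      rfl
    · change g5 (AdjoinRoot.of fD (Polynomial.C (AdjoinRoot.root (fB a b c)))) = _
      rw [h5, h4, h3']
      rfl
    · change g5 (AdjoinRoot.of fD Polynomial.X) = _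
      rw [h5, h4']
      rfl
    · exact AdjoinRoot.lift_root _

abbrev p3 (a b c : ℂ) : MvPolynomial (Fin 3) ℂ :=
  - (X 0 * X 1 * X 2 * (1 + X 0 + X 1 + X 2) * (1 + C a * X 0 + C b * X 1 + C c * X 2))

theorem prime_p3 (a b c : ℂ) : Prime (Polynomial.X ^ 3 + Polynomial.C (p3 a b c)) := by
  have hX : Prime (X 0 : MvPolynomial (Fin 3) ℂ) := MvPolynomial.X_prime
  have key : ∀ (p : MvPolynomial (Fin 3) ℂ) (v : Fin 3 → ℂ), v 0 = 0 → eval v p ≠ 0 → ¬ X 0 ∣ p := by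
    rintro p v h0 hp ⟨g, rfl⟩
    simp [h0] at hp
  apply prime_cubic (X 0) _ hX
  · exact ⟨- (X 1 * X 2 * (1 + X 0 + X 1 + X 2) * (1 + C a * X 0 + C b * X 1 + C c * X 2)), by ring⟩
  · rintro ⟨g, hg⟩
    have h : X 0 ∣ (X 1 * X 2 * (1 + X 0 + X 1 + X 2) * (1 + C a * X 0 + C b * X 1 + C c * X 2)
        : MvPolynomial (Fin 3) ℂ) := by
      refine ⟨-g, ?_⟩
      apply mul_left_cancel₀ hX.ne_zero
      linear_combination -hg
    rcases hX.dvd_or_dvd h with h | h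
    · rcases hX.dvd_or_dvd h with h | h
      · rcases hX.dvd_or_dvd h with h | h
        · exact key _ ![0, 1, 0] (by simp) (by simp) h
        · exact key _ ![0, 0, 1] (by simp) (by simp) h
      · exact key _ 0 (by simp) (by simp) h
    · exact key _ 0 (by simp) (by simp) h

abbrev BX (a b c : ℂ) := AdjoinRoot (Polynomial.X ^ 3 + Polynomial.C (p3 a b c))

/-- The embedding of the coordinate ring into the standard model. -/
def toBX (a b c : ℂ) : HSurf (pX₁ a b c) →ₐ[ℂ] BX a b c :=
  Ideal.Quotient.liftₐ _ (aeval (![AdjoinRoot.of _ (X 0), AdjoinRoot.of _ (X 1),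
    AdjoinRoot.of _ (X 2), AdjoinRoot.root _])) (by
    have h := AdjoinRoot.mk_self (f := Polynomial.X ^ 3 + Polynomial.C (p3 a b c))
    intro p hp
    obtain ⟨g, rfl⟩ := Ideal.mem_span_singleton.1 hp
    simp only [map_add, map_pow, map_mul, map_neg, AdjoinRoot.mk_X, AdjoinRoot.mk_C,
      map_one] at h
    rw [map_mul]
    convert zero_mul _
    simp [pX₁]
    have hc : ∀ r, algebraMap ℂ (BX a b c) r = AdjoinRoot.of _ (C r) := fun r => rfl
    simp only [hc]
    linear_combination h)

/-- The inverse of `toBX`. -/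
def ofBX (a b c : ℂ) : BX a b c →+* HSurf (pX₁ a b c) :=
  AdjoinRoot.lift ((Ideal.Quotient.mk _).comp (rename (R := ℂ) (Fin.castSucc (n := 3))).toRingHom)
    (Ideal.Quotient.mk _ (X 3)) (by
    rw [Polynomial.eval₂_add, Polynomial.eval₂_pow, Polynomial.eval₂_X, Polynomial.eval₂_C,
      ← map_pow, RingHom.comp_apply, ← map_add, Ideal.Quotient.eq_zero_iff_mem]
    apply Ideal.subset_span
    have e1 : Fin.castSucc (1 : Fin 3) = 1 := rfl
    have e2 : Fin.castSucc (2 : Fin 3) = 2 := rfl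
    simp [pX₁, e1, e2]
    ring)

theorem toBX_leftInv (a b c : ℂ) (x) : ofBX a b c (toBX a b c x) = x := by
  have : (ofBX a b c).comp (toBX a b c).toRingHom = RingHom.id _ := by
    apply Ideal.Quotient.ringHom_ext
    apply MvPolynomial.ringHom_ext
    · intro r
      have hc : ∀ r, algebraMap ℂ (BX a b c) r = AdjoinRoot.of _ (C r) := fun r => rfl
      change ofBX a b c (aeval _ (C r)) = _
      rw [aeval_C, hc]
      change AdjoinRoot.lift _ _ _ (AdjoinRoot.of _ (C r)) = _
      rw [AdjoinRoot.lift_of]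
      simp
    · intro i
      change ofBX a b c (aeval _ (X i)) = Ideal.Quotient.mk _ (X i)
      rw [aeval_X]
      fin_cases i
      · change AdjoinRoot.lift _ _ _ (AdjoinRoot.of _ (X 0)) = _
        rw [AdjoinRoot.lift_of]
        simp
      · change AdjoinRoot.lift _ _ _ (AdjoinRoot.of _ (X 1)) = _
        rw [AdjoinRoot.lift_of]
        simp
      · change AdjoinRoot.lift _ _ _ (AdjoinRoot.of _ (X 2)) = _
        rw [AdjoinRoot.lift_of]
        simp
      · exact AdjoinRoot.lift_root _
  simpa using RingHom.congr_fun this x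

theorem toBX_injective (a b c : ℂ) : Function.Injective (toBX a b c) :=
  Function.LeftInverse.injective (toBX_leftInv a b c)

theorem domain_HSurf (a b c : ℂ) : IsDomain (HSurf (pX₁ a b c)) := by
  have : IsDomain (BX a b c) := AdjoinRoot.isDomain_of_prime (prime_p3 a b c)
  exact (toBX_injective a b c).isDomain (toBX a b c).toRingHom

theorem exists_phi {K : Type} [Field K] [Algebra ℂ K] (a b c : ℂ) (u : Fin 3 → K) (y : K)
    (hu : AlgebraicIndependent ℂ u)
    (hy : y ^ 3 = u 0 * u 1 * u 2 * (1 + u 0 + u 1 + u 2) *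
      (1 + algebraMap ℂ K a * u 0 + algebraMap ℂ K b * u 1 + algebraMap ℂ K c * u 2)) :
    ∃ φ : FractionRing (HSurf (pX₁ a b c)) →ₐ[ℂ] K, Function.Injective φ ∧
      φ.range = (IntermediateField.adjoin ℂ ({u 0, u 1, u 2, y} : Set K)).toSubalgebra := by
  have : IsDomain (BX a b c) := AdjoinRoot.isDomain_of_prime (prime_p3 a b c)
  have : IsDomain (HSurf (pX₁ a b c)) := domain_HSurf a b c
  let θ : BX a b c →+* K := AdjoinRoot.lift (aeval u : MvPolynomial (Fin 3) ℂ →ₐ[ℂ] K).toRingHom y (by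
    rw [Polynomial.eval₂_add, Polynomial.eval₂_pow, Polynomial.eval₂_X, Polynomial.eval₂_C]
    simp [hy])
  have hinteg : Algebra.IsIntegral (MvPolynomial (Fin 3) ℂ) (BX a b c) := by
    have hm : (Polynomial.X ^ 3 + Polynomial.C (p3 a b c)).Monic :=
      Polynomial.monic_X_pow_add_C _ (by norm_num)
    have := hm.finite_adjoinRoot
    infer_instance
  have hθ : Function.Injective θ := by
    rw [RingHom.injective_iff_ker_eq_bot]
    apply Ideal.eq_bot_of_comap_eq_bot (R := MvPolynomial (Fin 3) ℂ)
    rw [eq_bot_iff]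
    intro p hp
    have hp' : θ (AdjoinRoot.of _ p) = 0 := hp
    rw [AdjoinRoot.lift_of] at hp'
    have : aeval u p = aeval u (0 : MvPolynomial (Fin 3) ℂ) := by simpa using hp'
    exact hu this
  let ψ : HSurf (pX₁ a b c) →ₐ[ℂ] K := 
    { θ.comp (toBX a b c).toRingHom with
      commutes' := fun r => by
        have : θ (toBX a b c (algebraMap ℂ _ r)) = algebraMap ℂ K r := by
          rw [AlgHom.commutes]
          change θ (AdjoinRoot.of _ (C r)) = _
          rw [AdjoinRoot.lift_of]
          simp
        exact this }
  have hψ : Function.Injective ψ := hθ.comp (toBX_injective a b c)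
  let φ : FractionRing (HSurf (pX₁ a b c)) →ₐ[ℂ] K := IsFractionRing.liftAlgHom hψ
  refine ⟨φ, φ.toRingHom.injective, ?_⟩
  have hψX : ∀ i, ψ (Ideal.Quotient.mk _ (X i)) = ![u 0, u 1, u 2, y] i := by
    intro i
    change θ (aeval _ (X i)) = _
    rw [aeval_X]
    fin_cases i
    · change θ (AdjoinRoot.of _ (X 0)) = _
      rw [AdjoinRoot.lift_of]
      simp
    · change θ (AdjoinRoot.of _ (X 1)) = _
      rw [AdjoinRoot.lift_of]
      simp
    · change θ (AdjoinRoot.of _ (X 2)) = _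
      rw [AdjoinRoot.lift_of]
      simp
    · exact AdjoinRoot.lift_root _
  have hr : ψ.range = Algebra.adjoin ℂ ({u 0, u 1, u 2, y} : Set K) := by
    have h1 : ψ.comp (Ideal.Quotient.mkₐ ℂ _) = aeval ![u 0, u 1, u 2, y] := by
      apply MvPolynomial.algHom_ext
      intro i
      rw [aeval_X]
      exact hψX i
    have h2 : ψ.range = (ψ.comp (Ideal.Quotient.mkₐ ℂ _)).range := by
      ext z
      constructor
      · rintro ⟨t, rfl⟩
        obtain ⟨t, rfl⟩ := Ideal.Quotient.mkₐ_surjective ℂ _ t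
        exact ⟨t, rfl⟩
      · rintro ⟨t, rfl⟩
        exact ⟨_, rfl⟩
    rw [h2, h1, ← Algebra.adjoin_range_eq_range_aeval]
    congr 1
    ext z
    simp only [Matrix.range_cons, Matrix.range_empty, Set.mem_union, Set.mem_singleton_iff,
      Set.mem_insert_iff, Set.mem_empty_iff_false]
    tauto
  have := IsFractionRing.liftAlgHom_fieldRange_eq_of_range_eq
    (K := FractionRing (HSurf (pX₁ a b c))) hψ hr
  rw [← this]
  rfl

section
variable {K : Type*} [Field K] (a b c x P1 P2 P3 Q1 Q2 Q3 S D μ u0 u1 u2 y : K)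

theorem fld_all
    (hP : P1 + P2 + P3 = 0) (hQ : Q1 + Q2 + Q3 = 0)
    (hPP : P1 * P2 * P3 = -(x * (x - 1) * (x - a) * (x - b) * (x - c)))
    (hQQ : Q1 * Q2 * Q3 = -1)
    (hx0 : x ≠ 0) (hx1 : 1 - x ≠ 0) (ha : a - x ≠ 0) (hb : b - x ≠ 0) (hc : c - x ≠ 0)
    (hP3 : P3 ≠ 0) (hS0 : P1 + x * P2 ≠ 0) (hD0 : D ≠ 0)
    (hD : D = Q1 / (a - x) + Q2 / (b - x) + Q3 / (c - x))
    (hS : S = (P1 + x * P2) / (x * P3)) (hμ : μ = S / D)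
    (h0 : u0 = μ * Q1 / (a - x)) (h1 : u1 = μ * Q2 / (b - x)) (h2 : u2 = μ * Q3 / (c - x))
    (hy : y = -μ * (1 - x) / P3) :
    y ^ 3 = u0 * u1 * u2 * (1 + u0 + u1 + u2) * (1 + a * u0 + b * u1 + c * u2) ∧
    x = (a * u0 + b * u1 + c * u2) / (u0 + u1 + u2) ∧
    P1 = x * (1 + (u0 + u1 + u2)) / (1 - x) * P3 ∧
    Q1 = - (u0 / y) * (a - x) * (1 - x) / P3 ∧
    Q2 = - (u1 / y) * (b - x) * (1 - x) / P3 ∧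
    Q3 = - (u2 / y) * (c - x) * (1 - x) / P3 := by
  have hSne : S ≠ 0 := by rw [hS]; exact div_ne_zero hS0 (mul_ne_zero hx0 hP3)
  have hμ0 : μ ≠ 0 := by rw [hμ]; exact div_ne_zero hSne hD0
  have hsum : u0 + u1 + u2 = S := by
    have : u0 + u1 + u2 = μ * D := by rw [h0, h1, h2, hD]; ring
    rw [this, hμ]; field_simp
  have e0 : (a - x) * u0 = μ * Q1 := by rw [h0]; field_simp
  have e1 : (b - x) * u1 = μ * Q2 := by rw [h1]; field_simp
  have e2 : (c - x) * u2 = μ * Q3 := by rw [h2]; field_simp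
  have hT : a * u0 + b * u1 + c * u2 = x * S := by
    linear_combination e0 + e1 + e2 + x * hsum + μ * hQ
  have hS1 : x * P3 * S = P1 + x * P2 := by rw [hS]; field_simp
  have f1 : x * P3 * (1 + S) = (1 - x) * P1 := by
    linear_combination hS1 + x * hP
  have f2 : P3 * (1 + x * S) = - (1 - x) * P2 := by
    linear_combination hS1 + hP
  have hyP : P3 * y = - μ * (1 - x) := by rw [hy]; field_simp
  have hy0 : y ≠ 0 := by
    intro h
    rw [h, mul_zero] at hyP
    exact mul_ne_zero (neg_ne_zero.2 hμ0) hx1 hyP.symm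
  refine ⟨?_, ?_, ?_, ?_, ?_, ?_⟩
  · have g1 : 1 + u0 + u1 + u2 = 1 + S := by linear_combination hsum
    have g2 : 1 + a * u0 + b * u1 + c * u2 = 1 + x * S := by linear_combination hT
    rw [g1, g2]
    have hne : (a - x) * (b - x) * (c - x) * (x * P3 ^ 3 * (1 - x)) ≠ 0 :=
      mul_ne_zero (mul_ne_zero (mul_ne_zero ha hb) hc)
        (mul_ne_zero (mul_ne_zero hx0 (pow_ne_zero 3 hP3)) hx1)
    apply mul_left_cancel₀ hne
    have l : (P3 * y) ^ 3 = (- μ * (1 - x)) ^ 3 := by rw [hyP]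
    have r : ((a - x) * u0) * ((b - x) * u1) * ((c - x) * u2) * (x * P3 * (1 + S)) * (P3 * (1 + x * S))
      = (μ * Q1) * (μ * Q2) * (μ * Q3) * ((1 - x) * P1) * (- (1 - x) * P2) := by
      rw [e0, e1, e2, f1, f2]
    linear_combination (a - x) * (b - x) * (c - x) * x * (1 - x) * l - P3 * (1 - x) * r
      + μ ^ 3 * (1 - x) ^ 3 * P1 * P2 * P3 * hQQ - μ ^ 3 * (1 - x) ^ 3 * hPP
  · rw [hsum, hT]; field_simp
  · rw [hsum]; field_simp; linear_combination -f1
  · field_simp; linear_combination Q1 * hyP + (1 - x) * e0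
  · field_simp; linear_combination Q2 * hyP + (1 - x) * e1
  · field_simp; linear_combination Q3 * hyP + (1 - x) * e2
end

lemma omega_facts : ω ^ 2 + ω + 1 = 0 ∧ ω ^ 3 = 1 ∧ ω ≠ 1 ∧ ω ≠ 0 := by
  have h := Complex.isPrimitiveRoot_exp 3 (by norm_num)
  have e : Complex.exp (2 * Real.pi * Complex.I / (3 : ℕ)) = ω := by
    simp [ω]
  rw [e] at h
  have h3 : ω ^ 3 = 1 := h.pow_eq_one
  have h1 : ω ≠ 1 := h.ne_one (by norm_num)
  refine ⟨?_, h3, h1, h.ne_zero (by norm_num)⟩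
  have : (ω - 1) * (ω ^ 2 + ω + 1) = 0 := by linear_combination h3
  rcases mul_eq_zero.1 this with h | h
  · exact absurd (sub_eq_zero.1 h) h1
  · exact h

lemma mem_of_fixed {K : Type} [Field K] [Algebra ℂ K] (E : IntermediateField ℂ K)
    (σ : K ≃ₐ[ℂ] K) (hE : ∀ e ∈ E, σ e = e) (t : K) (ht : σ t = algebraMap ℂ K ω * t)
    (ht3 : t ^ 3 ∈ E) (hgen : IntermediateField.adjoin E {t} = ⊤)
    (v : K) (hv : σ v = v) : v ∈ E := by
  obtain ⟨hw2, hw3, -, -⟩ := omega_facts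
  set w : K := algebraMap ℂ K ω with hw
  have hW2 : w ^ 2 + w + 1 = 0 := by
    rw [hw, ← map_pow, ← map_add, ← map_one (algebraMap ℂ K), ← map_add, hw2, map_zero]
  have hW3 : w ^ 3 = 1 := by rw [hw, ← map_pow, hw3, map_one]
  have hσw : σ w = w := σ.commutes _
  have halg : IsAlgebraic E t := by
    apply IsAlgebraic.of_pow (n := 3) (by norm_num)
    exact isAlgebraic_algebraMap (⟨t ^ 3, ht3⟩ : E)
  have hmem : v ∈ (IntermediateField.adjoin E {t}).toSubalgebra := by
    rw [hgen]; trivial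
  rw [IntermediateField.adjoin_simple_toSubalgebra_of_isAlgebraic halg] at hmem
  have hT : ∀ x ∈ Algebra.adjoin E {t}, x + σ x + σ (σ x) ∈ E := by
    intro x hx
    rw [Algebra.adjoin_singleton_eq_range_aeval] at hx
    obtain ⟨p, rfl⟩ := hx
    change (Polynomial.aeval t) p + σ ((Polynomial.aeval t) p) + σ (σ ((Polynomial.aeval t) p)) ∈ E
    induction p using Polynomial.induction_on' with
    | add p q hp hq =>
      have := E.add_mem hp hq
      simp only [map_add]
      convert this using 1
      ring
    | monomial n e =>
      rw [Polynomial.aeval_monomial]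
      have h1 : σ (algebraMap E K e) = algebraMap E K e := hE _ e.2
      simp only [map_mul, map_pow, h1, ht, hσw]
      have h2 : algebraMap E K e * t ^ n + algebraMap E K e * (w * t) ^ n
          + algebraMap E K e * (w * (w * t)) ^ n
          = algebraMap E K e * t ^ n * (1 + w ^ n + (w ^ n) ^ 2) := by
        simp only [mul_pow]; ring
      rw [h2]
      obtain ⟨m, hm⟩ : ∃ m, n = 3 * m ∨ n = 3 * m + 1 ∨ n = 3 * m + 2 := ⟨n / 3, by omega⟩
      rcases hm with rfl | rfl | rfl
      · rw [pow_mul, pow_mul, hW3]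
        refine E.mul_mem (E.mul_mem e.2 (pow_mem ht3 m)) ?_
        simp only [one_pow]
        exact E.add_mem (E.add_mem E.one_mem E.one_mem) E.one_mem
      · have : 1 + w ^ (3 * m + 1) + (w ^ (3 * m + 1)) ^ 2 = 0 := by
          rw [pow_add, pow_mul, hW3]; simp only [one_pow]; linear_combination hW2
        rw [this, mul_zero]; exact E.zero_mem
      · have : 1 + w ^ (3 * m + 2) + (w ^ (3 * m + 2)) ^ 2 = 0 := by
          rw [pow_add, pow_mul, hW3]; simp only [one_pow]; linear_combination hW2 + w * hW3
        rw [this, mul_zero]; exact E.zero_mem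
  have h3 := hT v hmem
  rw [hv, hv] at h3
  have hch : (3 : K) ≠ 0 := by
    have : CharZero K := charZero_of_injective_algebraMap (algebraMap ℂ K).injective
    norm_num
  have h3' : (3 : K) ∈ E := by
    have := E.algebraMap_mem (3 : ℂ)
    rwa [map_ofNat] at this
  have : v = (v + v + v) / 3 := by field_simp; ring
  rw [this]
  exact E.div_mem h3 h3'

lemma gen_mem {K : Type} [Field K] [Algebra ℂ K] (G : IntermediateField ℂ K) (a b c : ℂ)
    (x P1 P2 P3 Q1 Q2 Q3 u0 u1 u2 y : K)
    (hP : P1 + P2 + P3 = 0)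
    (hPP : P1 * P2 * P3 = -(x * (x - 1) * (x - algebraMap ℂ K a) * (x - algebraMap ℂ K b)
      * (x - algebraMap ℂ K c)))
    (hP0 : P1 * P2 * P3 ≠ 0)
    (hx : x = (algebraMap ℂ K a * u0 + algebraMap ℂ K b * u1 + algebraMap ℂ K c * u2)
      / (u0 + u1 + u2))
    (hP1 : P1 = x * (1 + (u0 + u1 + u2)) / (1 - x) * P3)
    (hQ1 : Q1 = -(u0 / y) * (algebraMap ℂ K a - x) * (1 - x) / P3)
    (hQ2 : Q2 = -(u1 / y) * (algebraMap ℂ K b - x) * (1 - x) / P3)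
    (hQ3 : Q3 = -(u2 / y) * (algebraMap ℂ K c - x) * (1 - x) / P3)
    (h0 : u0 ∈ G) (h1 : u1 ∈ G) (h2 : u2 ∈ G) :
    P3 ^ 3 ∈ G ∧ (y ∈ G → P3 ∈ G → x ∈ G ∧ P1 ∈ G ∧ Q1 ∈ G ∧ Q2 ∈ G ∧ Q3 ∈ G) := by
  have ha := G.algebraMap_mem a
  have hb := G.algebraMap_mem b
  have hc := G.algebraMap_mem c
  have hxG : x ∈ G := by
    rw [hx]
    exact G.div_mem (G.add_mem (G.add_mem (G.mul_mem ha h0) (G.mul_mem hb h1))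
      (G.mul_mem hc h2)) (G.add_mem (G.add_mem h0 h1) h2)
  have h1x : 1 - x ∈ G := G.sub_mem G.one_mem hxG
  set ρ := x * (1 + (u0 + u1 + u2)) / (1 - x) with hρ
  have hρG : ρ ∈ G := G.div_mem (G.mul_mem hxG (G.add_mem G.one_mem
    (G.add_mem (G.add_mem h0 h1) h2))) h1x
  constructor
  · have hP2 : P2 = -(1 + ρ) * P3 := by linear_combination hP - hP1
    have e : P1 * P2 * P3 = -(ρ * (1 + ρ)) * P3 ^ 3 := by rw [hP2, hP1]; ring
    have hr : ρ * (1 + ρ) ≠ 0 := by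
      intro h; rw [h] at e; apply hP0; rw [e]; ring
    have : P3 ^ 3 = (x * (x - 1) * (x - algebraMap ℂ K a) * (x - algebraMap ℂ K b)
      * (x - algebraMap ℂ K c)) / (ρ * (1 + ρ)) := by
      rw [eq_div_iff hr]; linear_combination e - hPP
    rw [this]
    refine G.div_mem (G.mul_mem (G.mul_mem (G.mul_mem (G.mul_mem hxG (G.sub_mem hxG G.one_mem))
      (G.sub_mem hxG ha)) (G.sub_mem hxG hb)) (G.sub_mem hxG hc))
      (G.mul_mem hρG (G.add_mem G.one_mem hρG))
  · intro hy h3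
    refine ⟨hxG, ?_, ?_, ?_, ?_⟩
    · rw [hP1]; exact G.mul_mem hρG h3
    · rw [hQ1]; exact G.div_mem (G.mul_mem (G.mul_mem (G.neg_mem (G.div_mem h0 hy))
        (G.sub_mem ha hxG)) h1x) h3
    · rw [hQ2]; exact G.div_mem (G.mul_mem (G.mul_mem (G.neg_mem (G.div_mem h1 hy))
        (G.sub_mem hb hxG)) h1x) h3
    · rw [hQ3]; exact G.div_mem (G.mul_mem (G.mul_mem (G.neg_mem (G.div_mem h2 hy))
        (G.sub_mem hc hxG)) h1x) h3

lemma algIndep_of_gen {K : Type} [Field K] [Algebra ℂ K] (u : Fin 3 → K)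
    (v : Fin 3 → K) (hv : AlgebraicIndependent ℂ v)
    (h : ∀ G : IntermediateField ℂ K, (∀ i, u i ∈ G) →
      (∀ t : K, t ^ 3 ∈ G → t ∈ G) → G = ⊤) : AlgebraicIndependent ℂ u := by
  have halg : Algebra.IsAlgebraic (IntermediateField.adjoin ℂ (Set.range u)) K := by
    set F := IntermediateField.adjoin ℂ (Set.range u)
    have := h ((algebraicClosure F K).restrictScalars ℂ) ?_ ?_
    · constructor
      intro t
      have ht : t ∈ (algebraicClosure F K).restrictScalars ℂ := by rw [this]; trivial
      rw [IntermediateField.mem_restrictScalars, mem_algebraicClosure_iff] at ht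
      exact ht
    · intro i
      rw [IntermediateField.mem_restrictScalars]
      exact (algebraicClosure F K).algebraMap_mem
        (⟨u i, IntermediateField.subset_adjoin _ _ ⟨i, rfl⟩⟩ : F)
    · intro t ht
      rw [IntermediateField.mem_restrictScalars, mem_algebraicClosure_iff] at ht ⊢
      exact IsAlgebraic.of_pow (by norm_num) ht
  have halg2 : Algebra.IsAlgebraic (Algebra.adjoin ℂ (Set.range u)) K :=
    IntermediateField.isAlgebraic_adjoin_iff_top.1 halg
  have h3 : (Cardinal.mk (Fin 3)) ≤ Algebra.trdeg ℂ K := by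
    simpa using hv.lift_cardinalMk_le_trdeg
  exact (Algebra.IsAlgebraic.isTranscendenceBasis_of_le_trdeg_of_finite ℂ u (by simpa using h3)).1

/-- Nonvanishing principle: a polynomial vanishing at `v` vanishes at all complex points. -/
def PtNV {K : Type} [Field K] [Algebra ℂ K] (a b c : ℂ) (v : Fin 5 → K) : Prop :=
  ∀ (p : MvPolynomial (Fin 5) ℂ) (w : Fin 5 → ℂ), eval w (pW₀5 a b c) = 0 →
    eval w pF₀5 = 0 → aeval v p = 0 → eval w p = 0

lemma nv_x {K : Type} [Field K] [Algebra ℂ K] (a b c : ℂ) (v : Fin 5 → K)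
    (hne : PtNV a b c v) (r s : ℂ) (hrs : s ≠ r)
    (hs : s * (s - 1) * (s - a) * (s - b) * (s - c) = 0) : algebraMap ℂ K r - v 0 ≠ 0 := by
  intro h
  have := hne (C r - X 0) ![s, 0, 0, -1, 0] (by simp [pW₀5, q5, hs]) (by simp [pF₀5]; norm_num)
    (by simpa using h)
  simp at this
  exact hrs (sub_eq_zero.1 this).symm

lemma nv_D {K : Type} [Field K] [Algebra ℂ K] (a b c : ℂ) (v : Fin 5 → K)
    (hne : PtNV a b c v) (hab : a ≠ b) (hbc : b ≠ c) :
    (v 3 + v 4) * (algebraMap ℂ K b - v 0) * (algebraMap ℂ K c - v 0)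
    + (algebraMap ℂ K ω * v 3 + algebraMap ℂ K ω ^ 2 * v 4) *
      (algebraMap ℂ K a - v 0) * (algebraMap ℂ K c - v 0)
    + (algebraMap ℂ K ω ^ 2 * v 3 + algebraMap ℂ K ω * v 4) *
      (algebraMap ℂ K a - v 0) * (algebraMap ℂ K b - v 0) ≠ 0 := by
  intro h
  have := hne ((X 3 + X 4) * (C b - X 0) * (C c - X 0)
    + (C ω * X 3 + C ω ^ 2 * X 4) * (C a - X 0) * (C c - X 0)
    + (C ω ^ 2 * X 3 + C ω * X 4) * (C a - X 0) * (C b - X 0)) ![b, 0, 0, -1, 0]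
    (by simp [pW₀5, q5]) (by simp [pF₀5]; norm_num)
    (by simpa using h)
  simp [omega_facts.2.2.2, sub_eq_zero, hab, hbc.symm] at this

lemma nv_S {K : Type} [Field K] [Algebra ℂ K] (a b c : ℂ) (v : Fin 5 → K)
    (hne : PtNV a b c v) :
    (v 1 + v 2) + v 0 * (algebraMap ℂ K ω * v 1 + algebraMap ℂ K ω ^ 2 * v 2) ≠ 0 := by
  intro h
  obtain ⟨x0, hx0⟩ := Infinite.exists_notMem_finset ({0, 1, a, b, c, -ω ^ 2} : Finset ℂ)
  simp only [Finset.mem_insert, Finset.mem_singleton, not_or] at hx0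
  obtain ⟨h0, h1, h2, h3, h4, h5⟩ := hx0
  obtain ⟨η, hη⟩ := IsAlgClosed.exists_pow_nat_eq
    (-(x0 * (x0 - 1) * (x0 - a) * (x0 - b) * (x0 - c))) (n := 3) (by norm_num)
  have := hne ((X 1 + X 2) + X 0 * (C ω * X 1 + C ω ^ 2 * X 2)) ![x0, η, 0, -1, 0]
    (by simp [pW₀5, q5, hη]) (by simp [pF₀5]; norm_num)
    (by simpa using h)
  simp at this
  have hη0 : η ≠ 0 := by
    rintro rfl
    have : x0 * (x0 - 1) * (x0 - a) * (x0 - b) * (x0 - c) = 0 := by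
      rw [← neg_eq_zero, ← hη]; norm_num
    simp [h0, sub_eq_zero, h1, h2, h3, h4] at this
  have h6 : 1 + x0 * ω = 0 := by
    have : η * (1 + x0 * ω) = 0 := by linear_combination this
    simpa [hη0] using this
  apply h5
  have h7 := omega_facts.2.1
  linear_combination ω ^ 2 * h6 - x0 * h7

lemma nv_indep {K : Type} [Field K] [Algebra ℂ K] (a b c : ℂ) (v : Fin 5 → K)
    (hne : PtNV a b c v) : AlgebraicIndependent ℂ (![v 0, v 1, v 3] : Fin 3 → K) := by
  rw [algebraicIndependent_iff]
  intro p hp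
  apply MvPolynomial.funext
  intro w
  obtain ⟨y2, hy2⟩ := IsAlgClosed.exists_pow_nat_eq
    (-((w 1) ^ 3 + w 0 * (w 0 - 1) * (w 0 - a) * (w 0 - b) * (w 0 - c))) (n := 3) (by norm_num)
  obtain ⟨z2, hz2⟩ := IsAlgClosed.exists_pow_nat_eq (-(1 + (w 2) ^ 3)) (n := 3) (by norm_num)
  have := hne (rename ![0, 1, 3] p) ![w 0, w 1, y2, w 2, z2]
    (by simp [pW₀5, q5, hy2]) (by simp [pF₀5, hz2])
    (by
      rw [aeval_rename]
      convert hp using 2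
      congr 1
      ext i
      fin_cases i <;> rfl)
  rw [eval_rename] at this
  have e : (![w 0, w 1, y2, w 2, z2] ∘ ![0, 1, 3] : Fin 3 → ℂ) = w := by
    funext i
    fin_cases i <;> rfl
  rw [e] at this
  rw [this, map_zero]

theorem core {K : Type} [Field K] [Algebra ℂ K] (a b c : ℂ)
    (ha0 : a ≠ 0) (hb0 : b ≠ 0) (hc0 : c ≠ 0)
    (hab : a ≠ b) (hbc : b ≠ c) (v : Fin 5 → K)
    (hW : aeval v (pW₀5 a b c) = 0) (hF : aeval v pF₀5 = 0) (hne : PtNV a b c v)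
    (hgen : ∀ G : IntermediateField ℂ K, (∀ i, v i ∈ G) → G = ⊤)
    (σ : K ≃ₐ[ℂ] K) (hs0 : σ (v 0) = v 0)
    (hs1 : σ (v 1) = ω • v 1) (hs2 : σ (v 2) = ω • v 2)
    (hs3 : σ (v 3) = (ω ^ 2) • v 3) (hs4 : σ (v 4) = (ω ^ 2) • v 4) :
    Nonempty ((AlgHom.equalizer σ.toAlgHom (AlgHom.id ℂ K)) ≃ₐ[ℂ]
      FractionRing (HSurf (pX₁ a b c))) := by
  obtain ⟨hw2, hw3, hw1, hw0⟩ := omega_facts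
  have hx0 := nv_x a b c v hne 0 1 (by norm_num) (by ring)
  have hx1 := nv_x a b c v hne 1 0 (by norm_num) (by ring)
  have hxa := nv_x a b c v hne a 0 ha0.symm (by ring)
  have hxb := nv_x a b c v hne b 0 hb0.symm (by ring)
  have hxc := nv_x a b c v hne c 0 hc0.symm (by ring)
  have hD0 := nv_D a b c v hne hab hbc
  have hS0 := nv_S a b c v hne
  have hind := nv_indep a b c v hne
  have hσc : ∀ r : ℂ, σ (algebraMap ℂ K r) = algebraMap ℂ K r := σ.commutes
  rw [Algebra.smul_def] at hs1 hs2 hs3 hs4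
  rw [map_pow] at hs3 hs4
  have hwG : ∀ G : IntermediateField ℂ K, algebraMap ℂ K ω ∈ G := fun G => G.algebraMap_mem ω
  have hσw := hσc ω
  have hW2 : (algebraMap ℂ K ω) ^ 2 + algebraMap ℂ K ω + 1 = 0 := by
    rw [← map_pow, ← map_add, ← map_one (algebraMap ℂ K), ← map_add, hw2, map_zero]
  have hW3 : (algebraMap ℂ K ω) ^ 3 = 1 := by rw [← map_pow, hw3, map_one]
  have hW21 : (algebraMap ℂ K ω) ^ 2 - algebraMap ℂ K ω ≠ 0 := by
    rw [← map_pow, ← map_sub]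
    rw [(map_ne_zero_iff _ (algebraMap ℂ K).injective)]
    intro h
    apply hw1
    have : ω * (ω - 1) = 0 := by linear_combination h
    simpa [hw0, sub_eq_zero] using this
  generalize hwdef : algebraMap ℂ K ω = w at *
  simp only [pW₀5, q5, pF₀5, map_add, map_mul, map_sub, map_pow, aeval_X, aeval_C, map_one]
    at hW hF
  rw [map_zero, zero_sub, neg_ne_zero] at hx0
  rw [map_one] at hx1
  have hv : ∀ i, v i = v i := fun _ => rfl
  obtain ⟨P1, hP1⟩ : ∃ P1, P1 = v 1 + v 2 := ⟨_, rfl⟩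
  obtain ⟨P2, hP2⟩ : ∃ P2, P2 = w * v 1 + w ^ 2 * v 2 := ⟨_, rfl⟩
  obtain ⟨P3, hP3⟩ : ∃ P3, P3 = w ^ 2 * v 1 + w * v 2 := ⟨_, rfl⟩
  obtain ⟨Q1, hQ1⟩ : ∃ Q1, Q1 = v 3 + v 4 := ⟨_, rfl⟩
  obtain ⟨Q2, hQ2⟩ : ∃ Q2, Q2 = w * v 3 + w ^ 2 * v 4 := ⟨_, rfl⟩
  obtain ⟨Q3, hQ3⟩ : ∃ Q3, Q3 = w ^ 2 * v 3 + w * v 4 := ⟨_, rfl⟩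
  rw [← hP1, ← hP2] at hS0
  rw [← hQ1, ← hQ2, ← hQ3] at hD0
  have hP : P1 + P2 + P3 = 0 := by
    rw [hP1, hP2, hP3]; linear_combination (v 1 + v 2) * hW2
  have hQ : Q1 + Q2 + Q3 = 0 := by
    rw [hQ1, hQ2, hQ3]; linear_combination (v 3 + v 4) * hW2
  have hprod : ∀ s t : K, (s + t) * (w * s + w ^ 2 * t) * (w ^ 2 * s + w * t) = s ^ 3 + t ^ 3 := by
    intro s t
    linear_combination (s ^ 3 + t ^ 3 + s * t * (s + t) * w + s * t * (s + t)) * hW3 + s * t * (s + t) * hW2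
  have hPP : P1 * P2 * P3 = -(v 0 * (v 0 - 1) * (v 0 - algebraMap ℂ K a) *
      (v 0 - algebraMap ℂ K b) * (v 0 - algebraMap ℂ K c)) := by
    rw [hP1, hP2, hP3, hprod]; linear_combination hW
  have hQQ : Q1 * Q2 * Q3 = -1 := by
    rw [hQ1, hQ2, hQ3, hprod]; linear_combination hF
  have hPP0 : P1 * P2 * P3 ≠ 0 := by
    rw [hPP]
    have h1' : v 0 - 1 ≠ 0 := fun h => hx1 (by linear_combination -h)
    have h2' : v 0 - algebraMap ℂ K a ≠ 0 := fun h => hxa (by linear_combination -h)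
    have h3' : v 0 - algebraMap ℂ K b ≠ 0 := fun h => hxb (by linear_combination -h)
    have h4' : v 0 - algebraMap ℂ K c ≠ 0 := fun h => hxc (by linear_combination -h)
    exact neg_ne_zero.2 (mul_ne_zero (mul_ne_zero (mul_ne_zero (mul_ne_zero hx0 h1') h2') h3') h4')
  have hP30 : P3 ≠ 0 := right_ne_zero_of_mul hPP0
  obtain ⟨D, hD⟩ : ∃ D, D = Q1 / (algebraMap ℂ K a - v 0) + Q2 / (algebraMap ℂ K b - v 0)
    + Q3 / (algebraMap ℂ K c - v 0) := ⟨_, rfl⟩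
  have hDn : D ≠ 0 := by
    intro h
    apply hD0
    rw [h] at hD
    field_simp at hD
    linear_combination -hD
  obtain ⟨S, hS⟩ : ∃ S, S = (P1 + v 0 * P2) / (v 0 * P3) := ⟨_, rfl⟩
  obtain ⟨μ, hμ⟩ : ∃ μ, μ = S / D := ⟨_, rfl⟩
  obtain ⟨u0, hu0⟩ : ∃ u0, u0 = μ * Q1 / (algebraMap ℂ K a - v 0) := ⟨_, rfl⟩
  obtain ⟨u1, hu1⟩ : ∃ u1, u1 = μ * Q2 / (algebraMap ℂ K b - v 0) := ⟨_, rfl⟩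
  obtain ⟨u2, hu2⟩ : ∃ u2, u2 = μ * Q3 / (algebraMap ℂ K c - v 0) := ⟨_, rfl⟩
  obtain ⟨y, hy⟩ : ∃ y, y = -μ * (1 - v 0) / P3 := ⟨_, rfl⟩
  obtain ⟨f1, f2, f3, f4, f5, f6⟩ := fld_all (algebraMap ℂ K a) (algebraMap ℂ K b)
    (algebraMap ℂ K c) (v 0) P1 P2 P3 Q1 Q2 Q3 S D μ u0 u1 u2 y hP hQ hPP hQQ hx0 hx1 hxa hxb hxc
    hP30 hS0 hDn hD hS hμ hu0 hu1 hu2 hy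
  have hsolve : ∀ s t : K, s = ((w ^ 2 * s + w * t) - w * (s + t)) / (w ^ 2 - w) := by
    intro s t
    rw [eq_div_iff hW21]; ring
  have G0 : ∀ G : IntermediateField ℂ K, u0 ∈ G → u1 ∈ G → u2 ∈ G →
      P3 ^ 3 ∈ G ∧ (y ∈ G → P3 ∈ G → G = ⊤) := by
    intro G h0 h1 h2
    obtain ⟨g1, g2⟩ := gen_mem G a b c (v 0) P1 P2 P3 Q1 Q2 Q3 u0 u1 u2 y hP hPP hPP0
      f2 f3 f4 f5 f6 h0 h1 h2
    refine ⟨g1, fun hyG h3 => ?_⟩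
    obtain ⟨k0, k1, k2, k3, k4⟩ := g2 hyG h3
    have hwG' := hwG G
    have hsub := G.sub_mem (pow_mem hwG' 2) hwG'
    have m1 : v 1 ∈ G := by
      rw [hsolve (v 1) (v 2), ← hP1, ← hP3]
      exact G.div_mem (G.sub_mem h3 (G.mul_mem hwG' k1)) hsub
    have m2 : v 2 ∈ G := by
      have : v 2 = P1 - v 1 := by rw [hP1]; ring
      rw [this]; exact G.sub_mem k1 m1
    have m3 : v 3 ∈ G := by
      rw [hsolve (v 3) (v 4), ← hQ1, ← hQ3]
      exact G.div_mem (G.sub_mem k4 (G.mul_mem hwG' k2)) hsub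
    have m4 : v 4 ∈ G := by
      have : v 4 = Q1 - v 3 := by rw [hQ1]; ring
      rw [this]; exact G.sub_mem k2 m3
    apply hgen
    intro i
    fin_cases i
    exacts [k0, m1, m2, m3, m4]
  have hu : AlgebraicIndependent ℂ (![u0, u1, u2] : Fin 3 → K) := by
    apply algIndep_of_gen _ _ hind
    intro G hG hcube
    have h0 : u0 ∈ G := hG 0
    have h1 : u1 ∈ G := hG 1
    have h2 : u2 ∈ G := hG 2
    obtain ⟨g1, g2⟩ := G0 G h0 h1 h2
    refine g2 (hcube _ ?_) (hcube _ g1)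
    rw [f1]
    have ha := G.algebraMap_mem a
    have hb := G.algebraMap_mem b
    have hc := G.algebraMap_mem c
    exact G.mul_mem (G.mul_mem (G.mul_mem (G.mul_mem h0 h1) h2)
      (G.add_mem (G.add_mem (G.add_mem G.one_mem h0) h1) h2))
      (G.add_mem (G.add_mem (G.add_mem G.one_mem (G.mul_mem ha h0)) (G.mul_mem hb h1))
        (G.mul_mem hc h2))
  obtain ⟨φ, hφ, hr⟩ := exists_phi a b c ![u0, u1, u2] y hu f1
  simp only [Matrix.cons_val] at hr
  have hw0' : w ≠ 0 := by rintro rfl; norm_num at hW3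
  have sP1 : σ P1 = w * P1 := by rw [hP1, map_add, hs1, hs2]; ring
  have sP2 : σ P2 = w * P2 := by
    rw [hP2, map_add, map_mul, map_mul, map_pow, hσw, hs1, hs2]; ring
  have sP3 : σ P3 = w * P3 := by
    rw [hP3, map_add, map_mul, map_mul, map_pow, hσw, hs1, hs2]; ring
  have sQ1 : σ Q1 = w ^ 2 * Q1 := by rw [hQ1, map_add, hs3, hs4]; ring
  have sQ2 : σ Q2 = w ^ 2 * Q2 := by
    rw [hQ2, map_add, map_mul, map_mul, map_pow, hσw, hs3, hs4]; ring
  have sQ3 : σ Q3 = w ^ 2 * Q3 := by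
    rw [hQ3, map_add, map_mul, map_mul, map_pow, hσw, hs3, hs4]; ring
  have sS : σ S = S := by
    rw [hS, map_div₀, map_add, map_mul, map_mul, sP1, sP2, sP3, hs0]
    have e1 : w * P1 + v 0 * (w * P2) = w * (P1 + v 0 * P2) := by ring
    have e2 : v 0 * (w * P3) = w * (v 0 * P3) := by ring
    rw [e1, e2, mul_div_mul_left _ _ hw0']
  have sD : σ D = w ^ 2 * D := by
    rw [hD]
    simp only [map_add, map_div₀, map_sub, sQ1, sQ2, sQ3, hσc, hs0]
    ring
  have sμ : σ μ = w * μ := by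
    rw [hμ, map_div₀, sS, sD]
    have : w * (S / D) = (w ^ 3 * S) / (w ^ 2 * D) := by field_simp
    rw [this, hW3, one_mul]
  have su : ∀ Q e : K, σ Q = w ^ 2 * Q → σ e = e → σ (μ * Q / e) = μ * Q / e := by
    intro Q e hQ he
    rw [map_div₀, map_mul, sμ, hQ, he]
    have : w * μ * (w ^ 2 * Q) = w ^ 3 * (μ * Q) := by ring
    rw [this, hW3, one_mul]
  have su0 : σ u0 = u0 := by
    rw [hu0]; exact su _ _ sQ1 (by rw [map_sub, hσc, hs0])
  have su1 : σ u1 = u1 := by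
    rw [hu1]; exact su _ _ sQ2 (by rw [map_sub, hσc, hs0])
  have su2 : σ u2 = u2 := by
    rw [hu2]; exact su _ _ sQ3 (by rw [map_sub, hσc, hs0])
  have sy : σ y = y := by
    rw [hy, map_div₀, map_mul, map_neg, map_sub, map_one, hs0, sμ, sP3]
    have : -(w * μ) * (1 - v 0) = w * (-μ * (1 - v 0)) := by ring
    rw [this, mul_div_mul_left _ _ hw0']
  set E := IntermediateField.adjoin ℂ ({u0, u1, u2, y} : Set K) with hE
  have m0 : u0 ∈ E := IntermediateField.subset_adjoin _ _ (by simp)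
  have m1 : u1 ∈ E := IntermediateField.subset_adjoin _ _ (by simp)
  have m2 : u2 ∈ E := IntermediateField.subset_adjoin _ _ (by simp)
  have m3 : y ∈ E := IntermediateField.subset_adjoin _ _ (by simp)
  have hfix : ∀ e ∈ E, σ e = e := by
    intro e he
    rw [hE] at he
    induction he using IntermediateField.adjoin_induction with
    | mem x hx =>
      simp only [Set.mem_insert_iff, Set.mem_singleton_iff] at hx
      rcases hx with rfl | rfl | rfl | rfl
      exacts [su0, su1, su2, sy]
    | algebraMap x => exact hσc x
    | add x y _ _ hx hy => rw [map_add, hx, hy]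
    | inv x _ hx => rw [map_inv₀, hx]
    | mul x y _ _ hx hy => rw [map_mul, hx, hy]
  have hgenE : IntermediateField.adjoin E {P3} = ⊤ := by
    have hle : ∀ e ∈ E, e ∈ (IntermediateField.adjoin E {P3}).restrictScalars ℂ := by
      intro e he
      rw [IntermediateField.mem_restrictScalars]
      exact (IntermediateField.adjoin E {P3}).algebraMap_mem (⟨e, he⟩ : E)
    have := (G0 ((IntermediateField.adjoin E {P3}).restrictScalars ℂ) (hle _ m0) (hle _ m1)
      (hle _ m2)).2 (hle _ m3) (by
        rw [IntermediateField.mem_restrictScalars]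
        exact IntermediateField.mem_adjoin_simple_self _ _)
    rw [eq_top_iff]
    intro z _
    have hz : z ∈ (IntermediateField.adjoin E {P3}).restrictScalars ℂ := by rw [this]; trivial
    exact hz
  have heq : AlgHom.equalizer σ.toAlgHom (AlgHom.id ℂ K) = φ.range := by
    rw [hr]
    ext z
    rw [AlgHom.mem_equalizer, IntermediateField.mem_toSubalgebra]
    constructor
    · intro h
      exact mem_of_fixed E σ hfix P3 (by rw [hwdef]; exact sP3) (G0 E m0 m1 m2).1 hgenE z h
    · intro h
      exact hfix z h
  exact ⟨(Subalgebra.equivOfEq _ _ heq).trans (AlgEquiv.ofInjective φ hφ).symm⟩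

/-- Weights of the diagonal action. -/
def wt (k : Fin 5) : ℂ := ![1, ω, ω, ω ^ 2, ω ^ 2] k

lemma wt_cube (k : Fin 5) : wt k ^ 3 = 1 := by
  have h := omega_facts.2.1
  fin_cases k
  · change (1 : ℂ) ^ 3 = 1
    norm_num
  · exact h
  · exact h
  · change (ω ^ 2) ^ 3 = 1
    linear_combination (ω ^ 3 + 1) * h
  · change (ω ^ 2) ^ 3 = 1
    linear_combination (ω ^ 3 + 1) * h

/-- The scaling action on polynomials. -/
def scl (m : ℕ) : MvPolynomial (Fin 5) ℂ →ₐ[ℂ] MvPolynomial (Fin 5) ℂ :=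
  aeval fun i => C (wt i ^ m) * X i

lemma scl_W (m : ℕ) (a b c : ℂ) : scl m (pW₀5 a b c) = pW₀5 a b c := by
  have h1 : (wt 1 ^ m) ^ 3 = 1 := by rw [← pow_mul, mul_comm, pow_mul, wt_cube, one_pow]
  have h2 : (wt 2 ^ m) ^ 3 = 1 := by rw [← pow_mul, mul_comm, pow_mul, wt_cube, one_pow]
  have h0 : wt 0 ^ m = 1 := one_pow m
  simp only [scl, pW₀5, q5, map_add, map_mul, map_sub, map_pow (aeval _), aeval_X, mul_pow,
    algHom_C, algebraMap_eq, map_one, h0, one_mul]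
  rw [← C_pow, ← C_pow, h1, h2, C_1, one_mul, one_mul]

lemma scl_F (m : ℕ) : scl m pF₀5 = pF₀5 := by
  have h1 : (wt 3 ^ m) ^ 3 = 1 := by rw [← pow_mul, mul_comm, pow_mul, wt_cube, one_pow]
  have h2 : (wt 4 ^ m) ^ 3 = 1 := by rw [← pow_mul, mul_comm, pow_mul, wt_cube, one_pow]
  simp only [scl, pF₀5, map_add, map_pow (aeval _), aeval_X, mul_pow, map_one]
  rw [← C_pow, ← C_pow, h1, h2, C_1, one_mul, one_mul]

/-- The scaling action on the coordinate ring. -/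
def sclA (m : ℕ) (a b c : ℂ) :
    HSurf2 (pW₀5 a b c) pF₀5 →ₐ[ℂ] HSurf2 (pW₀5 a b c) pF₀5 :=
  Ideal.Quotient.liftₐ _ ((Ideal.Quotient.mkₐ ℂ _).comp (scl m)) (by
    intro p hp
    have hle : Ideal.span {pW₀5 a b c, pF₀5} ≤ RingHom.ker
        ((Ideal.Quotient.mkₐ ℂ (Ideal.span {pW₀5 a b c, pF₀5})).comp (scl m)) := by
      rw [Ideal.span_le]
      rintro x hx
      rcases hx with rfl | rfl
      · rw [SetLike.mem_coe, RingHom.mem_ker, AlgHom.comp_apply, scl_W]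
        exact Ideal.Quotient.eq_zero_iff_mem.2 (Ideal.subset_span (Set.mem_insert _ _))
      · rw [SetLike.mem_coe, RingHom.mem_ker, AlgHom.comp_apply, scl_F]
        exact Ideal.Quotient.eq_zero_iff_mem.2
          (Ideal.subset_span (Set.mem_insert_of_mem _ rfl))
    exact hle hp)

lemma sclA_X (m : ℕ) (a b c : ℂ) (i : Fin 5) :
    sclA m a b c (Ideal.Quotient.mk _ (X i)) = (wt i ^ m) • Ideal.Quotient.mk _ (X i) := by
  change Ideal.Quotient.mk _ (scl m (X i)) = _
  rw [scl, aeval_X, ← smul_eq_C_mul]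
  rfl

lemma sclA_comp (m n : ℕ) (a b c : ℂ) (h : m + n = 3) :
    (sclA m a b c).comp (sclA n a b c) = AlgHom.id ℂ _ := by
  apply Ideal.Quotient.algHom_ext
  apply MvPolynomial.algHom_ext
  intro i
  change sclA m a b c (sclA n a b c (Ideal.Quotient.mk _ (X i))) = Ideal.Quotient.mk _ (X i)
  rw [sclA_X, map_smul, sclA_X, smul_smul, ← pow_add, add_comm n m, h, wt_cube, one_smul]

/-- The automorphism of the coordinate ring. -/
def sclE (a b c : ℂ) : HSurf2 (pW₀5 a b c) pF₀5 ≃ₐ[ℂ] HSurf2 (pW₀5 a b c) pF₀5 :=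
  AlgEquiv.ofAlgHom (sclA 1 a b c) (sclA 2 a b c) (sclA_comp 1 2 a b c rfl)
    (sclA_comp 2 1 a b c rfl)

/-- Let `a, b, c ∈ ℂ ∖ {0,1}` be pairwise distinct, let
`K = Frac(ℂ[x,y₁,y₂,z₁,z₂]/(y₁³ + y₂³ + x(x−1)(x−a)(x−b)(x−c), 1 + z₁³ + z₂³))` be the
function field of `W₀ × F₀`, and let `σ` be the order-3 automorphism of `K` determined
by `σ(y₁) = ω·y₁`, `σ(y₂) = ω·y₂`, `σ(z₁) = ω²·z₁`, `σ(z₂) = ω²·z₂` (fixing `x`) — the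
diagonal `G = ℤ/3ℤ` action.  Then the fixed field `K^σ` is isomorphic as a `ℂ`-algebra
to the function field of the cyclic triple cover `X` of `ℙ³` branched along the stated
six hyperplanes: Rohde's singular Calabi–Yau threefold `X' = (W × F)/G` is birationally
equivalent to `X`. -/
theorem stmt9 (a b c : ℂ) (ha0 : a ≠ 0) (ha1 : a ≠ 1) (hb0 : b ≠ 0) (hb1 : b ≠ 1)
    (hc0 : c ≠ 0) (hc1 : c ≠ 1) (hab : a ≠ b) (hac : a ≠ c) (hbc : b ≠ c) :
    ∃ σ : FractionRing (HSurf2 (pW₀5 a b c) pF₀5) ≃ₐ[ℂ] FractionRing (HSurf2 (pW₀5 a b c) pF₀5),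
      orderOf σ = 3 ∧
      σ (cls2 (pW₀5 a b c) pF₀5 (X 1)) = (ω : ℂ) • cls2 (pW₀5 a b c) pF₀5 (X 1) ∧
      σ (cls2 (pW₀5 a b c) pF₀5 (X 2)) = (ω : ℂ) • cls2 (pW₀5 a b c) pF₀5 (X 2) ∧
      σ (cls2 (pW₀5 a b c) pF₀5 (X 3)) = (ω ^ 2 : ℂ) • cls2 (pW₀5 a b c) pF₀5 (X 3) ∧
      σ (cls2 (pW₀5 a b c) pF₀5 (X 4)) = (ω ^ 2 : ℂ) • cls2 (pW₀5 a b c) pF₀5 (X 4) ∧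
      σ (cls2 (pW₀5 a b c) pF₀5 (X 0)) = cls2 (pW₀5 a b c) pF₀5 (X 0) ∧
      Nonempty
        ((AlgHom.equalizer σ.toAlgHom (AlgHom.id ℂ (FractionRing (HSurf2 (pW₀5 a b c) pF₀5))))
          ≃ₐ[ℂ] FractionRing (HSurf (pX₁ a b c))) := by
  have hdom : IsDomain (HSurf2 (pW₀5 a b c) pF₀5) := domain_HSurf2 a b c ha0 hb0 hc0
  set A := HSurf2 (pW₀5 a b c) pF₀5 with hA
  set v : Fin 5 → FractionRing A := fun i => cls2 (pW₀5 a b c) pF₀5 (X i) with hv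
  have hcls : ∀ p, aeval v p = cls2 (pW₀5 a b c) pF₀5 p := by
    intro p
    have : (aeval v : MvPolynomial (Fin 5) ℂ →ₐ[ℂ] FractionRing A) =
        (IsScalarTower.toAlgHom ℂ A (FractionRing A)).comp (Ideal.Quotient.mkₐ ℂ _) := by
      apply MvPolynomial.algHom_ext
      intro i
      rw [aeval_X]
      rfl
    rw [this]
    rfl
  have hinj : Function.Injective (algebraMap A (FractionRing A)) :=
    IsFractionRing.injective A (FractionRing A)
  have hW : aeval v (pW₀5 a b c) = 0 := by
    rw [hcls, cls2, Ideal.Quotient.eq_zero_iff_mem.2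
      (Ideal.subset_span (Set.mem_insert _ _)), map_zero]
  have hF : aeval v pF₀5 = 0 := by
    have hm : pF₀5 ∈ Ideal.span {pW₀5 a b c, pF₀5} :=
      Ideal.subset_span (Set.mem_insert_of_mem _ rfl)
    rw [hcls, cls2, Ideal.Quotient.eq_zero_iff_mem.2 hm, map_zero]
  have hne : PtNV a b c v := by
    intro p w h1 h2 h3
    rw [hcls, cls2] at h3
    have h4 : Ideal.Quotient.mk (Ideal.span {pW₀5 a b c, pF₀5}) p = 0 :=
      hinj (by rw [h3, map_zero])
    rw [Ideal.Quotient.eq_zero_iff_mem] at h4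
    have hle : Ideal.span {pW₀5 a b c, pF₀5} ≤ RingHom.ker (eval w) := by
      rw [Ideal.span_le]
      rintro x hx
      rcases hx with rfl | rfl
      · exact h1
      · exact h2
    exact hle h4
  have hgen : ∀ G : IntermediateField ℂ (FractionRing A), (∀ i, v i ∈ G) → G = ⊤ := by
    intro G hG
    have hp : ∀ p, cls2 (pW₀5 a b c) pF₀5 p ∈ G := by
      intro p
      rw [← hcls]
      induction p using MvPolynomial.induction_on with
      | C r => rw [aeval_C]; exact G.algebraMap_mem r
      | add p q hp hq => rw [map_add]; exact G.add_mem hp hq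
      | mul_X p i hp => rw [map_mul, aeval_X]; exact G.mul_mem hp (hG i)
    rw [eq_top_iff]
    intro z _
    obtain ⟨s, t, -, rfl⟩ := IsFractionRing.div_surjective A z
    obtain ⟨s, rfl⟩ := Ideal.Quotient.mk_surjective s
    obtain ⟨t, rfl⟩ := Ideal.Quotient.mk_surjective t
    exact G.div_mem (hp s) (hp t)
  obtain ⟨σ, hσ⟩ : ∃ σ : FractionRing A ≃ₐ[ℂ] FractionRing A, ∀ i, σ (v i) = wt i • v i := by
    refine ⟨IsFractionRing.algEquivOfAlgEquiv (sclE a b c), ?_⟩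
    intro i
    have h1 : IsFractionRing.algEquivOfAlgEquiv (K := FractionRing A) (L := FractionRing A)
        (sclE a b c) (v i) = algebraMap A (FractionRing A)
          (sclE a b c (Ideal.Quotient.mk _ (X i))) :=
      IsFractionRing.algEquivOfAlgEquiv_algebraMap _ _
    have h2 : sclE a b c (Ideal.Quotient.mk _ (X i)) = wt i • Ideal.Quotient.mk _ (X i) := by
      have := sclA_X 1 a b c i
      rw [pow_one] at this
      exact this
    rw [h1, h2]
    exact map_smul (IsScalarTower.toAlgHom ℂ A (FractionRing A)) _ _
  have hs0 : σ (v 0) = v 0 := (hσ 0).trans (one_smul _ _)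
  have hs1 : σ (v 1) = ω • v 1 := hσ 1
  have hs2 : σ (v 2) = ω • v 2 := hσ 2
  have hs3 : σ (v 3) = (ω ^ 2) • v 3 := hσ 3
  have hs4 : σ (v 4) = (ω ^ 2) • v 4 := hσ 4
  refine ⟨σ, ?_, hs1, hs2, hs3, hs4, hs0,
    core a b c ha0 hb0 hc0 hab hbc v hW hF hne hgen σ hs0 hs1 hs2 hs3 hs4⟩
  have : Fact (Nat.Prime 3) := ⟨Nat.prime_three⟩
  apply orderOf_eq_prime
  · have hfx := hgen (IntermediateField.mk
      (AlgHom.equalizer (σ ^ 3).toAlgHom (AlgHom.id ℂ (FractionRing A))) (by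
        intro z hz
        have hz' : (σ ^ 3) z = z := hz
        change (σ ^ 3) z⁻¹ = z⁻¹
        rw [map_inv₀, hz'])) (by
        intro i
        change σ (σ (σ (v i))) = v i
        rw [hσ, map_smul, map_smul, hσ, map_smul, hσ, smul_smul, smul_smul]
        have : wt i * wt i * wt i = 1 := by
          rw [← wt_cube i]; ring
        rw [this, one_smul])
    ext z
    have hz : z ∈ (⊤ : IntermediateField ℂ (FractionRing A)) := trivial
    rw [← hfx] at hz
    exact hz
  · intro h
    have h3 := hs3
    rw [h, AlgEquiv.one_apply] at h3
    have h5 : (1 - ω ^ 2) • v 3 = 0 := by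
      rw [sub_smul, one_smul, ← h3, sub_self]
    rcases smul_eq_zero.1 h5 with h6 | h6
    · obtain ⟨k1, k2, k3, k4⟩ := omega_facts
      apply k3
      linear_combination k2 + ω * h6
    · have := hne (X 3) ![0, 0, 0, -1, 0] (by simp [pW₀5, q5]) (by simp [pF₀5]; norm_num)
        (by rw [aeval_X]; exact h6)
      simp at this
end
end

section
/- Let Z = {(x₁,x₂,x₃,x₄) ∈ ℂ⁴ : x₄³ = x₁x₂x₃(x₁+x₂+x₃)}, equipped with the subspace topology from ℂ⁴. Then the singular cohomology groups with rational coefficients H²(Z ∖ {(0,0,0,0)}; ℚ) and H³(Z ∖ {(0,0,0,0)}; ℚ) both vanish. -/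
noncomputable section
open CategoryTheory AlgebraicTopology

/-- The (unnormalized) singular chain complex of a topological space with
`ℚ`-coefficients: the alternating face map complex of the free simplicial `ℚ`-module
on the singular simplicial set. -/
def singularChainComplex (X : Type) [TopologicalSpace X] : ChainComplex (ModuleCat ℚ) ℕ :=
  (AlgebraicTopology.alternatingFaceMapComplex (ModuleCat ℚ)).obj
    (((SimplicialObject.whiskering _ _).obj (ModuleCat.free ℚ)).obj
      (TopCat.toSSet.obj (TopCat.of X)))

/-- The singular cochain complex with `ℚ`-coefficients, obtained by applying the
contravariant functor `Hom(-, ℚ)` to the singular chain complex; its homology in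
degree `n` is the singular cohomology `Hⁿ(X; ℚ)`. -/
def singularCochainComplex (X : Type) [TopologicalSpace X] :
    HomologicalComplex (ModuleCat ℚ) (ComplexShape.down ℕ).symm :=
  (((linearYoneda ℚ (ModuleCat ℚ)).obj (ModuleCat.of ℚ ℚ)).mapHomologicalComplex _).obj
    (singularChainComplex X).op

/-- The punctured affine hypersurface
`Z ∖ {0} = {x ∈ ℂ⁴ : x₄³ = x₁x₂x₃(x₁+x₂+x₃)} ∖ {(0,0,0,0)}`, with the subspace
topology from `ℂ⁴`. -/
def ZPunct : Type :=
  {x : Fin 4 → ℂ // x 3 ^ 3 = x 0 * x 1 * x 2 * (x 0 + x 1 + x 2) ∧ x ≠ 0}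

instance : TopologicalSpace ZPunct := instTopologicalSpaceSubtype

section
namespace P10

/-! ### Chains on tuples -/

/-- Free module on `k`-tuples of elements of `A`. -/
abbrev L (A : Type) (k : ℕ) := (Fin k → A) →₀ ℚ

/-- Boundary of tuple chains. -/
def Ld {A : Type} (k : ℕ) : L A (k+1) →ₗ[ℚ] L A k :=
  ∑ i : Fin (k+1), ((-1 : ℚ)^(i : ℕ)) • Finsupp.lmapDomain ℚ ℚ (fun v => v ∘ i.succAbove)

/-- Cone operator on tuple chains. -/
def Lc {A : Type} (b : A) (k : ℕ) : L A k →ₗ[ℚ] L A (k+1) :=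
  Finsupp.lmapDomain ℚ ℚ (fun v => Fin.cons b v)

/-- functoriality of tuple chains. -/
def Lm {A B : Type} (f : A → B) (k : ℕ) : L A k →ₗ[ℚ] L B k :=
  Finsupp.lmapDomain ℚ ℚ (fun v => f ∘ v)

abbrev Ls {A : Type} {k : ℕ} (v : Fin k → A) : L A k := Finsupp.single v 1

lemma L_ext {A : Type} {k : ℕ} {N : Type} [AddCommGroup N] [Module ℚ N] {f g : L A k →ₗ[ℚ] N}
    (h : ∀ v, f (Ls v) = g (Ls v)) : f = g := by
  apply Finsupp.lhom_ext'
  intro v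
  ext
  simpa using h v

lemma Ld_s {A : Type} (k : ℕ) (v : Fin (k+1) → A) :
    Ld k (Ls v) = ∑ i : Fin (k+1), ((-1 : ℚ)^(i : ℕ)) • Ls (v ∘ i.succAbove) := by
  simp [Ld, LinearMap.sum_apply]

@[simp] lemma Lc_s {A : Type} (b : A) (k : ℕ) (v : Fin k → A) :
    Lc b k (Ls v) = Ls (Fin.cons b v : Fin (k+1) → A) := by
  simp [Lc]

@[simp] lemma Lm_s {A B : Type} (f : A → B) (k : ℕ) (v : Fin k → A) :
    Lm f k (Ls v) = Ls (f ∘ v) := by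
  simp [Lm]

lemma cons_succAbove_succ {A : Type} (b : A) (k : ℕ) (v : Fin (k+1) → A) (i : Fin (k+1)) :
    (Fin.cons b v : Fin (k+2) → A) ∘ i.succ.succAbove = Fin.cons b (v ∘ i.succAbove) := by
  funext j
  refine Fin.cases ?_ (fun j => ?_) j
  · simp
  · simp

lemma Ld_Lc {A : Type} (b : A) (k : ℕ) (c : L A (k+1)) :
    Ld (k+1) (Lc b (k+1) c) = c - Lc b k (Ld k c) := by
  suffices h : Ld (k+1) ∘ₗ Lc b (k+1) = LinearMap.id - Lc b k ∘ₗ Ld k by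
    simpa using LinearMap.congr_fun h c
  apply L_ext
  intro v
  simp only [LinearMap.comp_apply, Lc_s, LinearMap.sub_apply, LinearMap.id_apply]
  rw [Ld_s, Ld_s, Fin.sum_univ_succ, map_sum, sub_eq_add_neg, ← Finset.sum_neg_distrib]
  congr 1
  · simp only [Fin.val_zero, pow_zero, one_smul]
    congr 1
  · apply Finset.sum_congr rfl
    intro i _
    rw [cons_succAbove_succ, map_smul, Lc_s, Fin.val_succ, pow_succ, ← neg_smul]
    congr 1
    ring

lemma Ld_Lc_zero {A : Type} (b : A) (c : L A 0) :
    Ld 0 (Lc b 0 c) = c := by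
  suffices h : Ld 0 ∘ₗ Lc b 0 = LinearMap.id by
    simpa using LinearMap.congr_fun h c
  apply L_ext
  intro v
  simp only [LinearMap.comp_apply, Lc_s, LinearMap.id_apply]
  rw [Ld_s]
  simp

lemma Ld_Ld {A : Type} (k : ℕ) (c : L A (k+2)) : Ld k (Ld (k+1) c) = 0 := by
  suffices h : Ld (A := A) k ∘ₗ Ld (k+1) = 0 by
    simpa using LinearMap.congr_fun h c
  clear c
  induction k with
  | zero =>
    apply L_ext
    intro v
    obtain ⟨b, w, rfl⟩ : ∃ b w, v = Fin.cons b w := ⟨v 0, Fin.tail v, (Fin.cons_self_tail v).symm⟩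
    rw [LinearMap.comp_apply, ← Lc_s, Ld_Lc, map_sub, Ld_Lc_zero]
    simp
  | succ k ih =>
    apply L_ext
    intro v
    obtain ⟨b, w, rfl⟩ : ∃ b w, v = Fin.cons b w := ⟨v 0, Fin.tail v, (Fin.cons_self_tail v).symm⟩
    have := LinearMap.congr_fun (ih) (Ls w)
    rw [LinearMap.comp_apply, ← Lc_s, Ld_Lc, map_sub, Ld_Lc]
    rw [LinearMap.comp_apply] at this
    simp [this]

lemma Ld_Lm {A B : Type} (f : A → B) (k : ℕ) (c : L A (k+1)) :
    Ld k (Lm f (k+1) c) = Lm f k (Ld k c) := by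
  suffices h : Ld k ∘ₗ Lm f (k+1) = Lm f k ∘ₗ Ld k by
    simpa using LinearMap.congr_fun h c
  apply L_ext
  intro v
  simp only [LinearMap.comp_apply, Lm_s, Ld_s, map_sum, map_smul]
  rfl

lemma Lm_Lc {A B : Type} (f : A → B) (b : A) (k : ℕ) (c : L A k) :
    Lm f (k+1) (Lc b k c) = Lc (f b) k (Lm f k c) := by
  suffices h : Lm f (k+1) ∘ₗ Lc b k = Lc (f b) k ∘ₗ Lm f k by
    simpa using LinearMap.congr_fun h c
  apply L_ext
  intro v
  simp only [LinearMap.comp_apply, Lm_s, Lc_s]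
  congr 1
  funext j
  refine Fin.cases ?_ (fun j => ?_) j <;> simp

/-- linear extension from tuples -/
def Lx {A : Type} {k : ℕ} {N : Type} [AddCommGroup N] [Module ℚ N] (F : (Fin k → A) → N) :
    L A k →ₗ[ℚ] N := Finsupp.linearCombination ℚ F

@[simp] lemma Lx_s {A : Type} {k : ℕ} {N : Type} [AddCommGroup N] [Module ℚ N]
    (F : (Fin k → A) → N) (v : Fin k → A) : Lx F (Ls v) = F v := by
  simp [Lx]

/-- The recursively defined homotopy operator. -/
def Hrec {A B : Type} (f : ∀ k, L A k →ₗ[ℚ] L B k) (b : ∀ k, (Fin (k+1) → A) → B) :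
    ∀ k, L A k →ₗ[ℚ] L B (k+1)
  | 0 => 0
  | k+1 => Lx (fun v => Lc (b k v) (k+1) (f (k+1) (Ls v) - Hrec f b k (Ld k (Ls v))))

lemma Hrec_s {A B : Type} (f : ∀ k, L A k →ₗ[ℚ] L B k) (b : ∀ k, (Fin (k+1) → A) → B) (k : ℕ)
    (v : Fin (k+1) → A) : Hrec f b (k+1) (Ls v) =
      Lc (b k v) (k+1) (f (k+1) (Ls v) - Hrec f b k (Ld k (Ls v))) := by
  rw [Hrec, Lx_s]

lemma Hrec_spec_zero {A B : Type} (f : ∀ k, L A k →ₗ[ℚ] L B k) (b : ∀ k, (Fin (k+1) → A) → B)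
    (f0 : f 0 = 0) (hf : ∀ k c, Ld k (f (k+1) c) = f k (Ld k c)) (c : L A 1) :
    Ld 1 (Hrec f b 1 c) = f 1 c := by
  suffices h : Ld 1 ∘ₗ Hrec f b 1 = f 1 by
    simpa using LinearMap.congr_fun h c
  apply L_ext
  intro v
  rw [LinearMap.comp_apply, Hrec_s, Ld_Lc]
  simp [Hrec, hf, f0]

lemma Hrec_spec {A B : Type} (f : ∀ k, L A k →ₗ[ℚ] L B k) (b : ∀ k, (Fin (k+1) → A) → B)
    (f0 : f 0 = 0) (hf : ∀ k c, Ld k (f (k+1) c) = f k (Ld k c)) (k : ℕ) (c : L A (k+1)) :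
    Ld (k+1) (Hrec f b (k+1) c) = f (k+1) c - Hrec f b k (Ld k c) := by
  induction k with
  | zero => rw [Hrec_spec_zero f b f0 hf]; simp [Hrec]
  | succ k ih =>
    suffices h : Ld (k+2) ∘ₗ Hrec f b (k+2) = f (k+2) - Hrec f b (k+1) ∘ₗ Ld (k+1) by
      simpa using LinearMap.congr_fun h c
    apply L_ext
    intro v
    rw [LinearMap.comp_apply, Hrec_s, Ld_Lc, map_sub (Ld _), ih, hf, Ld_Ld]
    simp

lemma Hrec_nat {A B A' B' : Type} (f : ∀ k, L A k →ₗ[ℚ] L B k) (b : ∀ k, (Fin (k+1) → A) → B)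
    (f' : ∀ k, L A' k →ₗ[ℚ] L B' k) (b' : ∀ k, (Fin (k+1) → A') → B')
    (p : A → A') (q : B → B') (hf : ∀ k c, Lm q k (f k c) = f' k (Lm p k c))
    (hb : ∀ k v, q (b k v) = b' k (p ∘ v)) (k : ℕ) (c : L A k) :
    Lm q (k+1) (Hrec f b k c) = Hrec f' b' k (Lm p k c) := by
  induction k with
  | zero => simp [Hrec]
  | succ k ih =>
    suffices h : Lm q (k+2) ∘ₗ Hrec f b (k+1) = Hrec f' b' (k+1) ∘ₗ Lm p (k+1) by
      simpa using LinearMap.congr_fun h c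
    apply L_ext
    intro v
    rw [LinearMap.comp_apply, LinearMap.comp_apply, Hrec_s, Lm_Lc, map_sub (Lm _ _), ih, hf, hb,
      Lm_s, Hrec_s, ← Ld_Lm, Lm_s]

/-- Subdivision with chosen barycenters. -/
def sd {A : Type} (b : ∀ k, (Fin (k+1) → A) → A) : ∀ k, L A k →ₗ[ℚ] L A k
  | 0 => LinearMap.id
  | k+1 => Lx (fun v => Lc (b k v) k (sd b k (Ld k (Ls v))))

lemma sd_s {A : Type} (b : ∀ k, (Fin (k+1) → A) → A) (k : ℕ) (v : Fin (k+1) → A) :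
    sd b (k+1) (Ls v) = Lc (b k v) k (sd b k (Ld k (Ls v))) := by
  rw [sd, Lx_s]

lemma Ld_sd {A : Type} (b : ∀ k, (Fin (k+1) → A) → A) (k : ℕ) (c : L A (k+1)) :
    Ld k (sd b (k+1) c) = sd b k (Ld k c) := by
  induction k with
  | zero =>
    suffices h : Ld 0 ∘ₗ sd b 1 = sd b 0 ∘ₗ Ld 0 by
      simpa using LinearMap.congr_fun h c
    apply L_ext
    intro v
    rw [LinearMap.comp_apply, sd_s, Ld_Lc_zero]
    rfl
  | succ k ih =>
    suffices h : Ld (k+1) ∘ₗ sd b (k+2) = sd b (k+1) ∘ₗ Ld (k+1) by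
      simpa using LinearMap.congr_fun h c
    apply L_ext
    intro v
    rw [LinearMap.comp_apply, sd_s, Ld_Lc, ih, Ld_Ld]
    simp

lemma sd_nat {A B : Type} (b : ∀ k, (Fin (k+1) → A) → A) (b' : ∀ k, (Fin (k+1) → B) → B)
    (p : A → B) (hb : ∀ k v, p (b k v) = b' k (p ∘ v)) (k : ℕ) (c : L A k) :
    Lm p k (sd b k c) = sd b' k (Lm p k c) := by
  induction k with
  | zero => rfl
  | succ k ih =>
    suffices h : Lm p (k+1) ∘ₗ sd b (k+1) = sd b' (k+1) ∘ₗ Lm p (k+1) by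
      simpa using LinearMap.congr_fun h c
    apply L_ext
    intro v
    rw [LinearMap.comp_apply, LinearMap.comp_apply, sd_s, Lm_Lc, ih, hb, Lm_s, sd_s, ← Ld_Lm, Lm_s]

end P10
end

section
namespace P10

/-! ### Singular chains (indexed by the number of vertices) -/

/-- The standard simplex with `k` vertices. -/
abbrev Spx (k : ℕ) : Type := stdSimplex ℝ (Fin k)

/-- The affine map determined by the images of the vertices. -/
def aff {k n : ℕ} (v : Fin k → Spx n) : C(Spx k, Spx n) where
  toFun x := ⟨fun j => ∑ i, x.1 i * (v i).1 j, by
    refine ⟨fun j => Finset.sum_nonneg fun i _ => mul_nonneg (x.2.1 i) ((v i).2.1 j), ?_⟩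
    rw [Finset.sum_comm]
    have : ∀ i, ∑ j, x.1 i * (v i).1 j = x.1 i := fun i => by
      rw [← Finset.mul_sum, (v i).2.2, mul_one]
    simp only [this]
    exact x.2.2⟩
  continuous_toFun := by
    refine Continuous.subtype_mk ?_ _
    refine continuous_pi fun j => continuous_finsetSum _ fun i _ => ?_
    exact ((continuous_apply i).comp continuous_subtype_val).mul continuous_const

lemma aff_apply {k n : ℕ} (v : Fin k → Spx n) (x : Spx k) (j : Fin n) :
    (aff v x).1 j = ∑ i, x.1 i * (v i).1 j := rfl

lemma aff_aff {k n m : ℕ} (u : Fin n → Spx m) (v : Fin k → Spx n) (x : Spx k) :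
    aff u (aff v x) = aff (aff u ∘ v) x := by
  apply Subtype.ext
  funext j
  simp only [aff_apply, Function.comp_apply, Finset.sum_mul, Finset.mul_sum]
  rw [Finset.sum_comm]
  simp only [mul_assoc]

lemma aff_comp {k n m : ℕ} (u : Fin n → Spx m) (v : Fin k → Spx n) :
    (aff u).comp (aff v) = aff (aff u ∘ v) := by
  ext1 x
  exact aff_aff u v x

/-- The vertices of the simplex. -/
def vert {n : ℕ} (i : Fin n) : Spx n := ⟨Pi.single i 1, single_mem_stdSimplex ℝ i⟩

@[simp] lemma aff_vert {k n : ℕ} (v : Fin k → Spx n) (i : Fin k) : aff v (vert i) = v i := by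
  apply Subtype.ext
  funext j
  rw [aff_apply, Finset.sum_eq_single i]
  · simp [vert]
  · intro b _ hb
    simp [vert, Pi.single_eq_of_ne hb]
  · simp

lemma aff_vert_id {n : ℕ} (x : Spx n) : aff vert x = x := by
  apply Subtype.ext
  funext j
  rw [aff_apply, Finset.sum_eq_single j]
  · simp [vert]
  · intro b _ hb
    simp [vert, Pi.single_eq_of_ne (Ne.symm hb)]
  · simp

/-- Face inclusions. -/
def fc {k : ℕ} (i : Fin (k+1)) : C(Spx k, Spx (k+1)) := aff (fun j => vert (i.succAbove j))

lemma aff_fc {k n : ℕ} (v : Fin (k+1) → Spx n) (i : Fin (k+1)) :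
    (aff v).comp (fc i) = aff (v ∘ i.succAbove) := by
  rw [fc, aff_comp]
  congr 1
  funext j
  simp

/-- barycenter of the simplex -/
def ctr (k : ℕ) : Spx (k+1) := ⟨fun _ => 1 / ((k : ℝ) + 1), fun _ => by positivity, by
  simp
  field_simp⟩

/-- barycenter of a tuple -/
def bar (n : ℕ) (k : ℕ) (v : Fin (k+1) → Spx n) : Spx n := aff v (ctr k)

lemma aff_bar {n m : ℕ} (u : Fin n → Spx m) (k : ℕ) (v : Fin (k+1) → Spx n) :
    aff u (bar n k v) = bar m k (aff u ∘ v) := by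
  rw [bar, aff_aff]; rfl

variable {X Y W : Type} [TopologicalSpace X] [TopologicalSpace Y] [TopologicalSpace W]

/-- singular chains on simplices with `k` vertices -/
abbrev Ch (X : Type) [TopologicalSpace X] (k : ℕ) := C(Spx k, X) →₀ ℚ

abbrev Cs {k : ℕ} (s : C(Spx k, X)) : Ch X k := Finsupp.single s 1

lemma C_ext {k : ℕ} {N : Type} [AddCommGroup N] [Module ℚ N] {f g : Ch X k →ₗ[ℚ] N}
    (h : ∀ v, f (Cs v) = g (Cs v)) : f = g := by
  apply Finsupp.lhom_ext'
  intro v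
  ext
  simpa using h v

/-- singular boundary -/
def cd (k : ℕ) : Ch X (k+1) →ₗ[ℚ] Ch X k :=
  ∑ i : Fin (k+1), ((-1 : ℚ)^(i : ℕ)) • Finsupp.lmapDomain ℚ ℚ (fun s => s.comp (fc i))

lemma cd_s (k : ℕ) (s : C(Spx (k+1), X)) :
    cd k (Cs s) = ∑ i : Fin (k+1), ((-1 : ℚ)^(i : ℕ)) • Cs (s.comp (fc i)) := by
  simp [cd, LinearMap.sum_apply]

/-- pushforward of chains -/
def cm (f : C(X, Y)) (k : ℕ) : Ch X k →ₗ[ℚ] Ch Y k :=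
  Finsupp.lmapDomain ℚ ℚ (fun s => f.comp s)

@[simp] lemma cm_s (f : C(X, Y)) (k : ℕ) (s : C(Spx k, X)) : cm f k (Cs s) = Cs (f.comp s) := by
  simp [cm]

lemma cd_cm (f : C(X, Y)) (k : ℕ) (c : Ch X (k+1)) : cd k (cm f (k+1) c) = cm f k (cd k c) := by
  suffices h : cd k ∘ₗ cm f (k+1) = cm f k ∘ₗ cd k by
    simpa using LinearMap.congr_fun h c
  apply C_ext
  intro v
  simp only [LinearMap.comp_apply, cm_s, cd_s, map_sum, map_smul]
  rfl

lemma cm_cm (f : C(X, Y)) (g : C(Y, W)) (k : ℕ) (c : Ch X k) :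
    cm g k (cm f k c) = cm (g.comp f) k c := by
  suffices h : cm g k ∘ₗ cm f k = cm (g.comp f) k by
    simpa using LinearMap.congr_fun h c
  apply C_ext
  intro v
  simp only [LinearMap.comp_apply, cm_s]
  rfl

lemma cm_id (k : ℕ) (c : Ch X k) : cm (ContinuousMap.id X) k c = c := by
  suffices h : cm (ContinuousMap.id X) k = LinearMap.id by
    simpa using LinearMap.congr_fun h c
  apply C_ext
  intro v
  simp

/-- realization of affine chains through a singular simplex -/
def rz {n : ℕ} (s : C(Spx n, X)) (k : ℕ) : L (Spx n) k →ₗ[ℚ] Ch X k :=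
  Finsupp.lmapDomain ℚ ℚ (fun v => s.comp (aff v))

@[simp] lemma rz_s {n : ℕ} (s : C(Spx n, X)) (k : ℕ) (v : Fin k → Spx n) :
    rz s k (Ls v) = Cs (s.comp (aff v)) := by
  simp [rz]

lemma cd_rz {n : ℕ} (s : C(Spx n, X)) (k : ℕ) (a : L (Spx n) (k+1)) :
    cd k (rz s (k+1) a) = rz s k (Ld k a) := by
  suffices h : cd k ∘ₗ rz s (k+1) = rz s k ∘ₗ Ld k by
    simpa using LinearMap.congr_fun h a
  apply L_ext
  intro v
  simp only [LinearMap.comp_apply, rz_s, cd_s, Ld_s, map_sum, map_smul, ContinuousMap.comp_assoc,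
    aff_fc]

lemma rz_aff {n m : ℕ} (s : C(Spx m, X)) (u : Fin n → Spx m) (k : ℕ) (a : L (Spx n) k) :
    rz (s.comp (aff u)) k a = rz s k (Lm (aff u) k a) := by
  suffices h : rz (s.comp (aff u)) k = rz s k ∘ₗ Lm (aff u) k by
    simpa using LinearMap.congr_fun h a
  apply L_ext
  intro v
  simp only [LinearMap.comp_apply, rz_s, Lm_s, ContinuousMap.comp_assoc, aff_comp]

lemma cm_rz {n : ℕ} (f : C(X, Y)) (s : C(Spx n, X)) (k : ℕ) (a : L (Spx n) k) :
    cm f k (rz s k a) = rz (f.comp s) k a := by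
  suffices h : cm f k ∘ₗ rz s k = rz (f.comp s) k by
    simpa using LinearMap.congr_fun h a
  apply L_ext
  intro v
  simp only [LinearMap.comp_apply, rz_s, cm_s, ContinuousMap.comp_assoc]

/-- the natural operator on singular chains given by an affine chain -/
def op {n k : ℕ} (a : L (Spx n) k) : Ch X n →ₗ[ℚ] Ch X k :=
  Finsupp.linearCombination ℚ (fun s => rz s k a)

@[simp] lemma op_s {n k : ℕ} (a : L (Spx n) k) (s : C(Spx n, X)) : op a (Cs s) = rz s k a := by
  simp [op]

lemma cd_op {n k : ℕ} (a : L (Spx n) (k+1)) (c : Ch X n) : cd k (op a c) = op (Ld k a) c := by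
  suffices h : cd k ∘ₗ op (X := X) a = op (Ld k a) by
    simpa using LinearMap.congr_fun h c
  apply C_ext
  intro v
  simp only [LinearMap.comp_apply, op_s, cd_rz]

lemma cm_op {n k : ℕ} (f : C(X, Y)) (a : L (Spx n) k) (c : Ch X n) :
    cm f k (op a c) = op a (cm f n c) := by
  suffices h : cm f k ∘ₗ op (X := X) a = op a ∘ₗ cm f n by
    simpa using LinearMap.congr_fun h c
  apply C_ext
  intro v
  simp only [LinearMap.comp_apply, op_s, cm_s, cm_rz]

lemma op_cd {n k : ℕ} (a : L (Spx n) k) (c : Ch X (n+1)) :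
    op a (cd n c) = op (∑ i : Fin (n+1), ((-1 : ℚ)^(i : ℕ)) • Lm (fc i) k a) c := by
  suffices h : op (X := X) a ∘ₗ cd n =
      op (∑ i : Fin (n+1), ((-1 : ℚ)^(i : ℕ)) • Lm (fc i) k a) by
    simpa using LinearMap.congr_fun h c
  apply C_ext
  intro s
  simp only [LinearMap.comp_apply, op_s, cd_s, map_sum, map_smul]
  refine Finset.sum_congr rfl fun i _ => ?_
  rw [fc, rz_aff]

lemma op_add {n k : ℕ} (a b : L (Spx n) k) (c : Ch X n) : op (a + b) c = op a c + op b c := by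
  suffices h : op (X := X) (a + b) = op a + op b by
    simpa using LinearMap.congr_fun h c
  apply C_ext; intro s; simp

lemma op_sub {n k : ℕ} (a b : L (Spx n) k) (c : Ch X n) : op (a - b) c = op a c - op b c := by
  suffices h : op (X := X) (a - b) = op a - op b by
    simpa using LinearMap.congr_fun h c
  apply C_ext; intro s; simp

lemma op_vert {n : ℕ} (c : Ch X n) : op (Ls vert) c = c := by
  suffices h : op (X := X) (Ls (vert (n := n))) = LinearMap.id by
    simpa using LinearMap.congr_fun h c
  apply C_ext; intro s; simp
  congr 1
  ext x
  simp [aff_vert_id]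

lemma Ld_vert (n : ℕ) : Ld n (Ls (vert (n := n+1))) =
    ∑ i : Fin (n+1), ((-1 : ℚ)^(i : ℕ)) • Lm (fc i) n (Ls vert) := by
  rw [Ld_s]
  refine Finset.sum_congr rfl fun i _ => ?_
  rw [Lm_s]
  congr 2
  funext j
  simp [fc]

/-- singular subdivision -/
def Sd (n : ℕ) : Ch X n →ₗ[ℚ] Ch X n := op (sd (bar n) n (Ls vert))

/-- affine subdivision homotopy -/
abbrev ht (n k : ℕ) : L (Spx n) k →ₗ[ℚ] L (Spx n) (k+1) :=
  Hrec (fun k => LinearMap.id - sd (bar n) k) (bar n) k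

/-- singular subdivision homotopy -/
def Td (n : ℕ) : Ch X n →ₗ[ℚ] Ch X (n+1) := op (ht n n (Ls vert))

lemma sd_aff {n m : ℕ} (u : Fin n → Spx m) (k : ℕ) (c : L (Spx n) k) :
    Lm (aff u) k (sd (bar n) k c) = sd (bar m) k (Lm (aff u) k c) :=
  sd_nat _ _ _ (fun k v => aff_bar u k v) k c

lemma ht_aff {n m : ℕ} (u : Fin n → Spx m) (k : ℕ) (c : L (Spx n) k) :
    Lm (aff u) (k+1) (ht n k c) = ht m k (Lm (aff u) k c) :=
  Hrec_nat _ _ _ _ _ _ (fun k c => by simp [sd_aff]) (fun k v => aff_bar u k v) k c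

lemma cd_Sd (n : ℕ) (c : Ch X (n+1)) : cd n (Sd (n+1) c) = Sd n (cd n c) := by
  rw [Sd, Sd, cd_op, Ld_sd, op_cd, Ld_vert, map_sum]
  congr 2
  refine Finset.sum_congr rfl fun i _ => ?_
  rw [map_smul, fc, sd_aff]

lemma cd_Td (n : ℕ) (c : Ch X (n+1)) :
    cd (n+1) (Td (n+1) c) = c - Sd (n+1) c - Td n (cd n c) := by
  rw [Td, Sd, Td, cd_op, Hrec_spec, op_cd, Ld_vert, map_sum]
  · rw [op_sub]
    congr 1
    · rw [LinearMap.sub_apply, op_sub, LinearMap.id_apply, op_vert]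
    · congr 2
      refine Finset.sum_congr rfl fun i _ => ?_
      rw [map_smul, fc, ht_aff]
  · ext; simp [sd]
  · intro k c
    simp [Ld_sd]

lemma Sd_zero (c : Ch X 0) : Sd 0 c = c := by
  rw [Sd, sd, LinearMap.id_apply, op_vert]

lemma cd_cd (n : ℕ) (c : Ch X (n+2)) : cd n (cd (n+1) c) = 0 := by
  rw [← op_vert (n := n+2) c, cd_op, cd_op, Ld_Ld]
  suffices h : op (X := X) (0 : L (Spx (n+2)) n) = 0 by
    simpa using LinearMap.congr_fun h c
  apply C_ext; intro s; simp

lemma Sd_op {n k : ℕ} (a : L (Spx n) k) (c : Ch X n) : Sd k (op a c) = op (sd (bar n) k a) c := by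
  suffices h : Sd k ∘ₗ op (X := X) a = op (sd (bar n) k a) by
    simpa using LinearMap.congr_fun h c
  apply C_ext
  intro s
  simp only [LinearMap.comp_apply, op_s]
  suffices h : Sd k ∘ₗ rz s k = rz s k ∘ₗ sd (bar n) k by
    simpa using LinearMap.congr_fun h a
  apply L_ext
  intro v
  simp only [LinearMap.comp_apply, rz_s, Sd, op_s]
  have hv : (⇑(aff v) ∘ vert) = v := by funext j; simp
  rw [rz_aff, sd_aff, Lm_s, hv]

lemma Sd_iter (n m : ℕ) (c : Ch X n) :
    (Sd n)^[m] c = op ((sd (bar n) n)^[m] (Ls vert)) c := by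
  induction m with
  | zero => simp [op_vert]
  | succ m ih => rw [Function.iterate_succ_apply', Function.iterate_succ_apply', ih, Sd_op]

end P10
end

section
namespace P10

/-! ### Small simplices -/

lemma supp_map {α N : Type} [AddCommGroup N] [Module ℚ N] (f : (α →₀ ℚ) →ₗ[ℚ] N) {S : Set α}
    {M : Submodule ℚ N} (h : ∀ s ∈ S, f (Finsupp.single s 1) ∈ M) {c : α →₀ ℚ}
    (hc : c ∈ Finsupp.supported ℚ ℚ S) : f c ∈ M := by
  rw [Finsupp.supported_eq_span_single] at hc
  induction hc using Submodule.span_induction with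
  | mem x hx =>
    obtain ⟨s, hs, rfl⟩ := hx
    exact h s hs
  | zero => simp
  | add x y _ _ hx hy => rw [map_add]; exact M.add_mem hx hy
  | smul a x _ hx => rw [map_smul]; exact M.smul_mem a hx

lemma single_supp {α : Type} {S : Set α} {s : α} (h : s ∈ S) :
    (Finsupp.single s 1 : α →₀ ℚ) ∈ Finsupp.supported ℚ ℚ S :=
  Finsupp.single_mem_supported ℚ 1 h

lemma aff_mem {k n : ℕ} (D : Set (Fin n → ℝ)) (hD : Convex ℝ D) (v : Fin k → Spx n)
    (hv : ∀ i, (v i).1 ∈ D) (x : Spx k) : (aff v x).1 ∈ D := by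
  have : (aff v x).1 = ∑ i, x.1 i • (v i).1 := by
    funext j
    simp [aff_apply]
  rw [this]
  exact hD.sum_mem (fun i _ => x.2.1 i) x.2.2 (fun i _ => hv i)

/-- tuples inside a set -/
def inD {n : ℕ} (k : ℕ) (D : Set (Fin n → ℝ)) : Submodule ℚ (L (Spx n) k) :=
  Finsupp.supported ℚ ℚ {v | ∀ i, (v i).1 ∈ D}

lemma Ld_inD {n k : ℕ} (D : Set (Fin n → ℝ)) {c : L (Spx n) (k+1)} (hc : c ∈ inD (k+1) D) :
    Ld k c ∈ inD k D := by
  refine supp_map _ (fun v hv => ?_) hc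
  rw [Ld_s]
  exact Submodule.sum_mem _ fun i _ => Submodule.smul_mem _ _ (single_supp fun j => hv _)

lemma sd_inD {n : ℕ} (D : Set (Fin n → ℝ)) (hD : Convex ℝ D) (k : ℕ) {c : L (Spx n) k}
    (hc : c ∈ inD k D) : sd (bar n) k c ∈ inD k D := by
  induction k with
  | zero => exact hc
  | succ k ih =>
    refine supp_map _ (fun v hv => ?_) hc
    rw [sd_s]
    have h1 : sd (bar n) k (Ld k (Ls v)) ∈ inD k D := ih (Ld_inD D (single_supp hv))
    refine supp_map _ (fun w hw => ?_) h1
    rw [Lc_s]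
    refine single_supp fun i => ?_
    refine Fin.cases ?_ (fun i => ?_) i
    · exact aff_mem D hD v hv _
    · exact hw i

lemma dist_bar {n k : ℕ} (v : Fin (k+1) → Spx n) (r : ℝ) (hv : ∀ i j, dist (v i) (v j) ≤ r)
    (j : Fin (k+1)) : dist (bar n k v) (v j) ≤ k / (k + 1) * r := by
  rw [Subtype.dist_eq, dist_eq_norm]
  have h1 : (bar n k v).1 - (v j).1 = ∑ i, (1 / ((k:ℝ)+1)) • ((v i).1 - (v j).1) := by
    funext l
    rw [← Finset.smul_sum, Finset.sum_sub_distrib]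
    have : (bar n k v).1 l = ∑ i, (1 / ((k:ℝ)+1)) * (v i).1 l := rfl
    rw [Pi.sub_apply, this, ← Finset.mul_sum]
    simp
    field_simp
  rw [h1, ← Finset.add_sum_erase _ _ (Finset.mem_univ j)]
  simp only [sub_self, smul_zero, zero_add]
  refine (norm_sum_le _ _).trans ?_
  have : ∀ i ∈ Finset.univ.erase j, ‖(1 / ((k:ℝ)+1)) • ((v i).1 - (v j).1)‖ ≤ 1 / ((k:ℝ)+1) * r := by
    intro i _
    rw [norm_smul, Real.norm_of_nonneg (by positivity), ← dist_eq_norm, ← Subtype.dist_eq]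
    exact mul_le_mul_of_nonneg_left (hv i j) (by positivity)
  refine (Finset.sum_le_card_nsmul _ _ _ this).trans (le_of_eq ?_)
  simp
  ring

/-- tuples of small mesh -/
def mesh {n : ℕ} (k : ℕ) (r : ℝ) : Submodule ℚ (L (Spx n) k) :=
  Finsupp.supported ℚ ℚ {v | ∀ i j, dist (v i) (v j) ≤ r}

lemma sd_mesh {n : ℕ} (N : ℕ) (k : ℕ) (hk : k ≤ N + 1) (r : ℝ) (hr : 0 ≤ r) {c : L (Spx n) k}
    (hc : c ∈ mesh k r) : sd (bar n) k c ∈ mesh k (N / (N+1) * r) := by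
  induction k with
  | zero =>
    refine supp_map LinearMap.id (fun v hv => ?_) hc
    exact single_supp fun i => i.elim0
  | succ k ih =>
    refine supp_map _ (fun v hv => ?_) hc
    rw [sd_s]
    have hq : (k:ℝ) / (k+1) * r ≤ N / (N+1) * r := by
      refine mul_le_mul_of_nonneg_right ?_ hr
      have : (k:ℝ) ≤ N := by exact_mod_cast (by omega : k ≤ N)
      rw [div_le_div_iff₀ (by positivity) (by positivity)]
      nlinarith
    have h1 : sd (bar n) k (Ld k (Ls v)) ∈ mesh k (N / (N+1) * r) := by
      refine ih (by omega) ?_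
      rw [Ld_s]
      exact Submodule.sum_mem _ fun i _ =>
        Submodule.smul_mem _ _ (single_supp fun a b => hv _ _)
    have h2 : sd (bar n) k (Ld k (Ls v)) ∈
        inD k (Metric.closedBall (bar n k v).1 (N / (N+1) * r)) := by
      refine sd_inD _ (convex_closedBall _ _) k (Ld_inD _ (single_supp fun i => ?_))
      rw [Metric.mem_closedBall, dist_comm]
      exact (dist_bar v r hv i).trans hq
    have h3 := (Finsupp.supported_inter (M := ℚ) (R := ℚ) _ _).ge
      (Submodule.mem_inf.2 ⟨h1, h2⟩)
    refine supp_map _ (fun w hw => ?_) h3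
    rw [Lc_s]
    refine single_supp fun i j => ?_
    have hnn : 0 ≤ (N:ℝ) / (N+1) * r := by positivity
    refine Fin.cases ?_ (fun i => ?_) i <;> refine Fin.cases ?_ (fun j => ?_) j
    · simpa using hnn
    · simp only [Fin.cons_zero, Fin.cons_succ]
      rw [dist_comm]
      exact hw.2 j
    · simp only [Fin.cons_zero, Fin.cons_succ]
      exact hw.2 i
    · simp only [Fin.cons_succ]
      exact hw.1 i j

lemma sd_iter_mesh (n m : ℕ) :
    (sd (bar n) n)^[m] (Ls vert) ∈ mesh n (((n:ℝ) / (n+1))^m) := by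
  induction m with
  | zero =>
    refine single_supp fun i j => ?_
    rw [pow_zero, Subtype.dist_eq]
    exact (Metric.dist_le_diam_of_mem (bounded_stdSimplex _) (vert i).2 (vert j).2).trans
      diam_stdSimplex_le
  | succ m ih =>
    rw [Function.iterate_succ_apply', pow_succ']
    exact sd_mesh n n (by omega) _ (by positivity) ih

variable {X Y W : Type} [TopologicalSpace X] [TopologicalSpace Y] [TopologicalSpace W]

/-- chains whose simplices lie over `U` -/
def Sp (p : C(X, Y)) (k : ℕ) (U : Set Y) : Submodule ℚ (Ch X k) :=
  Finsupp.supported ℚ ℚ {s | ∀ x, p (s x) ∈ U}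

lemma op_Sp (p : C(X, Y)) {n k : ℕ} (a : L (Spx n) k) (U : Set Y) {c : Ch X n}
    (hc : c ∈ Sp p n U) : op a c ∈ Sp p k U := by
  refine supp_map _ (fun s hs => ?_) hc
  rw [op_s]
  have ha : a ∈ Finsupp.supported ℚ ℚ Set.univ := by simp
  refine supp_map _ (fun v hv => ?_) ha
  rw [rz_s]
  exact single_supp fun x => hs _

lemma small_one (p : C(X, Y)) {n : ℕ} (U V : Set Y) (hU : IsOpen U) (hV : IsOpen V)
    (s : C(Spx n, X)) (hs : ∀ x, p (s x) ∈ U ∪ V) :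
    ∃ m₀, ∀ m ≥ m₀, op ((sd (bar n) n)^[m] (Ls vert)) (Cs s) ∈
      Finsupp.supported ℚ ℚ {t : C(Spx n, X) | (∀ x, p (t x) ∈ U) ∨ (∀ x, p (t x) ∈ V)} := by
  obtain ⟨δ, hδ, hleb⟩ := lebesgue_number_lemma_of_metric (s := (Set.univ : Set (Spx n)))
    (c := fun b : Bool => (fun x => p (s x)) ⁻¹' (if b then U else V)) isCompact_univ
    (fun b => by
      refine IsOpen.preimage (by fun_prop) ?_
      cases b <;> simp [hU, hV])
    (fun x _ => by
      rcases hs x with h | h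
      · exact Set.mem_iUnion.2 ⟨true, by simpa using h⟩
      · exact Set.mem_iUnion.2 ⟨false, by simpa using h⟩)
  have hq : (n:ℝ) / (n+1) < 1 := by
    rw [div_lt_one (by positivity)]; linarith
  obtain ⟨m₀, hm₀⟩ := exists_pow_lt_of_lt_one hδ hq
  refine ⟨m₀, fun m hm => ?_⟩
  have hm1 : ((n:ℝ) / (n+1))^m < δ :=
    (pow_le_pow_of_le_one (by positivity) hq.le hm).trans_lt hm₀
  rw [op_s]
  refine supp_map _ (fun v hv => ?_) (sd_iter_mesh n m)
  rw [rz_s]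
  refine single_supp ?_
  rcases n with _ | n
  · left
    intro x
    have := x.2.2
    simp at this
  · obtain ⟨b, hb⟩ := hleb (v 0) trivial
    have key : ∀ x, p (s (aff v x)) ∈ (if b then U else V) := by
      intro x
      refine hb ?_
      rw [Metric.mem_ball, Subtype.dist_eq]
      refine aff_mem (Metric.ball (v 0).1 δ) (convex_ball _ _) v (fun i => ?_) x
      exact (hv i 0).trans_lt hm1
    cases b
    · right; simpa using key
    · left; simpa using key

lemma small_all (p : C(X, Y)) {n : ℕ} (U V : Set Y) (hU : IsOpen U) (hV : IsOpen V)
    (c : Ch X n) (hc : c ∈ Sp p n (U ∪ V)) :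
    ∃ m₀, ∀ m ≥ m₀, (Sd n)^[m] c ∈
      Finsupp.supported ℚ ℚ {t : C(Spx n, X) | (∀ x, p (t x) ∈ U) ∨ (∀ x, p (t x) ∈ V)} := by
  simp only [Sd_iter]
  rw [Sp, Finsupp.supported_eq_span_single] at hc
  induction hc using Submodule.span_induction with
  | mem x hx =>
    obtain ⟨s, hs, rfl⟩ := hx
    exact small_one p U V hU hV s hs
  | zero => exact ⟨0, fun m _ => by simp⟩
  | add x y _ _ hx hy =>
    obtain ⟨m₁, h₁⟩ := hx
    obtain ⟨m₂, h₂⟩ := hy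
    refine ⟨max m₁ m₂, fun m hm => ?_⟩
    rw [map_add]
    exact Submodule.add_mem _ (h₁ m (le_of_max_le_left hm)) (h₂ m (le_of_max_le_right hm))
  | smul a x _ hx =>
    obtain ⟨m₁, h₁⟩ := hx
    refine ⟨m₁, fun m hm => ?_⟩
    rw [map_smul]
    exact Submodule.smul_mem _ _ (h₁ m hm)

end P10
end

section
namespace P10
set_option linter.unusedSectionVars false
set_option linter.unusedVariables false

/-! ### Abstract Mayer-Vietoris -/

/-- cycles; everything in degree `0` is a cycle -/
def Cyc {M : ℕ → Type} [∀ n, AddCommGroup (M n)] [∀ n, Module ℚ (M n)]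
    (d : ∀ n, M (n+1) →ₗ[ℚ] M n) : ∀ n, M n → Prop
  | 0, _ => True
  | n+1, z => d n z = 0

/-- A chain complex with subcomplexes indexed by subsets of `Y`, with Mayer-Vietoris property. -/
structure HT (Y : Type) [TopologicalSpace Y] where
  M : ℕ → Type
  [ag : ∀ n, AddCommGroup (M n)]
  [md : ∀ n, Module ℚ (M n)]
  d : ∀ n, M (n+1) →ₗ[ℚ] M n
  S : ∀ n, Set Y → Submodule ℚ (M n)
  dd : ∀ n w, d n (d (n+1) w) = 0
  d_mem : ∀ n U w, w ∈ S (n+1) U → d n w ∈ S n U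
  mono : ∀ n U V, U ⊆ V → S n U ≤ S n V
  inter : ∀ n U V z, z ∈ S n U → z ∈ S n V → z ∈ S n (U ∩ V)
  split : ∀ n U V, IsOpen U → IsOpen V → ∀ z ∈ S n (U ∪ V), Cyc d n z →
    ∃ a ∈ S n U, ∃ b ∈ S n V, ∃ w ∈ S (n+1) (U ∪ V), z = a + b + d n w
  cpt : ∀ n (F : Set (Set Y)), (∀ U ∈ F, IsOpen U) → ∀ z ∈ S n (⋃₀ F),
    ∃ l : List (Set Y), (∀ U ∈ l, U ∈ F) ∧ z ∈ S n (⋃₀ {U | U ∈ l})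

attribute [instance] HT.ag HT.md

variable {X Y W : Type} [TopologicalSpace X] [TopologicalSpace Y] [TopologicalSpace W]

/-- exactness in degree `n` over `U` -/
def HT.Acyc (H : HT Y) (n : ℕ) (U : Set Y) : Prop :=
  ∀ z ∈ H.S n U, Cyc H.d n z → ∃ w ∈ H.S (n+1) U, H.d n w = z

lemma HT.cyc_d (H : HT Y) (n : ℕ) (w : H.M (n+1)) : Cyc H.d n (H.d n w) := by
  cases n with
  | zero => trivial
  | succ n => exact H.dd n w

lemma Cyc_add {M : ℕ → Type} [∀ n, AddCommGroup (M n)] [∀ n, Module ℚ (M n)]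
    (d : ∀ n, M (n+1) →ₗ[ℚ] M n) (n : ℕ) (a b : M n) (ha : Cyc d n a) (hb : Cyc d n b) :
    Cyc d n (a + b) := by
  cases n with
  | zero => trivial
  | succ n =>
    change d n (a + b) = 0
    rw [map_add, show d n a = 0 from ha, show d n b = 0 from hb, add_zero]

lemma HT.mv (H : HT Y) (n : ℕ) (U V : Set Y) (hU : IsOpen U) (hV : IsOpen V)
    (aU : H.Acyc n U) (aV : H.Acyc n V) (aUV : ∀ m, m + 1 = n → H.Acyc m (U ∩ V)) :
    H.Acyc n (U ∪ V) := by
  intro z hz cz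
  obtain ⟨a, ha, b, hb, w, hw, rfl⟩ := H.split n U V hU hV z hz cz
  have key : ∃ x ∈ H.S n (U ∩ V), Cyc H.d n (a - x) ∧ Cyc H.d n (b + x) := by
    cases n with
    | zero => exact ⟨0, Submodule.zero_mem _, trivial, trivial⟩
    | succ n =>
      have hab : H.d n a + H.d n b = 0 := by
        have : H.d n (a + b + H.d (n+1) w) = 0 := cz
        rwa [map_add, H.dd, add_zero, map_add] at this
      have h1 : H.d n a ∈ H.S n (U ∩ V) := by
        refine H.inter _ _ _ _ (H.d_mem _ _ _ ha) ?_
        rw [eq_neg_of_add_eq_zero_left hab]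
        exact Submodule.neg_mem _ (H.d_mem _ _ _ hb)
      obtain ⟨x, hx, hxd⟩ := aUV n rfl _ h1 (H.cyc_d n a)
      refine ⟨x, hx, ?_, ?_⟩
      · change H.d n (a - x) = 0
        rw [map_sub, hxd, sub_self]
      · change H.d n (b + x) = 0
        rw [map_add, hxd, add_comm, hab]
  obtain ⟨x, hx, c1, c2⟩ := key
  obtain ⟨w1, hw1, e1⟩ := aU (a - x)
    (Submodule.sub_mem _ ha (H.mono _ _ _ Set.inter_subset_left hx)) c1
  obtain ⟨w2, hw2, e2⟩ := aV (b + x)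
    (Submodule.add_mem _ hb (H.mono _ _ _ Set.inter_subset_right hx)) c2
  refine ⟨w1 + w2 + w, Submodule.add_mem _ (Submodule.add_mem _
    (H.mono _ _ _ Set.subset_union_left hw1) (H.mono _ _ _ Set.subset_union_right hw2)) hw, ?_⟩
  rw [map_add, map_add, e1, e2]
  abel

/-- union of a list -/
def lU (l : List (Set Y)) : Set Y := ⋃₀ {U | U ∈ l}

lemma lU_nil : lU ([] : List (Set Y)) = ∅ := by simp [lU]

lemma lU_cons (B : Set Y) (l : List (Set Y)) : lU (B :: l) = B ∪ lU l := by
  ext x; simp [lU]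

lemma lU_inter (B : Set Y) (l : List (Set Y)) : B ∩ lU l = lU (l.map (B ∩ ·)) := by
  ext x
  simp [lU]
  constructor
  · rintro ⟨h, t, ht, hx⟩
    exact ⟨t, ht, h, hx⟩
  · rintro ⟨t, ht, h, hx⟩
    exact ⟨h, t, ht, hx⟩

lemma lU_open (l : List (Set Y)) (h : ∀ U ∈ l, IsOpen U) : IsOpen (lU l) :=
  isOpen_sUnion h

lemma HT.fin_union (H : HT Y) (F : Set (Set Y)) (hF : ∀ U ∈ F, IsOpen U)
    (hI : ∀ U ∈ F, ∀ V ∈ F, U ∩ V ∈ F) (hA : ∀ U ∈ F, ∀ n, H.Acyc n U)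
    (h0 : ∀ n, H.Acyc n ∅) (k : ℕ) : ∀ (l : List (Set Y)), l.length = k → (∀ U ∈ l, U ∈ F) →
      ∀ n, H.Acyc n (lU l) := by
  induction k with
  | zero =>
    intro l hl _ n
    rw [List.length_eq_zero_iff.1 hl, lU_nil]
    exact h0 n
  | succ k ih =>
    intro l hl hlF n
    match l, hl, hlF with
    | B :: l, hl, hlF =>
    have hl' : l.length = k := by simpa using hl
    have hB : B ∈ F := hlF B (by simp)
    have hlF' : ∀ U ∈ l, U ∈ F := fun U hU => hlF U (by simp [hU])
    rw [lU_cons]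
    refine H.mv n _ _ (hF B hB) (lU_open l fun U hU => hF U (hlF' U hU)) (hA B hB n)
      (ih l hl' hlF' n) (fun m _ => ?_)
    rw [lU_inter]
    refine ih _ (by simpa using hl') ?_ m
    intro U hU
    obtain ⟨V, hV, rfl⟩ := List.mem_map.1 hU
    exact hI B hB V (hlF' V hV)

lemma HT.bredon (H : HT Y) (F : Set (Set Y)) (hF : ∀ U ∈ F, IsOpen U)
    (hI : ∀ U ∈ F, ∀ V ∈ F, U ∩ V ∈ F) (hA : ∀ U ∈ F, ∀ n, H.Acyc n U)
    (h0 : ∀ n, H.Acyc n ∅) (U : Set Y) (hU : ∀ x ∈ U, ∃ B ∈ F, x ∈ B ∧ B ⊆ U) (n : ℕ) :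
    H.Acyc n U := by
  have hUe : U = ⋃₀ {B | B ∈ F ∧ B ⊆ U} := by
    ext x
    constructor
    · intro hx
      obtain ⟨B, hB, hxB, hBU⟩ := hU x hx
      exact ⟨B, ⟨hB, hBU⟩, hxB⟩
    · rintro ⟨B, ⟨_, hBU⟩, hxB⟩
      exact hBU hxB
  intro z hz cz
  rw [hUe] at hz
  obtain ⟨l, hl, hzl⟩ := H.cpt n _ (fun B hB => hF B hB.1) z hz
  obtain ⟨w, hw, e⟩ := H.fin_union F hF hI hA h0 _ l rfl (fun B hB => (hl B hB).1) n z hzl cz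
  refine ⟨w, H.mono _ _ _ ?_ hw, e⟩
  rintro x ⟨B, hB, hxB⟩
  exact (hl B hB).2 hxB

lemma HT.nerve (H : HT Y) (Q : Set Y → Prop) (hQo : ∀ U, Q U → IsOpen U)
    (hQi : ∀ U V, Q U → Q V → Q (U ∩ V)) (hA : ∀ U, Q U → U.Nonempty → ∀ n, H.Acyc n U) (k : ℕ) :
    ∀ (l : List (Set Y)), l.length = k → l ≠ [] → (∀ U ∈ l, Q U) → ∀ n,
      (∀ f : Fin (n+1) → Set Y, (∀ i, f i ∈ l) → ∃ x, ∀ i, x ∈ f i) → H.Acyc n (lU l) := by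
  induction k with
  | zero =>
    intro l hl hne
    exact absurd (List.length_eq_zero_iff.1 hl) hne
  | succ k ih =>
    intro l hl _ hQ n hf
    match l, hl, hQ, hf with
    | B :: l, hl, hQ, hf =>
    have hB : H.Acyc n B := by
      obtain ⟨x, hx⟩ := hf (fun _ => B) (by simp)
      exact hA B (hQ B (by simp)) ⟨x, hx 0⟩ n
    by_cases hnil : l = []
    · subst hnil
      rw [lU_cons, lU_nil, Set.union_empty]
      exact hB
    have hl' : l.length = k := by simpa using hl
    have hQ' : ∀ U ∈ l, Q U := fun U hU => hQ U (by simp [hU])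
    rw [lU_cons]
    refine H.mv n _ _ (hQo B (hQ B (by simp))) (lU_open l fun U hU => hQo U (hQ' U hU)) hB
      (ih l hl' hnil hQ' n (fun f h => hf f fun i => by simp [h i])) ?_
    rintro m rfl
    rw [lU_inter]
    refine ih _ (by simpa using hl') (by simpa using hnil) ?_ m ?_
    · intro U hU
      obtain ⟨V, hV, rfl⟩ := List.mem_map.1 hU
      exact hQi _ _ (hQ B (by simp)) (hQ' V hV)
    · intro f h
      have : ∀ i, ∃ V ∈ l, B ∩ V = f i := fun i => by simpa using h i
      choose g hg hgf using this
      obtain ⟨x, hx⟩ := hf (Fin.cons B g) (fun i => by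
        refine Fin.cases ?_ (fun i => ?_) i
        · simp
        · simp [hg i])
      refine ⟨x, fun i => ?_⟩
      rw [← hgf i]
      exact ⟨by simpa using hx 0, by simpa using hx i.succ⟩

/-- how to obtain splitting from a subdivision operator -/
lemma split_of {M : ℕ → Type} [∀ n, AddCommGroup (M n)] [∀ n, Module ℚ (M n)]
    (d : ∀ n, M (n+1) →ₗ[ℚ] M n) (S : ∀ n, Set Y → Submodule ℚ (M n))
    (dd : ∀ n w, d n (d (n+1) w) = 0)
    (T : ∀ n, M n →ₗ[ℚ] M n) (hTS : ∀ n U z, z ∈ S n U → T n z ∈ S n U)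
    (hdT : ∀ n z, d n (T (n+1) z) = T n (d n z))
    (h1 : ∀ n U, ∀ z ∈ S n U, Cyc d n z → ∃ w ∈ S (n+1) U, z = T n z + d n w)
    (hsm : ∀ n U V, IsOpen U → IsOpen V → ∀ z ∈ S n (U ∪ V), ∃ m : ℕ, ∃ a ∈ S n U, ∃ b ∈ S n V,
      (T n)^[m] z = a + b) :
    ∀ n U V, IsOpen U → IsOpen V → ∀ z ∈ S n (U ∪ V), Cyc d n z →
    ∃ a ∈ S n U, ∃ b ∈ S n V, ∃ w ∈ S (n+1) (U ∪ V), z = a + b + d n w := by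
  intro n U V hU hV z hz cz
  obtain ⟨m, a, ha, b, hb, hab⟩ := hsm n U V hU hV z hz
  have key : ∀ m : ℕ, (T n)^[m] z ∈ S n (U ∪ V) ∧ Cyc d n ((T n)^[m] z) ∧
      ∃ w ∈ S (n+1) (U ∪ V), z = (T n)^[m] z + d n w := by
    intro m
    induction m with
    | zero => exact ⟨hz, cz, 0, Submodule.zero_mem _, by simp⟩
    | succ m ih =>
      obtain ⟨i1, i2, w, hw, i3⟩ := ih
      rw [Function.iterate_succ_apply']
      obtain ⟨w', hw', e'⟩ := h1 n _ _ i1 i2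
      refine ⟨hTS _ _ _ i1, ?_, w' + w, Submodule.add_mem _ hw' hw, ?_⟩
      · cases n with
        | zero => trivial
        | succ n =>
          change d n _ = 0
          rw [hdT, show d n _ = 0 from i2, map_zero]
      · rw [map_add, ← add_assoc, ← e']
        exact i3
  obtain ⟨_, _, w, hw, e⟩ := key m
  exact ⟨a, ha, b, hb, w, hw, by rw [← hab]; exact e⟩

/-! ### Invariant chains -/

/-- `g`-invariant chains over `U` -/
def IS (p : C(X, Y)) (g : C(X, X)) (k : ℕ) (U : Set Y) : Submodule ℚ (Ch X k) :=
  Sp p k U ⊓ LinearMap.ker (cm g k - LinearMap.id)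

lemma mem_IS {p : C(X, Y)} {g : C(X, X)} {k : ℕ} {U : Set Y} {c : Ch X k} :
    c ∈ IS p g k U ↔ c ∈ Sp p k U ∧ cm g k c = c := by
  simp [IS, sub_eq_zero]

lemma Sp_mono (p : C(X, Y)) (k : ℕ) {U V : Set Y} (h : U ⊆ V) : Sp p k U ≤ Sp p k V :=
  Finsupp.supported_mono fun _ hs x => h (hs x)

lemma Sp_inter (p : C(X, Y)) (k : ℕ) {U V : Set Y} {c : Ch X k} (h1 : c ∈ Sp p k U)
    (h2 : c ∈ Sp p k V) : c ∈ Sp p k (U ∩ V) := by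
  have h3 := (Finsupp.supported_inter (M := ℚ) (R := ℚ) _ _).ge (Submodule.mem_inf.2 ⟨h1, h2⟩)
  exact Finsupp.supported_mono (fun s hs x => ⟨hs.1 x, hs.2 x⟩) h3

lemma cd_Sp (p : C(X, Y)) (k : ℕ) {U : Set Y} {c : Ch X (k+1)} (h1 : c ∈ Sp p (k+1) U) :
    cd k c ∈ Sp p k U := by
  refine supp_map _ (fun s hs => ?_) h1
  rw [cd_s]
  exact Submodule.sum_mem _ fun i _ => Submodule.smul_mem _ _ (single_supp fun x => hs _)

lemma cm_Sp (p : C(X, Y)) (k : ℕ) {U : Set Y} {c : Ch X k} (h1 : c ∈ Sp p k U) :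
    cm p k c ∈ Sp (ContinuousMap.id Y) k U := by
  refine supp_map _ (fun s hs => ?_) h1
  rw [cm_s]
  exact single_supp fun x => hs _

lemma Sp_cpt (p : C(X, Y)) (n : ℕ) (F : Set (Set Y)) (hF : ∀ U ∈ F, IsOpen U) (z : Ch X n)
    (hz : z ∈ Sp p n (⋃₀ F)) :
    ∃ l : List (Set Y), (∀ U ∈ l, U ∈ F) ∧ z ∈ Sp p n (lU l) := by
  rw [Sp, Finsupp.supported_eq_span_single] at hz
  induction hz using Submodule.span_induction with
  | mem x hx =>
    obtain ⟨s, hs, rfl⟩ := hx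
    have hc : IsCompact (Set.range fun x => p (s x)) := isCompact_range (by fun_prop)
    obtain ⟨t, ht⟩ := hc.elim_finite_subcover (fun U : F => U.1) (fun U => hF U.1 U.2) (by
      rintro _ ⟨x, rfl⟩
      obtain ⟨U, hU, hx⟩ := hs x
      exact Set.mem_iUnion.2 ⟨⟨U, hU⟩, hx⟩)
    refine ⟨t.toList.map Subtype.val, ?_, single_supp fun x => ?_⟩
    · intro U hU
      obtain ⟨V, _, rfl⟩ := List.mem_map.1 hU
      exact V.2
    · have := ht ⟨x, rfl⟩
      simp only [Set.mem_iUnion] at this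
      obtain ⟨V, hV, hx⟩ := this
      exact ⟨V.1, List.mem_map.2 ⟨V, by simpa using hV, rfl⟩, hx⟩
  | zero => exact ⟨[], by simp, Submodule.zero_mem _⟩
  | add x y _ _ hx hy =>
    obtain ⟨l1, h1, e1⟩ := hx
    obtain ⟨l2, h2, e2⟩ := hy
    refine ⟨l1 ++ l2, ?_, Submodule.add_mem _ (Sp_mono _ _ ?_ e1) (Sp_mono _ _ ?_ e2)⟩
    · intro U hU
      rcases List.mem_append.1 hU with h | h
      · exact h1 U h
      · exact h2 U h
    · rintro x ⟨U, hU, hx⟩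
      exact ⟨U, List.mem_append.2 (Or.inl hU), hx⟩
    · rintro x ⟨U, hU, hx⟩
      exact ⟨U, List.mem_append.2 (Or.inr hU), hx⟩
  | smul a x _ hx =>
    obtain ⟨l1, h1, e1⟩ := hx
    exact ⟨l1, h1, Submodule.smul_mem _ _ e1⟩

open Classical in
/-- restriction of chains to simplices over `U` -/
def Fl (p : C(X, Y)) (k : ℕ) (U : Set Y) : Ch X k →ₗ[ℚ] Ch X k :=
  Finsupp.linearCombination ℚ (fun s => if ∀ x, p (s x) ∈ U then Cs s else 0)

open Classical in
lemma Fl_s (p : C(X, Y)) (k : ℕ) (U : Set Y) (s : C(Spx k, X)) :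
    Fl p k U (Cs s) = if ∀ x, p (s x) ∈ U then Cs s else 0 := by
  simp [Fl]

lemma decomp (p : C(X, Y)) (g : C(X, X)) (hg : ∀ x, p (g x) = p x) (k : ℕ) (U V : Set Y)
    (c : Ch X k) (hc : cm g k c = c) (hs : c ∈
      Finsupp.supported ℚ ℚ {t : C(Spx k, X) | (∀ x, p (t x) ∈ U) ∨ (∀ x, p (t x) ∈ V)}) :
    ∃ a ∈ IS p g k U, ∃ b ∈ IS p g k V, c = a + b := by
  have hcomm : cm g k (Fl p k U c) = Fl p k U c := by
    have h : cm g k ∘ₗ Fl p k U = Fl p k U ∘ₗ cm g k := by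
      apply C_ext
      intro s
      have hiff : (∀ x, p ((g.comp s) x) ∈ U) ↔ ∀ x, p (s x) ∈ U := by simp [hg]
      rw [LinearMap.comp_apply, LinearMap.comp_apply, cm_s, Fl_s, Fl_s]
      by_cases h : ∀ x, p (s x) ∈ U
      · rw [if_pos h, if_pos (hiff.2 h), cm_s]
      · rw [if_neg h, if_neg (fun h' => h (hiff.1 h')), map_zero]
    have := LinearMap.congr_fun h c
    simpa [hc] using this
  refine ⟨Fl p k U c, mem_IS.2 ⟨?_, hcomm⟩, c - Fl p k U c, mem_IS.2 ⟨?_, ?_⟩, by abel⟩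
  · refine supp_map _ (fun s _ => ?_) hs
    rw [Fl_s]
    split_ifs with h
    · exact single_supp h
    · exact Submodule.zero_mem _
  · refine supp_map (LinearMap.id - Fl p k U) (fun s h' => ?_) hs
    rw [LinearMap.sub_apply, Fl_s]
    split_ifs with h
    · simp
    · rw [sub_zero, LinearMap.id_apply]
      exact single_supp (S := {s : C(Spx k, X) | ∀ x, p (s x) ∈ V}) (h'.resolve_left h)
  · rw [map_sub, hc, hcomm]

lemma Sd_IS (p : C(X, Y)) (g : C(X, X)) (k : ℕ) (U : Set Y) (c : Ch X k) (hc : c ∈ IS p g k U) :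
    Sd k c ∈ IS p g k U := by
  rw [mem_IS] at hc ⊢
  exact ⟨op_Sp _ _ _ hc.1, by rw [Sd, cm_op, hc.2]⟩

lemma Td_IS (p : C(X, Y)) (g : C(X, X)) (k : ℕ) (U : Set Y) (c : Ch X k) (hc : c ∈ IS p g k U) :
    Td k c ∈ IS p g (k+1) U := by
  rw [mem_IS] at hc ⊢
  exact ⟨op_Sp _ _ _ hc.1, by rw [Td, cm_op, hc.2]⟩

lemma cd_IS (p : C(X, Y)) (g : C(X, X)) (k : ℕ) (U : Set Y) (c : Ch X (k+1))
    (hc : c ∈ IS p g (k+1) U) : cd k c ∈ IS p g k U := by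
  rw [mem_IS] at hc ⊢
  exact ⟨cd_Sp _ _ hc.1, by rw [← cd_cm, hc.2]⟩

lemma IS_small (p : C(X, Y)) (g : C(X, X)) (hg : ∀ x, p (g x) = p x) (n : ℕ) (U V : Set Y)
    (hU : IsOpen U) (hV : IsOpen V) (z : Ch X n) (hz : z ∈ IS p g n (U ∪ V)) :
    ∃ m₀ : ℕ, ∀ m ≥ m₀, ∃ a ∈ IS p g n U, ∃ b ∈ IS p g n V, (Sd n)^[m] z = a + b := by
  obtain ⟨m₀, h⟩ := small_all p U V hU hV z (mem_IS.1 hz).1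
  refine ⟨m₀, fun m hm => decomp p g hg n U V _ ?_ (h m hm)⟩
  rw [Sd_iter, cm_op, (mem_IS.1 hz).2]

lemma Td_zero (c : Ch X 0) : Td 0 c = 0 := by
  have : Td (X := X) 0 = 0 := by
    apply C_ext; intro s; simp [Td, Hrec]
  rw [this]; rfl

/-- the augmented complex of invariant chains -/
def Red (p : C(X, Y)) (g : C(X, X)) (hg : ∀ x, p (g x) = p x) : HT Y where
  M := Ch X
  d := cd
  S := IS p g
  dd := cd_cd
  d_mem := cd_IS p g
  mono n U V h z hz := mem_IS.2 ⟨Sp_mono p n h (mem_IS.1 hz).1, (mem_IS.1 hz).2⟩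
  inter n U V z h1 h2 := mem_IS.2 ⟨Sp_inter p n (mem_IS.1 h1).1 (mem_IS.1 h2).1, (mem_IS.1 h1).2⟩
  split := by
    refine split_of cd (IS p g) cd_cd Sd (Sd_IS p g) cd_Sd ?_ ?_
    · intro n U z hz cz
      cases n with
      | zero => exact ⟨0, Submodule.zero_mem _, by simp [Sd_zero]⟩
      | succ n =>
        refine ⟨Td (n+1) z, Td_IS _ _ _ _ _ hz, ?_⟩
        rw [cd_Td, show cd n z = 0 from cz, map_zero]
        abel
    · intro n U V hU hV z hz
      obtain ⟨m, h⟩ := IS_small p g hg n U V hU hV z hz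
      exact ⟨m, h m le_rfl⟩
  cpt n F hF z hz := by
    obtain ⟨l, h1, h2⟩ := Sp_cpt p n F hF z (mem_IS.1 hz).1
    exact ⟨l, h1, mem_IS.2 ⟨h2, (mem_IS.1 hz).2⟩⟩

/-- concrete form of acyclicity for invariant chains -/
def RA (p : C(X, Y)) (g : C(X, X)) (n : ℕ) (U : Set Y) : Prop :=
  ∀ z ∈ IS p g n U, Cyc cd n z → ∃ w ∈ IS p g (n+1) U, cd n w = z

lemma RA_iff (p : C(X, Y)) (g : C(X, X)) (hg : ∀ x, p (g x) = p x) (n : ℕ) (U : Set Y) :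
    (Red p g hg).Acyc n U ↔ RA p g n U := Iff.rfl

/-! ### The cone of the projection -/

/-- cone differential -/
def coneD (p : C(X, Y)) : ∀ n, (Ch X (n+1-1) × Ch Y (n+1)) →ₗ[ℚ] (Ch X (n-1) × Ch Y n)
  | 0 => LinearMap.prod 0 (cm p 0 ∘ₗ LinearMap.fst ℚ (Ch X 0) (Ch Y 1) -
      cd 0 ∘ₗ LinearMap.snd ℚ (Ch X 0) (Ch Y 1))
  | n+1 => LinearMap.prod (cd n ∘ₗ LinearMap.fst ℚ (Ch X (n+1)) (Ch Y (n+2)))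
      (cm p (n+1) ∘ₗ LinearMap.fst ℚ (Ch X (n+1)) (Ch Y (n+2)) -
      cd (n+1) ∘ₗ LinearMap.snd ℚ (Ch X (n+1)) (Ch Y (n+2)))

lemma coneD_zero (p : C(X, Y)) (x : Ch X 0) (y : Ch Y 1) :
    coneD p 0 (x, y) = (0, cm p 0 x - cd 0 y) := rfl

lemma coneD_succ (p : C(X, Y)) (n : ℕ) (x : Ch X (n+1)) (y : Ch Y (n+2)) :
    coneD p (n+1) (x, y) = (cd n x, cm p (n+1) x - cd (n+1) y) := rfl

/-- invariant chains in the cone over `U` -/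
def coneS (p : C(X, Y)) (g : C(X, X)) : ∀ n, Set Y → Submodule ℚ (Ch X (n-1) × Ch Y n)
  | 0, U => Submodule.prod ⊥ (IS (ContinuousMap.id Y) (ContinuousMap.id Y) 0 U)
  | n+1, U => Submodule.prod (IS p g n U) (IS (ContinuousMap.id Y) (ContinuousMap.id Y) (n+1) U)

lemma mem_coneS_zero (p : C(X, Y)) (g : C(X, X)) (U : Set Y) (x : Ch X 0) (y : Ch Y 0) :
    (x, y) ∈ coneS p g 0 U ↔ x = 0 ∧ y ∈ IS (ContinuousMap.id Y) (ContinuousMap.id Y) 0 U := by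
  change _ ∈ Submodule.prod _ _ ↔ _
  rw [Submodule.mem_prod, Submodule.mem_bot]

lemma mem_coneS_succ (p : C(X, Y)) (g : C(X, X)) (U : Set Y) (n : ℕ) (x : Ch X n)
    (y : Ch Y (n+1)) : (x, y) ∈ coneS p g (n+1) U ↔
      x ∈ IS p g n U ∧ y ∈ IS (ContinuousMap.id Y) (ContinuousMap.id Y) (n+1) U :=
  Submodule.mem_prod

lemma cm_IS (p : C(X, Y)) (g : C(X, X)) (k : ℕ) (U : Set Y) (c : Ch X k)
    (hc : c ∈ IS p g k U) : cm p k c ∈ IS (ContinuousMap.id Y) (ContinuousMap.id Y) k U := by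
  rw [mem_IS] at hc ⊢
  exact ⟨cm_Sp _ _ hc.1, cm_id _ _⟩

lemma prodMap_iter {A B : Type} [AddCommGroup A] [Module ℚ A] [AddCommGroup B] [Module ℚ B]
    (f : A →ₗ[ℚ] A) (g : B →ₗ[ℚ] B) (m : ℕ) (x : A) (y : B) :
    (f.prodMap g)^[m] (x, y) = (f^[m] x, g^[m] y) := by
  induction m with
  | zero => rfl
  | succ m ih => rw [Function.iterate_succ_apply', ih, Function.iterate_succ_apply',
      Function.iterate_succ_apply', LinearMap.prodMap_apply]

lemma cm_Sd (p : C(X, Y)) (n : ℕ) (x : Ch X n) : cm p n (Sd n x) = Sd n (cm p n x) := by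
  rw [Sd, cm_op]; rfl

lemma cm_Td (p : C(X, Y)) (n : ℕ) (x : Ch X n) : cm p (n+1) (Td n x) = Td n (cm p n x) := by
  rw [Td, cm_op]; rfl

lemma cone_step (p : C(X, Y)) (n : ℕ) (x : Ch X n) (y : Ch Y (n+1))
    (cz : coneD p n (x, y) = 0) : cd n (Td n x) = x - Sd n x ∧ cm p n x = cd n y := by
  cases n with
  | zero =>
    have cz' : ((0 : Ch X 0), cm p 0 x - cd 0 y) = 0 := cz
    rw [Prod.mk_eq_zero, sub_eq_zero] at cz'
    refine ⟨?_, cz'.2⟩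
    rw [Td_zero, Sd_zero, map_zero, sub_self]
  | succ n =>
    have cz' : (cd n x, cm p (n+1) x - cd (n+1) y) = 0 := cz
    rw [Prod.mk_eq_zero, sub_eq_zero] at cz'
    refine ⟨?_, cz'.2⟩
    rw [cd_Td, cz'.1, map_zero, sub_zero]

lemma cone_step' (p : C(X, Y)) (n : ℕ) (x : Ch X n) (y : Ch Y (n+1))
    (hx : cd n (Td n x) = x - Sd n x ∧ cm p n x = cd n y) :
    (x, y) = (Sd n x, Sd (n+1) y) +
          (cd n (Td n x), cm p (n+1) (Td n x) - cd (n+1) (-Td (n+1) y)) := by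
  rw [map_neg, cd_Td, hx.1, cm_Td, hx.2, Prod.mk_add_mk]
  congr 1 <;> abel

/-- The cone as a theory -/
def Cone (p : C(X, Y)) (g : C(X, X)) (hg : ∀ x, p (g x) = p x) : HT Y where
  M n := Ch X (n-1) × Ch Y n
  d := coneD p
  S := coneS p g
  dd n := by
    rintro ⟨x, y⟩
    cases n with
    | zero =>
      change coneD p 0 (cd 0 x, cm p 1 x - cd 1 y) = 0
      rw [coneD_zero, map_sub, cd_cd, cd_cm]
      simp
    | succ n =>
      change coneD p (n+1) (cd (n+1) x, cm p (n+2) x - cd (n+2) y) = 0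
      rw [coneD_succ, map_sub, cd_cd, cd_cd, cd_cm]
      simp
  d_mem n U := by
    rintro ⟨x, y⟩ h
    obtain ⟨h1, h2⟩ := (mem_coneS_succ p g U n x y).1 h
    cases n with
    | zero =>
      exact (mem_coneS_zero p g U _ _).2 ⟨rfl, Submodule.sub_mem _ (cm_IS p g _ _ _ h1)
        (cd_IS _ _ _ _ _ h2)⟩
    | succ n =>
      exact (mem_coneS_succ p g U n _ _).2 ⟨cd_IS _ _ _ _ _ h1,
        Submodule.sub_mem _ (cm_IS p g _ _ _ h1) (cd_IS _ _ _ _ _ h2)⟩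
  mono n U V h := by
    rintro ⟨x, y⟩ hz
    cases n with
    | zero =>
      obtain ⟨h1, h2⟩ := (mem_coneS_zero p g U x y).1 hz
      exact (mem_coneS_zero p g V x y).2 ⟨h1, (Red _ _ (fun _ => rfl)).mono 0 U V h h2⟩
    | succ n =>
      obtain ⟨h1, h2⟩ := (mem_coneS_succ p g U n x y).1 hz
      exact (mem_coneS_succ p g V n x y).2 ⟨(Red p g hg).mono n U V h h1,
        (Red _ _ (fun _ => rfl)).mono (n+1) U V h h2⟩
  inter n U V := by
    rintro ⟨x, y⟩ hz hz'
    cases n with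
    | zero =>
      obtain ⟨h1, h2⟩ := (mem_coneS_zero p g U x y).1 hz
      obtain ⟨h1', h2'⟩ := (mem_coneS_zero p g V x y).1 hz'
      exact (mem_coneS_zero p g _ x y).2 ⟨h1, (Red _ _ (fun _ => rfl)).inter 0 U V y h2 h2'⟩
    | succ n =>
      obtain ⟨h1, h2⟩ := (mem_coneS_succ p g U n x y).1 hz
      obtain ⟨h1', h2'⟩ := (mem_coneS_succ p g V n x y).1 hz'
      exact (mem_coneS_succ p g _ n x y).2 ⟨(Red p g hg).inter n U V x h1 h1',
        (Red _ _ (fun _ => rfl)).inter (n+1) U V y h2 h2'⟩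
  split := by
    refine split_of (M := fun n => Ch X (n-1) × Ch Y n) (coneD p) (coneS p g) ?_
      (fun n => (Sd (n-1)).prodMap (Sd n)) ?_ ?_ ?_ ?_
    · intro n
      rintro ⟨x, y⟩
      cases n with
      | zero =>
        change coneD p 0 (cd 0 x, cm p 1 x - cd 1 y) = 0
        rw [coneD_zero, map_sub, cd_cd, cd_cm]
        simp
      | succ n =>
        change coneD p (n+1) (cd (n+1) x, cm p (n+2) x - cd (n+2) y) = 0
        rw [coneD_succ, map_sub, cd_cd, cd_cd, cd_cm]
        simp
    · intro n U
      rintro ⟨x, y⟩ hz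
      cases n with
      | zero =>
        obtain ⟨rfl, h2⟩ := (mem_coneS_zero p g U x y).1 hz
        exact (mem_coneS_zero p g U (Sd 0 (0 : Ch X 0)) (Sd 0 y)).2
          ⟨show Sd 0 (0 : Ch X 0) = 0 from map_zero _, Sd_IS _ _ _ _ _ h2⟩
      | succ n =>
        obtain ⟨h1, h2⟩ := (mem_coneS_succ p g U n x y).1 hz
        exact (mem_coneS_succ p g U n _ _).2 ⟨Sd_IS _ _ _ _ _ h1, Sd_IS _ _ _ _ _ h2⟩
    · intro n
      rintro ⟨x, y⟩
      cases n with
      | zero =>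
        change ((0 : Ch X 0), cm p 0 (Sd 0 x) - cd 0 (Sd 1 y)) =
          (Sd 0 (0 : Ch X 0), Sd 0 (cm p 0 x - cd 0 y))
        rw [map_sub, cd_Sd, map_zero, cm_Sd]
      | succ n =>
        change (cd n (Sd (n+1) x), cm p (n+1) (Sd (n+1) x) - cd (n+1) (Sd (n+2) y)) =
          (Sd n (cd n x), Sd (n+1) (cm p (n+1) x - cd (n+1) y))
        rw [map_sub, cd_Sd, cd_Sd, cm_Sd]
    · intro n U
      rintro ⟨x, y⟩ hz cz
      cases n with
      | zero =>
        obtain ⟨rfl, h2⟩ := (mem_coneS_zero p g U x y).1 hz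
        refine ⟨0, Submodule.zero_mem _, ?_⟩
        rw [map_zero, add_zero]
        change ((0 : Ch X 0), y) = (Sd 0 (0 : Ch X 0), Sd 0 y)
        rw [map_zero, Sd_zero]
      | succ n =>
        obtain ⟨h1, h2⟩ := (mem_coneS_succ p g U n x y).1 hz
        have hx := cone_step p n x y cz
        refine ⟨(Td n x, - Td (n+1) y), (mem_coneS_succ p g U (n+1) _ _).2
          ⟨Td_IS _ _ _ _ _ h1, Submodule.neg_mem _ (Td_IS _ _ _ _ _ h2)⟩, ?_⟩
        exact cone_step' p n x y hx
    · intro n U V hU hV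
      rintro ⟨x, y⟩ hz
      cases n with
      | zero =>
        obtain ⟨rfl, h2⟩ := (mem_coneS_zero p g _ x y).1 hz
        obtain ⟨m, h⟩ := IS_small _ _ (fun _ => rfl) 0 U V hU hV y h2
        obtain ⟨a, ha, b, hb, e⟩ := h m le_rfl
        refine ⟨m, (0, a), (mem_coneS_zero p g _ _ _).2 ⟨rfl, ha⟩, (0, b),
          (mem_coneS_zero p g _ _ _).2 ⟨rfl, hb⟩, ?_⟩
        rw [prodMap_iter, e, Prod.mk_add_mk, add_zero]
        congr 1
        exact Function.iterate_fixed (show Sd 0 (0 : Ch X 0) = 0 from map_zero _) m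
      | succ n =>
        obtain ⟨h1, h2⟩ := (mem_coneS_succ p g _ n x y).1 hz
        obtain ⟨m, h⟩ := IS_small _ _ (fun _ => rfl) (n+1) U V hU hV y h2
        obtain ⟨m', h'⟩ := IS_small p g hg n U V hU hV x h1
        obtain ⟨a, ha, b, hb, e⟩ := h (max m m') (le_max_left _ _)
        obtain ⟨a', ha', b', hb', e'⟩ := h' (max m m') (le_max_right _ _)
        refine ⟨max m m', (a', a), (mem_coneS_succ p g _ _ _ _).2 ⟨ha', ha⟩, (b', b),
          (mem_coneS_succ p g _ _ _ _).2 ⟨hb', hb⟩, ?_⟩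
        rw [prodMap_iter, e, Prod.mk_add_mk]
        congr 1
  cpt n F hF := by
    rintro ⟨x, y⟩ hz
    cases n with
    | zero =>
      obtain ⟨h1, h2⟩ := (mem_coneS_zero p g _ x y).1 hz
      obtain ⟨l, hl, hl'⟩ := (Red _ _ (fun _ => rfl)).cpt 0 F hF y h2
      exact ⟨l, hl, (mem_coneS_zero p g _ _ _).2 ⟨h1, hl'⟩⟩
    | succ n =>
      obtain ⟨h1, h2⟩ := (mem_coneS_succ p g _ n x y).1 hz
      obtain ⟨l1, h1, e1⟩ := (Red p g hg).cpt n F hF x h1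
      obtain ⟨l2, h2, e2⟩ := (Red _ _ (fun _ => rfl)).cpt (n+1) F hF y h2
      refine ⟨l1 ++ l2, ?_, (mem_coneS_succ p g _ _ _ _).2
        ⟨(Red p g hg).mono n _ _ ?_ e1, (Red _ _ (fun _ => rfl)).mono (n+1) _ _ ?_ e2⟩⟩
      · intro U hU
        rcases List.mem_append.1 hU with h | h
        · exact h1 U h
        · exact h2 U h
      · rintro x ⟨U, hU, hx⟩
        exact ⟨U, List.mem_append.2 (Or.inl hU), hx⟩
      · rintro x ⟨U, hU, hx⟩
        exact ⟨U, List.mem_append.2 (Or.inr hU), hx⟩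

lemma cone_acyc' (p : C(X, Y)) (g : C(X, X)) (U : Set Y) {n : ℕ}
    (hX : RA p g n U) (hY : RA (ContinuousMap.id Y) (ContinuousMap.id Y) (n+1) U)
    (x : Ch X n) (y : Ch Y (n+1)) (h1 : x ∈ IS p g n U)
    (h2 : y ∈ IS (ContinuousMap.id Y) (ContinuousMap.id Y) (n+1) U) (cz : coneD p n (x, y) = 0) :
    ∃ w ∈ coneS p g (n+2) U, coneD p (n+1) w = (x, y) := by
  have hc : cm p n x = cd n y := (cone_step p n x y cz).2
  have hx : Cyc cd n x := by
    cases n with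
    | zero => trivial
    | succ n =>
      have cz' : (cd n x, cm p (n+1) x - cd (n+1) y) = 0 := cz
      exact (Prod.mk_eq_zero.1 cz').1
  obtain ⟨a, ha, ha'⟩ := hX x h1 hx
  obtain ⟨b, hb, hb'⟩ := hY (cm p (n+1) a - y) (Submodule.sub_mem _ (cm_IS p g _ _ _ ha) h2) (by
    change cd n (cm p (n+1) a - y) = 0
    rw [map_sub, cd_cm, ha', hc, sub_self])
  refine ⟨(a, b), (mem_coneS_succ p g U (n+1) _ _).2 ⟨ha, hb⟩, ?_⟩
  rw [coneD_succ, ha', hb', sub_sub_cancel]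

lemma Spx0_elim (x : Spx 0) : False := by
  have := x.2.2
  simp at this

instance : IsEmpty (Spx 0) := ⟨Spx0_elim⟩

instance : Unique C(Spx 0, X) where
  default := ⟨fun x => isEmptyElim x, continuous_of_const fun x => isEmptyElim x⟩
  uniq s := by ext x; exact isEmptyElim x

instance (k : ℕ) : Nonempty (Spx (k+1)) := ⟨vert 0⟩

lemma Ch_zero_eq (x : Ch X 0) : x = x default • Cs default := by
  rw [Finsupp.smul_single, smul_eq_mul, mul_one]
  exact Finsupp.unique_single x

lemma Sp_zero (p : C(X, Y)) (U : Set Y) (x : Ch X 0) : x ∈ Sp p 0 U := by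
  rw [Ch_zero_eq x]
  exact Submodule.smul_mem _ _ (single_supp (fun t => isEmptyElim t))

lemma cm_zero_eq (p : C(X, Y)) (x : Ch X 0) (y : Ch Y 0) :
    cm p 0 x = y ↔ x default = y default := by
  rw [Ch_zero_eq x, Ch_zero_eq y, map_smul, cm_s, Unique.eq_default (p.comp default)]
  simp [Finsupp.single_injective _ |>.eq_iff]

lemma IS_zero (p : C(X, Y)) (g : C(X, X)) (U : Set Y) (x : Ch X 0) : x ∈ IS p g 0 U :=
  mem_IS.2 ⟨Sp_zero _ _ _, (cm_zero_eq _ _ _).2 rfl⟩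

lemma Sp_empty (p : C(X, Y)) (k : ℕ) (x : Ch X (k+1)) (h : x ∈ Sp p (k+1) ∅) : x = 0 := by
  rw [Sp] at h
  have : {s : C(Spx (k+1), X) | ∀ x, p (s x) ∈ (∅ : Set Y)} = ∅ := by
    ext s; simp
  rw [this, Finsupp.supported_empty] at h
  simpa using h

lemma cone_empty (p : C(X, Y)) (g : C(X, X)) (hg : ∀ x, p (g x) = p x) (n : ℕ) :
    (Cone p g hg).Acyc n ∅ := by
  match n with
  | 0 =>
    rintro ⟨x, y⟩ hz -
    obtain ⟨hx, h2⟩ := (mem_coneS_zero p g ∅ x y).1 hz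
    refine ⟨((y default • Cs default : Ch X 0), 0), (mem_coneS_succ p g ∅ 0 _ _).2
      ⟨IS_zero _ _ _ _, Submodule.zero_mem _⟩, ?_⟩
    change ((0 : Ch X 0), cm p 0 (y default • Cs default) - cd 0 0) = (x, y)
    rw [(cm_zero_eq p (y default • Cs default) y).2 (by simp), map_zero, hx, sub_zero]
  | 1 =>
    rintro ⟨x, y⟩ hz cz
    obtain ⟨h1, h2⟩ := (mem_coneS_succ p g ∅ 0 x y).1 hz
    have hy : y = 0 := Sp_empty _ _ _ (mem_IS.1 h2).1
    have hc : cm p 0 x = cd 0 y := (cone_step p 0 x y cz).2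
    rw [hy, map_zero, cm_zero_eq] at hc
    have hx : x = 0 := by
      rw [Ch_zero_eq x, hc]; simp
    refine ⟨0, Submodule.zero_mem _, ?_⟩
    rw [map_zero, hx, hy]
    rfl
  | n+2 =>
    rintro ⟨x, y⟩ hz cz
    obtain ⟨h1, h2⟩ := (mem_coneS_succ p g ∅ (n+1) x y).1 hz
    have hy : y = 0 := Sp_empty _ _ _ (mem_IS.1 h2).1
    have hx : x = 0 := Sp_empty _ _ _ (mem_IS.1 h1).1
    refine ⟨0, Submodule.zero_mem _, ?_⟩
    rw [map_zero, hx, hy]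
    rfl

lemma cone_acyc (p : C(X, Y)) (g : C(X, X)) (hg : ∀ x, p (g x) = p x) (U : Set Y)
    (hX : ∀ n, RA p g n U) (hY : ∀ n, RA (ContinuousMap.id Y) (ContinuousMap.id Y) n U) (n : ℕ) :
    (Cone p g hg).Acyc n U := by
  cases n with
  | zero =>
    rintro ⟨x, y⟩ hz -
    obtain ⟨hx, h2⟩ := (mem_coneS_zero p g U x y).1 hz
    obtain ⟨y', h3, h4⟩ := hY 0 y h2 trivial
    refine ⟨((0 : Ch X 0), -y'), (mem_coneS_succ p g U 0 _ _).2
      ⟨Submodule.zero_mem _, Submodule.neg_mem _ h3⟩, ?_⟩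
    change ((0 : Ch X 0), cm p 0 (0 : Ch X 0) - cd 0 (-y')) = (x, y)
    rw [map_zero, map_neg, h4, hx, zero_sub, neg_neg]
  | succ n =>
    rintro ⟨x, y⟩ hz cz
    obtain ⟨h1, h2⟩ := (mem_coneS_succ p g U n x y).1 hz
    exact cone_acyc' p g U (hX n) (hY (n+1)) x y h1 h2 cz

end P10
end

section
namespace P10
set_option linter.unusedSectionVars false
set_option linter.unusedVariables false

variable {X Y W : Type} [TopologicalSpace X] [TopologicalSpace Y] [TopologicalSpace W]

/-! ### Homotopy invariance -/

/-- realization of affine chains in the prism -/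
def rzP {n : ℕ} (H : C(X × Spx 2, X)) (s : C(Spx n, X)) (k : ℕ) :
    L (Spx n × Spx 2) k →ₗ[ℚ] Ch X k :=
  Finsupp.lmapDomain ℚ ℚ (fun v => H.comp ((s.comp (aff (Prod.fst ∘ v))).prodMk (aff (Prod.snd ∘ v))))

@[simp] lemma rzP_s {n : ℕ} (H : C(X × Spx 2, X)) (s : C(Spx n, X)) (k : ℕ)
    (v : Fin k → Spx n × Spx 2) : rzP H s k (Ls v) =
      Cs (H.comp ((s.comp (aff (Prod.fst ∘ v))).prodMk (aff (Prod.snd ∘ v)))) := by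
  simp [rzP]

lemma aff_fc_apply {k n : ℕ} (v : Fin (k+1) → Spx n) (i : Fin (k+1)) (x : Spx k) :
    aff v (fc i x) = aff (v ∘ i.succAbove) x := by
  rw [← aff_fc]; rfl

lemma cd_rzP {n : ℕ} (H : C(X × Spx 2, X)) (s : C(Spx n, X)) (k : ℕ)
    (a : L (Spx n × Spx 2) (k+1)) :
    cd k (rzP H s (k+1) a) = rzP H s k (Ld k a) := by
  suffices h : cd k ∘ₗ rzP H s (k+1) = rzP H s k ∘ₗ Ld k by
    simpa using LinearMap.congr_fun h a
  apply L_ext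
  intro v
  simp only [LinearMap.comp_apply, rzP_s, cd_s, Ld_s, map_sum, map_smul]
  refine Finset.sum_congr rfl fun i _ => ?_
  congr 2
  ext x
  simp [aff_fc_apply, Function.comp_assoc]

lemma rzP_aff {n m : ℕ} (H : C(X × Spx 2, X)) (s : C(Spx m, X)) (u : Fin n → Spx m) (k : ℕ)
    (a : L (Spx n × Spx 2) k) :
    rzP H (s.comp (aff u)) k a = rzP H s k (Lm (Prod.map (aff u) id) k a) := by
  suffices h : rzP H (s.comp (aff u)) k = rzP H s k ∘ₗ Lm (Prod.map (aff u) id) k by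
    simpa using LinearMap.congr_fun h a
  apply L_ext
  intro v
  simp only [LinearMap.comp_apply, rzP_s, Lm_s]
  congr 1
  ext x
  change H (s (aff u (aff (Prod.fst ∘ v) x)), aff (Prod.snd ∘ v) x) = _
  rw [aff_aff]
  rfl

/-- end inclusions of the prism -/
def pi2 (n : ℕ) (k : ℕ) : L (Spx n) k →ₗ[ℚ] L (Spx n × Spx 2) k :=
  Lm (fun x => (x, vert 0)) k - Lm (fun x => (x, vert 1)) k

/-- affine prism operator -/
def pr (n : ℕ) (k : ℕ) : L (Spx n) k →ₗ[ℚ] L (Spx n × Spx 2) (k+1) :=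
  Hrec (pi2 n) (fun k v => (v 0, vert 0)) k

lemma pi2_zero (n : ℕ) : pi2 n 0 = 0 := by
  apply L_ext
  intro v
  rw [pi2, LinearMap.sub_apply, Lm_s, Lm_s, LinearMap.zero_apply, sub_eq_zero]
  congr 1
  funext i
  exact i.elim0

lemma Lm_Lm {A B C : Type} (f : A → B) (g : B → C) (k : ℕ) (c : L A k) :
    Lm g k (Lm f k c) = Lm (g ∘ f) k c := by
  suffices h : Lm g k ∘ₗ Lm f k = Lm (g ∘ f) k by
    simpa using LinearMap.congr_fun h c
  apply L_ext; intro v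
  simp only [LinearMap.comp_apply, Lm_s]
  rfl

lemma pr_aff {n m : ℕ} (u : Fin n → Spx m) (k : ℕ) (c : L (Spx n) k) :
    Lm (Prod.map (aff u) id) (k+1) (pr n k c) = pr m k (Lm (aff u) k c) := by
  refine Hrec_nat _ _ _ _ _ _ (fun k c => ?_) (fun k v => rfl) k c
  rw [pi2, pi2, LinearMap.sub_apply, LinearMap.sub_apply, map_sub, Lm_Lm, Lm_Lm, Lm_Lm, Lm_Lm]
  rfl

/-- prism operator -/
def PH (H : C(X × Spx 2, X)) (n : ℕ) : Ch X n →ₗ[ℚ] Ch X (n+1) :=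
  Finsupp.linearCombination ℚ (fun s => rzP H s (n+1) (pr n n (Ls vert)))

@[simp] lemma PH_s (H : C(X × Spx 2, X)) (n : ℕ) (s : C(Spx n, X)) :
    PH H n (Cs s) = rzP H s (n+1) (pr n n (Ls vert)) := by
  simp [PH]

lemma PH_zero (H : C(X × Spx 2, X)) (c : Ch X 0) : PH H 0 c = 0 := by
  suffices h : PH H 0 = 0 by rw [h]; rfl
  apply C_ext; intro s
  simp [pr, Hrec]

/-- ends of the homotopy -/
def hEnd (H : C(X × Spx 2, X)) (i : Fin 2) : C(X, X) :=
  H.comp ((ContinuousMap.id X).prodMk (ContinuousMap.const X (vert i)))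

lemma aff_const {k n : ℕ} (b : Spx n) (x : Spx k) : aff (fun _ => b) x = b := by
  apply Subtype.ext
  funext j
  rw [aff_apply, ← Finset.sum_mul, x.2.2, one_mul]

lemma rzP_end (H : C(X × Spx 2, X)) (n : ℕ) (s : C(Spx n, X)) (i : Fin 2) :
    rzP H s n (Lm (fun x => (x, vert i)) n (Ls vert)) = Cs ((hEnd H i).comp s) := by
  rw [Lm_s, rzP_s]
  congr 1
  ext x
  have h1 : (aff (Prod.snd ∘ (fun x : Spx n => (x, vert i)) ∘ vert)) x = (vert i : Spx 2) :=
    aff_const _ _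
  have h2 : (aff (Prod.fst ∘ (fun x : Spx n => (x, (vert i : Spx 2))) ∘ vert)) x = x :=
    aff_vert_id _
  change H (s (aff (Prod.fst ∘ (fun x : Spx n => (x, (vert i : Spx 2))) ∘ vert) x),
    aff (Prod.snd ∘ (fun x : Spx n => (x, vert i)) ∘ vert) x) = H (s x, vert i)
  rw [h1, h2]

lemma cd_PH (H : C(X × Spx 2, X)) (n : ℕ) (c : Ch X (n+1)) :
    cd (n+1) (PH H (n+1) c) = cm (hEnd H 0) (n+1) c - cm (hEnd H 1) (n+1) c - PH H n (cd n c) := by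
  suffices h : cd (n+1) ∘ₗ PH H (n+1) = cm (hEnd H 0) (n+1) - cm (hEnd H 1) (n+1)
      - PH H n ∘ₗ cd n by
    simpa using LinearMap.congr_fun h c
  apply C_ext; intro s
  simp only [LinearMap.comp_apply, LinearMap.sub_apply, PH_s, cd_rzP, cm_s]
  rw [pr, Hrec_spec _ _ (pi2_zero _), map_sub]
  · congr 1
    · rw [pi2, LinearMap.sub_apply, map_sub, rzP_end, rzP_end]
    · rw [Ld_vert, cd_s, map_sum, map_sum, map_sum]
      refine Finset.sum_congr rfl fun i _ => ?_
      rw [map_smul, map_smul, map_smul, PH_s, fc, rzP_aff, pr_aff]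
      rfl
  · intro k c
    rw [pi2, pi2, LinearMap.sub_apply, LinearMap.sub_apply, map_sub, Ld_Lm, Ld_Lm]

lemma cm_PH (H : C(X × Spx 2, X)) (g : C(X, X)) (hH : ∀ x t, H (g x, t) = g (H (x, t))) (n : ℕ)
    (c : Ch X n) : cm g (n+1) (PH H n c) = PH H n (cm g n c) := by
  suffices h : cm g (n+1) ∘ₗ PH H n = PH H n ∘ₗ cm g n by
    simpa using LinearMap.congr_fun h c
  apply C_ext; intro s
  simp only [LinearMap.comp_apply, PH_s, cm_s]
  suffices h : cm g (n+1) ∘ₗ rzP H s (n+1) = rzP H (g.comp s) (n+1) by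
    simpa using LinearMap.congr_fun h _
  apply L_ext; intro v
  simp only [LinearMap.comp_apply, rzP_s, cm_s]
  congr 1
  ext x
  simp [hH]

/-- homotopic to the identity -/
lemma homotopy_cycle (H : C(X × Spx 2, X)) (h0 : ∀ x, H (x, vert 0) = x) (n : ℕ) (z : Ch X n)
    (hz : Cyc cd n z) : z - cm (hEnd H 1) n z = cd n (PH H n z) := by
  have e : hEnd H 0 = ContinuousMap.id X := by ext x; exact h0 x
  cases n with
  | zero => rw [PH_zero, map_zero, (cm_zero_eq _ z z).2 rfl, sub_self]
  | succ n => rw [cd_PH, show cd n z = 0 from hz, map_zero, sub_zero, e, cm_id]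

/-- invariant constant chains on an orbit -/
def KK (g : C(X, X)) (x₀ : X) (k : ℕ) : Ch X k :=
  ∑ i : Fin 3, Cs (ContinuousMap.const (Spx k) (g^[i] x₀))

lemma cd_KK (g : C(X, X)) (x₀ : X) (k : ℕ) :
    cd k (KK g x₀ (k+1)) = (∑ i : Fin (k+1), (-1 : ℚ)^(i : ℕ)) • KK g x₀ k := by
  rw [KK, map_sum, KK, Finset.smul_sum]
  refine Finset.sum_congr rfl fun j _ => ?_
  rw [cd_s, Finset.sum_smul]
  rfl

lemma cm_const (g : C(X, X)) (x : X) (k : ℕ) :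
    cm g k (Cs (ContinuousMap.const (Spx k) x)) = Cs (ContinuousMap.const (Spx k) (g x)) := by
  rw [cm_s]; rfl

lemma cm_KK (g : C(X, X)) (g3 : ∀ x, g (g (g x)) = x) (x₀ : X) (k : ℕ) :
    cm g k (KK g x₀ k) = KK g x₀ k := by
  rw [KK, map_sum]
  simp only [cm_const, Fin.sum_univ_three]
  simp [g3]
  abel

lemma KK_orbit (g : C(X, X)) (g3 : ∀ x, g (g (g x)) = x) (x₀ : X) (j : ℕ) (k : ℕ) :
    KK g (g^[j] x₀) k = KK g x₀ k := by
  induction j with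
  | zero => rfl
  | succ j ih =>
    rw [← ih, Function.iterate_succ_apply']
    simp only [KK, Fin.sum_univ_three]
    simp [g3]
    abel

lemma KK_ne (g : C(X, X)) (x₀ : X) (k : ℕ) : KK g x₀ k ≠ 0 := by
  intro h
  have := congrArg (Finsupp.linearCombination ℚ (fun _ : C(Spx k, X) => (1 : ℚ))) h
  rw [KK, map_sum] at this
  simp at this

lemma alt_sum (k : ℕ) : (∑ i : Fin (k+1), (-1 : ℚ)^(i : ℕ)) = if Even k then 1 else 0 := by
  rw [Fin.sum_univ_eq_sum_range (fun i => (-1 : ℚ)^i)]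
  induction k with
  | zero => simp
  | succ k ih =>
    rw [Finset.sum_range_succ, ih]
    by_cases h : Even k
    · rw [if_pos h, if_neg (by simpa [Nat.even_add_one] using h), pow_succ, h.neg_one_pow]; norm_num
    · rw [if_neg h, if_pos (Nat.even_add_one.2 h), pow_succ, (Nat.not_even_iff_odd.1 h).neg_one_pow]
      norm_num

/-- acyclicity of invariant chains from an equivariant contraction to an orbit -/
lemma contract (H : C(X × Spx 2, X)) (h0 : ∀ x, H (x, vert 0) = x) (g : C(X, X))
    (g3 : ∀ x, g (g (g x)) = x) (hH : ∀ x t, H (g x, t) = g (H (x, t))) (x₀ : X)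
    (h1 : ∀ k (s : C(Spx k, X)), ∃ j : ℕ, ∀ t, H (s t, vert 1) = g^[j] x₀) (n : ℕ) (z : Ch X n)
    (hg : cm g n z = z) (hz : Cyc cd n z) : ∃ w, cm g (n+1) w = w ∧ cd n w = z := by
  set r := hEnd H 1 with hr
  let e : Ch X n →ₗ[ℚ] ℚ := Finsupp.linearCombination ℚ (fun _ => (1/3 : ℚ))
  have key : cm r n z = e z • KK g x₀ n := by
    have h3 : cm r n z = (1/3 : ℚ) • (cm r n z + cm g n (cm r n z) + cm g n (cm g n (cm r n z))) := by
      have hc : cm g n (cm r n z) = cm r n z := by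
        rw [cm_cm, show g.comp r = r.comp g from ?_, ← cm_cm, hg]
        ext x
        exact (hH x _).symm
      rw [hc, hc]
      module
    rw [h3]
    have : (1/3 : ℚ) • (cm r n + cm g n ∘ₗ cm r n + cm g n ∘ₗ cm g n ∘ₗ cm r n) =
        e.smulRight (KK g x₀ n) := by
      apply C_ext; intro s
      obtain ⟨j, hj⟩ := h1 n s
      have hs : r.comp s = ContinuousMap.const _ (g^[j] x₀) := by
        ext t; exact hj t
      simp only [LinearMap.smul_apply, LinearMap.add_apply, LinearMap.comp_apply, cm_s r, hs,
        cm_const, LinearMap.smulRight_apply]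
      rw [← KK_orbit g g3 x₀ j, KK, Fin.sum_univ_three]
      simp [e]
    simpa using LinearMap.congr_fun this z
  have hh := homotopy_cycle H h0 n z hz
  by_cases he : Even n
  · refine ⟨PH H n z + e z • KK g x₀ (n+1), ?_, ?_⟩
    · rw [map_add, cm_PH H g hH, hg, map_smul, cm_KK g g3]
    · rw [map_add, ← hh, map_smul, cd_KK, alt_sum, if_pos he, one_smul, ← key]
      abel
  · refine ⟨PH H n z, ?_, ?_⟩
    · rw [cm_PH H g hH, hg]
    · rw [← hh]
      cases n with
      | zero => simp at he
      | succ n =>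
        have h5 : cd n (cm r (n+1) z) = 0 := by
          rw [cd_cm, show cd n z = 0 from hz, map_zero]
        rw [key, map_smul, cd_KK, alt_sum, if_pos (by simpa [Nat.even_add_one] using he), one_smul,
          smul_eq_zero, or_iff_left (KK_ne _ _ _)] at h5
        rw [key, h5, zero_smul, sub_zero]

/-- transfer from the subspace over `U` -/
lemma RA_of_sub (p : C(X, Y)) (g : C(X, X)) (U : Set Y) (n : ℕ)
    (g' : C({x // p x ∈ U}, {x // p x ∈ U})) (hg' : ∀ x, (g' x).1 = g x.1)
    (h : ∀ z : Ch {x // p x ∈ U} n, cm g' n z = z → Cyc cd n z → ∃ w, cm g' (n+1) w = w ∧ cd n w = z) :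
    RA p g n U := by
  intro z hz cz
  let i : C({x // p x ∈ U}, X) := ⟨Subtype.val, continuous_subtype_val⟩
  have hi : ∀ k, Function.Injective (cm i k) := by
    intro k
    apply Finsupp.mapDomain_injective
    intro s t hst
    ext x
    exact DFunLike.congr_fun hst x
  have hgi : ∀ k c, cm g k (cm i k c) = cm i k (cm g' k c) := by
    intro k c
    rw [cm_cm, cm_cm]
    congr 2
    ext x
    exact (hg' x).symm
  have hr : ∀ c ∈ Sp p n U, ∃ c', cm i n c' = c := by
    intro c hc
    have : Sp p n U ≤ LinearMap.range (cm i n) := by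
      rw [Sp, Finsupp.supported_eq_span_single, Submodule.span_le]
      rintro _ ⟨s, hs, rfl⟩
      refine ⟨Cs ⟨fun t => ⟨s t, hs t⟩, by fun_prop⟩, ?_⟩
      rw [cm_s]
      rfl
    exact this hc
  obtain ⟨z', rfl⟩ := hr z (mem_IS.1 hz).1
  obtain ⟨w, hw, hw'⟩ := h z' (hi n (by rw [← hgi]; exact (mem_IS.1 hz).2)) (by
    cases n with
    | zero => trivial
    | succ n =>
      apply hi n
      rw [← cd_cm, map_zero]
      exact cz)
  refine ⟨cm i (n+1) w, mem_IS.2 ⟨?_, ?_⟩, ?_⟩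
  · have : w ∈ Finsupp.supported ℚ ℚ (Set.univ : Set C(Spx (n+1), {x // p x ∈ U})) := by simp
    refine supp_map (cm i (n+1)) (fun s _ => ?_) this
    rw [cm_s]
    exact single_supp fun t => (s t).2
  · rw [hgi, hw]
  · rw [cd_cm, hw']

end P10
end

section
namespace P10
set_option linter.unusedSectionVars false
set_option linter.unusedVariables false

/-! ### The geometry of the hypersurface -/

/-- the base of the projection -/
abbrev E3 := Fin 3 → ℂ

/-- the four linear forms -/
def ell : Fin 4 → (E3 →L[ℝ] ℂ) :=
  ![(ContinuousLinearMap.proj 0 : E3 →L[ℝ] ℂ), (ContinuousLinearMap.proj 1 : E3 →L[ℝ] ℂ),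
    (ContinuousLinearMap.proj 2 : E3 →L[ℝ] ℂ), (ContinuousLinearMap.proj 0 : E3 →L[ℝ] ℂ) +
      (ContinuousLinearMap.proj 1 : E3 →L[ℝ] ℂ) + (ContinuousLinearMap.proj 2 : E3 →L[ℝ] ℂ)]

lemma ell_prod (x : E3) : ∏ j, ell j x = x 0 * x 1 * x 2 * (x 0 + x 1 + x 2) := by
  rw [Fin.prod_univ_four]
  rfl

/-- points of the punctured hypersurface -/
def mkZ (x : E3) (y : ℂ) (h : y ^ 3 = ∏ j, ell j x) (hx : x ≠ 0) : ZPunct :=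
  ⟨![x 0, x 1, x 2, y], by rw [ell_prod] at h; exact h, fun h0 => hx (by
    funext i
    have := congrFun h0 i.castSucc
    fin_cases i <;> exact this)⟩

/-- the projection -/
def prZ : C(ZPunct, E3) where
  toFun z := ![z.1 0, z.1 1, z.1 2]
  continuous_toFun := by
    refine continuous_pi fun i => ?_
    fin_cases i
    · exact show Continuous (fun z : ZPunct => z.1 0) from
        (continuous_apply 0).comp continuous_subtype_val
    · exact show Continuous (fun z : ZPunct => z.1 1) from
        (continuous_apply 1).comp continuous_subtype_val
    · exact show Continuous (fun z : ZPunct => z.1 2) from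
        (continuous_apply 2).comp continuous_subtype_val

/-- the last coordinate -/
def lastZ : C(ZPunct, ℂ) where
  toFun z := z.1 3
  continuous_toFun := (continuous_apply 3).comp continuous_subtype_val

@[simp] lemma prZ_mk (x : E3) (y : ℂ) (h) (hx) : prZ (mkZ x y h hx) = x := by
  funext i
  fin_cases i <;> rfl

@[simp] lemma lastZ_mk (x : E3) (y : ℂ) (h) (hx) : lastZ (mkZ x y h hx) = y := rfl

lemma Z_eq (z : ZPunct) : lastZ z ^ 3 = ∏ j, ell j (prZ z) := by
  rw [ell_prod]; exact z.2.1

lemma Z_ext {z w : ZPunct} (h1 : prZ z = prZ w) (h2 : lastZ z = lastZ w) : z = w := by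
  apply Subtype.ext
  funext i
  fin_cases i
  · exact congrFun h1 0
  · exact congrFun h1 1
  · exact congrFun h1 2
  · exact h2

lemma prZ_ne (z : ZPunct) : prZ z ≠ 0 := by
  intro h
  apply z.2.2
  have h3 : lastZ z = 0 := by
    have := Z_eq z
    rw [h, ell_prod] at this
    simpa using this
  funext i
  fin_cases i
  · exact congrFun h 0
  · exact congrFun h 1
  · exact congrFun h 2
  · exact h3

lemma continuous_mkZ {A : Type} [TopologicalSpace A] (x : A → E3) (y : A → ℂ)
    (h : ∀ a, y a ^ 3 = ∏ j, ell j (x a)) (hx : ∀ a, x a ≠ 0) (cx : Continuous x)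
    (cy : Continuous y) : Continuous (fun a => mkZ (x a) (y a) (h a) (hx a)) := by
  refine Continuous.subtype_mk (continuous_pi fun i => ?_) _
  fin_cases i
  · exact show Continuous (fun a => x a 0) from (continuous_apply 0).comp cx
  · exact show Continuous (fun a => x a 1) from (continuous_apply 1).comp cx
  · exact show Continuous (fun a => x a 2) from (continuous_apply 2).comp cx
  · exact cy

/-- cube root of unity -/
def om : ℂ := Complex.exp (2 * Real.pi * Complex.I / (3 : ℕ))

lemma om_prim : IsPrimitiveRoot om 3 := Complex.isPrimitiveRoot_exp 3 (by norm_num)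

lemma om3 : om ^ 3 = 1 := om_prim.pow_eq_one

/-- the deck transformation -/
def gZ : C(ZPunct, ZPunct) where
  toFun z := mkZ (prZ z) (om * lastZ z) (by rw [mul_pow, om3, one_mul, Z_eq]) (prZ_ne z)
  continuous_toFun := continuous_mkZ (fun z => prZ z) (fun z => om * lastZ z)
    (fun z => by rw [mul_pow, om3, one_mul, Z_eq]) prZ_ne (by fun_prop) (by fun_prop)

@[simp] lemma prZ_gZ (z : ZPunct) : prZ (gZ z) = prZ z :=
  prZ_mk (prZ z) (om * lastZ z) (by rw [mul_pow, om3, one_mul, Z_eq]) (prZ_ne z)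

@[simp] lemma lastZ_gZ (z : ZPunct) : lastZ (gZ z) = om * lastZ z := rfl

lemma gZ3 (z : ZPunct) : gZ (gZ (gZ z)) = z := by
  apply Z_ext
  · simp
  · simp only [lastZ_gZ]
    rw [← mul_assoc, ← mul_assoc, ← pow_two, ← pow_succ, om3, one_mul]

lemma lastZ_iter (j : ℕ) (z : ZPunct) : lastZ (gZ^[j] z) = om ^ j * lastZ z ∧
    prZ (gZ^[j] z) = prZ z := by
  induction j with
  | zero => simp
  | succ j ih =>
    rw [Function.iterate_succ_apply', lastZ_gZ, prZ_gZ, ih.1, ih.2, pow_succ]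
    exact ⟨by ring, rfl⟩

lemma cube_orbit (a y : ℂ) (h : y ^ 3 = a ^ 3) : ∃ j : ℕ, y = om ^ j * a := by
  by_cases ha : a = 0
  · refine ⟨0, ?_⟩
    rw [ha] at h ⊢
    simpa using h
  · have : (y / a) ^ 3 = 1 := by rw [div_pow, h, div_self (pow_ne_zero 3 ha)]
    obtain ⟨j, _, hj⟩ := om_prim.eq_pow_of_pow_eq_one this
    exact ⟨j, by rw [hj]; field_simp⟩

lemma cube_finite (a : ℂ) : {y : ℂ | y ^ 3 = a ^ 3}.Finite := by
  refine (Set.finite_range (fun j : Fin 3 => om ^ (j : ℕ) * a)).subset ?_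
  intro y hy
  obtain ⟨j, rfl⟩ := cube_orbit a y hy
  refine ⟨⟨j % 3, Nat.mod_lt _ (by norm_num)⟩, ?_⟩
  simp only
  rw [← pow_eq_pow_mod j om3]

instance (k : ℕ) : PreconnectedSpace (Spx k) :=
  Subtype.preconnectedSpace (convex_stdSimplex ℝ (Fin k)).isPreconnected

lemma const_of_cube {k : ℕ} (f : Spx (k+1) → ℂ) (hf : Continuous f) (a : ℂ)
    (h : ∀ t, f t ^ 3 = a ^ 3) : ∃ j : ℕ, ∀ t, f t = om ^ j * a := by
  obtain ⟨j, hj⟩ := cube_orbit a (f (vert 0)) (h _)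
  refine ⟨j, fun t => ?_⟩
  rw [← hj]
  exact isPreconnected_univ.constant_of_mapsTo (T := {y : ℂ | y ^ 3 = a ^ 3})
    (cube_finite a).isDiscrete hf.continuousOn (fun t _ => h t) trivial trivial

/-- straight-line contraction -/
def seg (p x : E3) (t : Spx 2) : E3 := t.1 0 • x + t.1 1 • p

lemma continuous_seg (p : E3) : Continuous (fun a : E3 × Spx 2 => seg p a.1 a.2) := by
  unfold seg
  have h0 : Continuous fun a : E3 × Spx 2 => a.2.1 0 :=
    (continuous_apply 0).comp (continuous_subtype_val.comp continuous_snd)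
  have h1 : Continuous fun a : E3 × Spx 2 => a.2.1 1 :=
    (continuous_apply 1).comp (continuous_subtype_val.comp continuous_snd)
  fun_prop

lemma seg_mem {U : Set E3} (hU : Convex ℝ U) {p x : E3} (hp : p ∈ U) (hx : x ∈ U) (t : Spx 2) :
    seg p x t ∈ U :=
  hU hx hp (t.2.1 0) (t.2.1 1) (by have := t.2.2; rwa [Fin.sum_univ_two] at this)

@[simp] lemma seg_zero (p x : E3) : seg p x (vert 0) = x := by simp [seg, vert]
@[simp] lemma seg_one (p x : E3) : seg p x (vert 1) = p := by simp [seg, vert]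

lemma RA_base {U : Set E3} (hU : Convex ℝ U) {p : E3} (hp : p ∈ U) (n : ℕ) :
    RA (ContinuousMap.id E3) (ContinuousMap.id E3) n U := by
  refine RA_of_sub _ _ U n (ContinuousMap.id _) (fun x => rfl) ?_
  intro z hg hz
  refine contract ⟨fun a => ⟨seg p a.1.1 a.2, seg_mem hU hp a.1.2 a.2⟩, ?_⟩ ?_
    (ContinuousMap.id _) (fun x => rfl) (fun x t => rfl) ⟨p, hp⟩ ?_ n z hg hz
  · refine Continuous.subtype_mk ?_ _
    exact (continuous_seg p).comp
      ((continuous_subtype_val.comp continuous_fst).prodMk continuous_snd)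
  · intro x
    apply Subtype.ext
    exact seg_zero _ _
  · intro k s
    refine ⟨0, fun t => ?_⟩
    apply Subtype.ext
    exact seg_one _ _

lemma RA_top {U : Set E3} (hU : Convex ℝ U) (hU0 : (0 : E3) ∉ U) {p : E3} (hp : p ∈ U)
    (m : Fin 4 → U × Spx 2 → ℂ) (hm : ∀ j, Continuous (m j)) (hm0 : ∀ j x, m j (x, vert 0) = 1)
    (hme : ∀ j x t, m j (x, t) ^ 3 * ell j x.1 = ell j (seg p x.1 t)) (n : ℕ) :
    RA prZ gZ n U := by
  let g' : C({x // prZ x ∈ U}, {x // prZ x ∈ U}) :=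
    ⟨fun x => ⟨gZ x.1, by rw [prZ_gZ]; exact x.2⟩, by fun_prop⟩
  refine RA_of_sub _ _ U n g' (fun x => rfl) ?_
  intro z hg hz
  let xx : {x // prZ x ∈ U} × Spx 2 → E3 := fun a => seg p (prZ a.1.1) a.2
  let yy : {x // prZ x ∈ U} × Spx 2 → ℂ := fun a =>
    (∏ j, m j (⟨prZ a.1.1, a.1.2⟩, a.2)) * lastZ a.1.1
  have hxx : ∀ a, xx a ∈ U := fun a => seg_mem hU hp a.1.2 a.2
  have hyy : ∀ a, yy a ^ 3 = ∏ j, ell j (xx a) := by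
    intro a
    simp only [yy, xx]
    rw [mul_pow, Z_eq, ← Finset.prod_pow, ← Finset.prod_mul_distrib]
    exact Finset.prod_congr rfl fun j _ => hme j _ _
  have hne : ∀ a, xx a ≠ 0 := fun a h => hU0 (h ▸ hxx a)
  let H : C({x // prZ x ∈ U} × Spx 2, {x // prZ x ∈ U}) :=
    ⟨fun a => ⟨mkZ (xx a) (yy a) (hyy a) (hne a), by rw [prZ_mk]; exact hxx a⟩, by
      refine Continuous.subtype_mk (continuous_mkZ _ _ _ _ ?_ ?_) _
      · exact (continuous_seg p).comp (Continuous.prodMk (by fun_prop) continuous_snd)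
      · have : ∀ j, Continuous fun a : {x // prZ x ∈ U} × Spx 2 =>
            m j (⟨prZ a.1.1, a.1.2⟩, a.2) := fun j =>
          (hm j).comp (Continuous.prodMk (by fun_prop) continuous_snd)
        fun_prop⟩
  have hp0 : p ≠ 0 := fun h => hU0 (h ▸ hp)
  obtain ⟨a, ha⟩ : ∃ a : ℂ, a ^ 3 = ∏ j, ell j p :=
    ⟨_, Complex.cpow_nat_inv_pow _ (by norm_num)⟩
  let x₀ : {x // prZ x ∈ U} := ⟨mkZ p a ha hp0, by rw [prZ_mk]; exact hp⟩
  have hit : ∀ j : ℕ, (g'^[j] x₀).1 = gZ^[j] x₀.1 := by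
    intro j
    induction j with
    | zero => rfl
    | succ j ih => rw [Function.iterate_succ_apply', Function.iterate_succ_apply', ← ih]; rfl
  have hHp : ∀ a, prZ (H a).1 = xx a := fun a => prZ_mk _ _ (hyy a) (hne a)
  have hHl : ∀ a, lastZ (H a).1 = yy a := fun a => rfl
  refine contract H ?_ g' ?_ ?_ x₀ ?_ n z hg hz
  · intro x
    apply Subtype.ext
    apply Z_ext
    · rw [hHp]
      exact seg_zero _ _
    · rw [hHl]
      simp only [yy]
      simp only [hm0, Finset.prod_const_one, one_mul]
  · intro x
    exact Subtype.ext (gZ3 _)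
  · intro x t
    apply Subtype.ext
    apply Z_ext
    · change _ = prZ (gZ (H (x, t)).1)
      rw [prZ_gZ, hHp, hHp]
      change seg p (prZ (gZ x.1)) t = seg p (prZ x.1) t
      rw [prZ_gZ]
    · change _ = lastZ (gZ (H (x, t)).1)
      rw [lastZ_gZ, hHl, hHl]
      have e : ∀ h, (⟨prZ (gZ x.1), h⟩ : U) = ⟨prZ x.1, x.2⟩ := fun h => Subtype.ext (prZ_gZ _)
      change (∏ j, m j (⟨prZ (gZ x.1), _⟩, t)) * lastZ (gZ x.1) =
        om * ((∏ j, m j (⟨prZ x.1, _⟩, t)) * lastZ x.1)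
      simp only [e, lastZ_gZ]
      ring
  · intro k s
    cases k with
    | zero => exact ⟨0, fun t => isEmptyElim t⟩
    | succ k =>
      obtain ⟨j, hj⟩ := const_of_cube (fun t => lastZ (H (s t, vert 1)).1) (by fun_prop) a (by
        intro t
        have h1 := Z_eq (H (s t, vert 1)).1
        have h2 : prZ (H (s t, vert 1)).1 = p := by
          rw [hHp]
          exact seg_one _ _
        rw [h2, ← ha] at h1
        exact h1)
      refine ⟨j, fun t => ?_⟩
      apply Subtype.ext
      rw [hit]
      apply Z_ext
      · rw [(lastZ_iter j _).2]
        rw [hHp, show prZ x₀.1 = p from prZ_mk p a ha hp0]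
        exact seg_one _ _
      · rw [(lastZ_iter j _).1]
        exact hj t

end P10
end

section
namespace P10
set_option linter.unusedSectionVars false
set_option linter.unusedVariables false

lemma ell_surj (j : Fin 4) (v : ℂ) : ∃ x, ell j x = v := by
  fin_cases j
  · exact ⟨![v, 0, 0], rfl⟩
  · exact ⟨![0, v, 0], rfl⟩
  · exact ⟨![0, 0, v], rfl⟩
  · exact ⟨![0, 0, v], show (0 : ℂ) + 0 + v = v by ring⟩

lemma ell_indep (l : Fin 4) (v : Fin 4 → ℂ) : ∃ x, ∀ j, j ≠ l → ell j x = v j := by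
  fin_cases l
  · refine ⟨![v 3 - v 1 - v 2, v 1, v 2], fun j hj => ?_⟩
    fin_cases j
    · exact absurd rfl hj
    · rfl
    · rfl
    · exact show v 3 - v 1 - v 2 + v 1 + v 2 = v 3 by ring
  · refine ⟨![v 0, v 3 - v 0 - v 2, v 2], fun j hj => ?_⟩
    fin_cases j
    · rfl
    · exact absurd rfl hj
    · rfl
    · exact show v 0 + (v 3 - v 0 - v 2) + v 2 = v 3 by ring
  · refine ⟨![v 0, v 1, v 3 - v 0 - v 1], fun j hj => ?_⟩
    fin_cases j
    · rfl
    · rfl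
    · exact absurd rfl hj
    · exact show v 0 + v 1 + (v 3 - v 0 - v 1) = v 3 by ring
  · refine ⟨![v 0, v 1, v 2], fun j hj => ?_⟩
    fin_cases j
    · rfl
    · rfl
    · rfl
    · exact absurd rfl hj

lemma ell_bound (l : Fin 4) (w : E3) (ε : ℝ) (h : ∀ j, j ≠ l → ‖ell j w‖ < ε) (j : Fin 4) :
    ‖ell j w‖ < 3 * ε := by
  have hε : 0 < ε := by
    obtain ⟨j, hj⟩ := exists_ne l
    exact (norm_nonneg _).trans_lt (h j hj)
  by_cases hj : j = l
  · subst hj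
    fin_cases j
    · have e : ell 0 w = ell 3 w - ell 1 w - ell 2 w :=
        show w 0 = w 0 + w 1 + w 2 - w 1 - w 2 by ring
      have h1 := norm_sub_le (ell 3 w - ell 1 w) (ell 2 w)
      have h2 := norm_sub_le (ell 3 w) (ell 1 w)
      have := h 1 (by decide)
      have := h 2 (by decide)
      have := h 3 (by decide)
      change ‖ell 0 w‖ < _
      rw [e]
      linarith
    · have e : ell 1 w = ell 3 w - ell 0 w - ell 2 w :=
        show w 1 = w 0 + w 1 + w 2 - w 0 - w 2 by ring
      have h1 := norm_sub_le (ell 3 w - ell 0 w) (ell 2 w)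
      have h2 := norm_sub_le (ell 3 w) (ell 0 w)
      have := h 0 (by decide)
      have := h 2 (by decide)
      have := h 3 (by decide)
      change ‖ell 1 w‖ < _
      rw [e]
      linarith
    · have e : ell 2 w = ell 3 w - ell 0 w - ell 1 w :=
        show w 2 = w 0 + w 1 + w 2 - w 0 - w 1 by ring
      have h1 := norm_sub_le (ell 3 w - ell 0 w) (ell 1 w)
      have h2 := norm_sub_le (ell 3 w) (ell 0 w)
      have := h 0 (by decide)
      have := h 1 (by decide)
      have := h 3 (by decide)
      change ‖ell 2 w‖ < _
      rw [e]
      linarith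
    · have e : ell 3 w = ell 0 w + ell 1 w + ell 2 w := rfl
      have h1 := norm_add_le (ell 0 w + ell 1 w) (ell 2 w)
      have h2 := norm_add_le (ell 0 w) (ell 1 w)
      have := h 0 (by decide)
      have := h 1 (by decide)
      have := h 2 (by decide)
      change ‖ell 3 w‖ < _
      rw [e]
      linarith
  · linarith [h j hj]

lemma half_plane (S : Set ℂ) (hS : Convex ℝ S) (hO : IsOpen S) (h0 : (0 : ℂ) ∉ S) :
    ∃ c : ℂ, ∀ s ∈ S, c * s ∈ Complex.slitPlane := by
  obtain ⟨f, hf⟩ := geometric_hahn_banach_point_open hS hO h0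
  refine ⟨⟨f 1, - f Complex.I⟩, fun s hs => Or.inl ?_⟩
  have h := hf s hs
  rw [map_zero] at h
  have e : s = s.re • (1 : ℂ) + s.im • Complex.I := by
    apply Complex.ext <;> simp
  have e2 : f s = s.re * f 1 + s.im * f Complex.I := by
    conv_lhs => rw [e]
    rw [map_add, map_smul, map_smul]
    rfl
  rw [e2] at h
  rw [Complex.mul_re]
  simp only
  linarith

lemma ell_seg (j : Fin 4) (p x : E3) (t : Spx 2) :
    ell j (seg p x t) = (t.1 0 : ℂ) * ell j x + (t.1 1 : ℂ) * ell j p := by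
  rw [seg, map_add, map_smul, map_smul, Complex.real_smul, Complex.real_smul]

lemma factor {U : Set E3} (hU : Convex ℝ U) (hO : IsOpen U) {p : E3} (hp : p ∈ U) (j : Fin 4)
    (h : ell j p = 0 ∨ ∀ x ∈ U, ell j x ≠ 0) :
    ∃ m : U × Spx 2 → ℂ, Continuous m ∧ (∀ x, m (x, vert 0) = 1) ∧
      ∀ x t, m (x, t) ^ 3 * ell j x.1 = ell j (seg p x.1 t) := by
  rcases h with h | h
  · refine ⟨fun a => (((a.2.1 0) ^ ((3 : ℕ) : ℝ)⁻¹ : ℝ) : ℂ), ?_, ?_, ?_⟩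
    · have h0 : Continuous fun a : U × Spx 2 => a.2.1 0 :=
        (continuous_apply 0).comp (continuous_subtype_val.comp continuous_snd)
      exact Complex.continuous_ofReal.comp
        ((Real.continuous_rpow_const (by positivity)).comp h0)
    · intro x
      simp [vert]
    · intro x t
      simp only
      rw [← Complex.ofReal_pow, Real.rpow_inv_natCast_pow (t.2.1 0) (by norm_num), ell_seg, h,
        mul_zero, add_zero]
  · obtain ⟨c, hc⟩ := half_plane (Set.image (ell j) U) (hU.linear_image (ell j).toLinearMap)
      ((ell j).isOpenMap (ell_surj j) U hO) (by rintro ⟨x, hx, e⟩; exact h x hx e)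
    have hc0 : c ≠ 0 := by
      rintro rfl
      have := hc _ ⟨p, hp, rfl⟩
      simp at this
    have hs : ∀ a : U × Spx 2, c * ell j (seg p a.1.1 a.2) ∈ Complex.slitPlane := fun a =>
      hc _ ⟨_, seg_mem hU hp a.1.2 a.2, rfl⟩
    have hx : ∀ x : U, c * ell j x.1 ∈ Complex.slitPlane := fun x => hc _ ⟨_, x.2, rfl⟩
    have hne : ∀ x : U, (c * ell j x.1) ^ (((3 : ℕ) : ℂ)⁻¹) ≠ 0 := by
      intro x e
      have := Complex.cpow_nat_inv_pow (c * ell j x.1) (n := 3) (by norm_num)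
      rw [e] at this
      exact mul_ne_zero hc0 (h _ x.2) (by rw [← this]; norm_num)
    refine ⟨fun a => (c * ell j (seg p a.1.1 a.2)) ^ (((3 : ℕ) : ℂ)⁻¹) /
      (c * ell j a.1.1) ^ (((3 : ℕ) : ℂ)⁻¹), ?_, ?_, ?_⟩
    · refine Continuous.div ?_ ?_ (fun a => hne a.1)
      · refine Continuous.cpow ?_ continuous_const hs
        refine continuous_const.mul ((ell j).continuous.comp ?_)
        exact (continuous_seg p).comp
          ((continuous_subtype_val.comp continuous_fst).prodMk continuous_snd)
      · refine Continuous.cpow ?_ continuous_const (fun a => hx a.1)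
        exact continuous_const.mul ((ell j).continuous.comp
          (continuous_subtype_val.comp continuous_fst))
    · intro x
      simp only [seg_zero]
      exact div_self (hne x)
    · intro x t
      simp only
      rw [div_pow, Complex.cpow_nat_inv_pow _ (by norm_num),
        Complex.cpow_nat_inv_pow _ (by norm_num)]
      have := h _ x.2
      field_simp

/-- boxes -/
def box (l : Fin 4) (D : Fin 4 → Set ℂ) : Set E3 := {x | ∀ j, j ≠ l → ell j x ∈ D j}

/-- the family of good boxes -/
def goodBox (l : Fin 4) : Set (Set E3) :=
  {U | ∃ D : Fin 4 → Set ℂ, (∀ j, Convex ℝ (D j) ∧ IsOpen (D j)) ∧ U = box l D ∧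
    ∀ x ∈ U, ell l x ≠ 0}

lemma box_convex (l : Fin 4) (D : Fin 4 → Set ℂ) (h : ∀ j, Convex ℝ (D j)) :
    Convex ℝ (box l D) := by
  intro x hx y hy a b ha hb hab j hj
  rw [map_add, map_smul, map_smul]
  exact h j (hx j hj) (hy j hj) ha hb hab

lemma box_open (l : Fin 4) (D : Fin 4 → Set ℂ) (h : ∀ j, IsOpen (D j)) : IsOpen (box l D) := by
  have : box l D = ⋂ j : Fin 4, {x | j ≠ l → ell j x ∈ D j} := by
    ext x; simp [box]
  rw [this]
  refine isOpen_iInter_of_finite fun j => ?_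
  by_cases hj : j = l
  · simp [hj]
  · have h2 := (h j).preimage (ell j).continuous
    simp only [ne_eq, hj, not_false_eq_true, true_implies]
    exact h2

/-- the cone theory of the projection -/
abbrev CZ : HT E3 := Cone prZ gZ prZ_gZ

lemma box_acyc (l : Fin 4) (U : Set E3) (hU : U ∈ goodBox l) (n : ℕ) : CZ.Acyc n U := by
  obtain ⟨D, hD, hUD, h0⟩ := hU
  rcases U.eq_empty_or_nonempty with rfl | ⟨q, hq⟩
  · exact cone_empty _ _ _ n
  have hc : Convex ℝ U := hUD ▸ box_convex l D fun j => (hD j).1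
  have ho : IsOpen U := hUD ▸ box_open l D fun j => (hD j).2
  classical
  obtain ⟨p, hp⟩ := ell_indep l (fun j => if 0 ∈ D j then 0 else ell j q)
  have hq' : ∀ j, j ≠ l → ell j q ∈ D j := by rw [hUD] at hq; exact hq
  have hpU : p ∈ U := by
    rw [hUD]
    intro j hj
    rw [hp j hj]
    split_ifs with h
    · exact h
    · exact hq' j hj
  have hU0 : (0 : E3) ∉ U := fun h => h0 0 h (map_zero _)
  have hfac := fun j => factor hc ho hpU j (by
    by_cases hj : j = l
    · exact Or.inr (by rw [hj]; exact h0)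
    · by_cases h : 0 ∈ D j
      · left; rw [hp j hj, if_pos h]
      · right
        intro x hx e
        rw [hUD] at hx
        exact h (e ▸ hx j hj))
  choose m hm1 hm2 hm3 using hfac
  exact cone_acyc _ _ _ U (RA_top hc hU0 hpU m hm1 hm2 hm3) (RA_base hc hpU) n

lemma good_acyc (l : Fin 4) (V : Set E3) (hV : IsOpen V) (h : ∀ x ∈ V, ell l x ≠ 0) (n : ℕ) :
    CZ.Acyc n V := by
  refine CZ.bredon (goodBox l) ?_ ?_ (box_acyc l) (cone_empty _ _ _) V ?_ n
  · rintro U ⟨D, hD, rfl, -⟩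
    exact box_open l D fun j => (hD j).2
  · rintro U ⟨D, hD, rfl, h0⟩ U' ⟨D', hD', rfl, h0'⟩
    refine ⟨fun j => D j ∩ D' j, fun j => ⟨(hD j).1.inter (hD' j).1, (hD j).2.inter (hD' j).2⟩,
      ?_, fun x hx => h0 x hx.1⟩
    ext x
    constructor
    · rintro ⟨h1, h2⟩ j hj
      exact ⟨h1 j hj, h2 j hj⟩
    · intro h
      exact ⟨fun j hj => (h j hj).1, fun j hj => (h j hj).2⟩
  · intro x hx
    obtain ⟨ε, hε, hb⟩ := Metric.isOpen_iff.1 hV x hx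
    have hsub : box l (fun j => Metric.ball (ell j x) (ε/3)) ⊆ V := by
      intro y hy
      apply hb
      rw [mem_ball_iff_norm, pi_norm_lt_iff hε]
      have hw := ell_bound l (y - x) (ε/3) (fun j hj => by
        have := hy j hj
        rw [mem_ball_iff_norm] at this
        rw [map_sub]; exact this)
      have e3 : 3 * (ε / 3) = ε := by ring
      rw [e3] at hw
      intro i
      fin_cases i
      · exact hw 0
      · exact hw 1
      · exact hw 2
    refine ⟨_, ⟨_, fun j => ⟨convex_ball _ _, Metric.isOpen_ball⟩, rfl,
      fun y hy => h y (hsub hy)⟩, ?_, hsub⟩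
    intro j hj
    exact Metric.mem_ball_self (by positivity)

lemma ell_ne_open (l : Fin 4) : IsOpen {x : E3 | ell l x ≠ 0} :=
  isOpen_ne.preimage (ell l).continuous

lemma CZ_acyc (n : ℕ) : CZ.Acyc n {x : E3 | x ≠ 0} := by
  have e : {x : E3 | x ≠ 0} = ({x | ell 0 x ≠ 0} ∪ {x | ell 1 x ≠ 0}) ∪ {x | ell 2 x ≠ 0} := by
    ext x
    change x ≠ 0 ↔ ((x 0 ≠ 0 ∨ x 1 ≠ 0) ∨ x 2 ≠ 0)
    constructor
    · intro h
      by_contra! h'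
      apply h
      funext i
      fin_cases i
      · exact h'.1.1
      · exact h'.1.2
      · exact h'.2
    · rintro h rfl
      simp at h
  rw [e]
  refine CZ.mv n _ _ ((ell_ne_open 0).union (ell_ne_open 1)) (ell_ne_open 2) ?_
    (good_acyc 2 _ (ell_ne_open 2) (fun x hx => hx) n) (fun m _ => ?_)
  · refine CZ.mv n _ _ (ell_ne_open 0) (ell_ne_open 1) (good_acyc 0 _ (ell_ne_open 0) (fun x hx => hx) n)
      (good_acyc 1 _ (ell_ne_open 1) (fun x hx => hx) n) (fun m _ => ?_)
    exact good_acyc 0 _ ((ell_ne_open 0).inter (ell_ne_open 1)) (fun x hx => hx.1) m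
  · exact good_acyc 2 _ (((ell_ne_open 0).union (ell_ne_open 1)).inter (ell_ne_open 2))
      (fun x hx => hx.2) m

/-! ### Punctured affine space -/

/-- seven linear forms -/
def hf : Fin 7 → E3 → ℝ :=
  ![fun x => (x 0).re, fun x => (x 0).im, fun x => (x 1).re, fun x => (x 1).im,
    fun x => (x 2).re, fun x => (x 2).im,
    fun x => -((x 0).re + (x 0).im + (x 1).re + (x 1).im + (x 2).re + (x 2).im)]

/-- half spaces -/
def hs (i : Fin 7) : Set E3 := {x | 0 < hf i x}

lemma hs_Q (i : Fin 7) : IsOpen (hs i) ∧ Convex ℝ (hs i) := by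
  have hl : IsLinearMap ℝ (hf i) := by
    constructor
    · intro x y
      fin_cases i <;> simp [hf] <;> ring
    · intro c x
      fin_cases i <;> simp [hf] <;> ring
  have hc : Continuous (hf i) := LinearMap.continuous_of_finiteDimensional hl.mk'
  exact ⟨isOpen_lt continuous_const hc, convex_halfSpace_gt hl 0⟩

lemma hs_inter (m : Fin 7) : ∃ x, ∀ i, i ≠ m → x ∈ hs i := by
  refine ⟨![⟨if m = 0 then -10 else 1, if m = 1 then -10 else 1⟩,
    ⟨if m = 2 then -10 else 1, if m = 3 then -10 else 1⟩,
    ⟨if m = 4 then -10 else 1, if m = 5 then -10 else 1⟩], fun i hi => ?_⟩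
  change 0 < hf i _
  fin_cases m <;> fin_cases i <;> first | exact absurd rfl hi | (simp [hf]; try norm_num)

lemma hs_union : lU (List.ofFn hs) = {x : E3 | x ≠ 0} := by
  ext x
  have : x ∈ lU (List.ofFn hs) ↔ ∃ i, 0 < hf i x := by
    constructor
    · rintro ⟨U, hU, hx⟩
      obtain ⟨i, rfl⟩ := (List.mem_ofFn' _ _).1 hU
      exact ⟨i, hx⟩
    · rintro ⟨i, hi⟩
      exact ⟨hs i, (List.mem_ofFn' _ _).2 ⟨i, rfl⟩, hi⟩
  rw [this]
  constructor
  · rintro ⟨i, hi⟩ rfl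
    fin_cases i <;> simp [hf] at hi
  · intro hx
    by_contra! h
    apply hx
    have h0 : (x 0).re ≤ 0 := h 0
    have h1 : (x 0).im ≤ 0 := h 1
    have h2 : (x 1).re ≤ 0 := h 2
    have h3 : (x 1).im ≤ 0 := h 3
    have h4 : (x 2).re ≤ 0 := h 4
    have h5 : (x 2).im ≤ 0 := h 5
    have h6 : -((x 0).re + (x 0).im + (x 1).re + (x 1).im + (x 2).re + (x 2).im) ≤ 0 := h 6
    funext i
    fin_cases i
    · exact Complex.ext (show (x 0).re = 0 by linarith) (show (x 0).im = 0 by linarith)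
    · exact Complex.ext (show (x 1).re = 0 by linarith) (show (x 1).im = 0 by linarith)
    · exact Complex.ext (show (x 2).re = 0 by linarith) (show (x 2).im = 0 by linarith)

lemma base_acyc (n : ℕ) (hn : n ≤ 5) :
    RA (ContinuousMap.id E3) (ContinuousMap.id E3) n {x : E3 | x ≠ 0} := by
  rw [← hs_union, ← RA_iff _ _ (fun _ => rfl)]
  refine HT.nerve _ (fun U => IsOpen U ∧ Convex ℝ U) (fun U h => h.1)
    (fun U V h h' => ⟨h.1.inter h'.1, h.2.inter h'.2⟩)
    (fun U h ⟨p, hp⟩ n => (RA_iff _ _ _ _ _).2 (RA_base h.2 hp n)) 7 (List.ofFn hs) (by simp)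
    (by simp [List.ofFn_succ]) ?_ n ?_
  · intro U hU
    obtain ⟨i, rfl⟩ := (List.mem_ofFn' _ _).1 hU
    exact hs_Q i
  · intro f hf
    have : ∀ i, ∃ a, hs a = f i := fun i => (List.mem_ofFn' _ _).1 (hf i)
    choose a ha using this
    have hns : ¬ Function.Surjective a := by
      intro h
      have := Fintype.card_le_of_surjective a h
      simp at this
      omega
    have : ∃ m, ∀ i, a i ≠ m := by
      unfold Function.Surjective at hns
      push Not at hns
      exact hns
    obtain ⟨m, hm⟩ := this
    obtain ⟨x, hx⟩ := hs_inter m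
    exact ⟨x, fun i => by rw [← ha i]; exact hx _ (hm i)⟩

/-! ### The main vanishing result -/

/-- path of rotations -/
def rot (t : Spx 2) : ℂ := Complex.exp ((t.1 1 : ℂ) * (2 * Real.pi * Complex.I / (3 : ℕ)))

lemma continuous_rot : Continuous rot := by
  have h1 : Continuous fun a : Spx 2 => a.1 1 := (continuous_apply 1).comp continuous_subtype_val
  exact Complex.continuous_exp.comp ((Complex.continuous_ofReal.comp h1).mul continuous_const)

lemma rot_ne (t : Spx 2) : rot t ≠ 0 := Complex.exp_ne_zero _

lemma rot_eq (a : ZPunct × Spx 2) : (rot a.2 ^ 4 * lastZ a.1) ^ 3 =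
    ∏ j, ell j (rot a.2 ^ 3 • prZ a.1) := by
  rw [mul_pow, Z_eq, ell_prod, ell_prod]
  simp only [Pi.smul_apply, smul_eq_mul]
  ring

lemma rot_ne' (a : ZPunct × Spx 2) : rot a.2 ^ 3 • prZ a.1 ≠ 0 :=
  smul_ne_zero (pow_ne_zero _ (rot_ne _)) (prZ_ne _)

/-- the rotation homotopy -/
def rotH : C(ZPunct × Spx 2, ZPunct) where
  toFun a := mkZ (rot a.2 ^ 3 • prZ a.1) (rot a.2 ^ 4 * lastZ a.1) (rot_eq a) (rot_ne' a)
  continuous_toFun := by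
    have := continuous_rot
    exact continuous_mkZ _ _ rot_eq rot_ne' (by fun_prop) (by fun_prop)

lemma rotH_zero (z : ZPunct) : rotH (z, vert 0) = z := by
  have e : rot (vert 0) = 1 := by simp [rot, vert]
  apply Z_ext
  · refine (prZ_mk _ _ (rot_eq (z, vert 0)) (rot_ne' (z, vert 0))).trans ?_
    simp [e]
  · refine (lastZ_mk _ _ (rot_eq (z, vert 0)) (rot_ne' (z, vert 0))).trans ?_
    simp [e]

lemma rotH_one : hEnd rotH 1 = gZ := by
  have e : rot (vert 1) = om := by simp [rot, vert, om]
  ext1 z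
  change rotH (z, vert 1) = gZ z
  apply Z_ext
  · refine (prZ_mk _ _ (rot_eq (z, vert 1)) (rot_ne' (z, vert 1))).trans ?_
    rw [prZ_gZ, e, om3, one_smul]
  · refine (lastZ_mk _ _ (rot_eq (z, vert 1)) (rot_ne' (z, vert 1))).trans ?_
    rw [lastZ_gZ, e, pow_succ om 3, om3, one_mul]

lemma main_exact (n : ℕ) (hn : n ≤ 4) (z : Ch ZPunct (n+1)) (hz : cd n z = 0) :
    ∃ w, cd (n+1) w = z := by
  set g := cm gZ (n+1) with hg
  have h1 : z - g z = cd (n+1) (PH rotH (n+1) z) := by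
    rw [← homotopy_cycle rotH rotH_zero (n+1) z hz, rotH_one]
  set w1 := PH rotH (n+1) z
  have h2 : g z - g (g z) = cd (n+1) (cm gZ (n+2) w1) := by
    rw [cd_cm, ← h1, map_sub]
  have g3 : g (g (g z)) = z := by
    rw [hg, cm_cm, cm_cm]
    have : gZ.comp (gZ.comp gZ) = ContinuousMap.id _ := by ext1 x; exact gZ3 x
    rw [ContinuousMap.comp_assoc, this, cm_id]
  set v := (1/3 : ℚ) • (z + g z + g (g z)) with hv
  have hvg : g v = v := by
    rw [hv, map_smul, map_add, map_add, g3]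
    congr 1
    abel
  have hgz : cd n (g z) = 0 := by rw [hg, cd_cm, hz, map_zero]
  have hcv : cd n v = 0 := by
    rw [hv, map_smul, map_add, map_add, hz, hgz, hg, cd_cm, hgz, map_zero]
    simp
  have hvS : v ∈ IS prZ gZ (n+1) {x : E3 | x ≠ 0} := by
    refine mem_IS.2 ⟨?_, hvg⟩
    have : v ∈ Finsupp.supported ℚ ℚ (Set.univ : Set C(Spx (n+1), ZPunct)) := by simp
    exact Finsupp.supported_mono (s := Set.univ)
      (t := {s : C(Spx (n+1), ZPunct) | ∀ x, prZ (s x) ∈ {x : E3 | x ≠ 0}})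
      (fun s _ x => prZ_ne (s x)) this
  obtain ⟨y, hy, hy'⟩ := base_acyc (n+1) (by omega) (cm prZ (n+1) v) (cm_IS _ _ _ _ _ hvS)
    (show cd n (cm prZ (n+1) v) = 0 by rw [cd_cm, hcv, map_zero])
  have hcone : coneD prZ (n+1) (v, y) = 0 := by
    rw [coneD_succ, hcv, hy', sub_self]; rfl
  obtain ⟨ab, -, hab⟩ := CZ_acyc (n+2) (v, y)
    ((mem_coneS_succ prZ gZ _ (n+1) v y).2 ⟨hvS, hy⟩) hcone
  obtain ⟨a, ha⟩ : ∃ a : Ch ZPunct (n+2), cd (n+1) a = v := ⟨ab.1, congrArg Prod.fst hab⟩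
  refine ⟨(1/3 : ℚ) • (w1 + w1 + cm gZ (n+2) w1) + a, ?_⟩
  rw [map_add, ha, map_smul, map_add, map_add, ← h1, ← h2, hv]
  module

end P10
end

section
namespace P10

/-! ### Comparison with the singular complex -/

variable {X : Type} [TopologicalSpace X]

/-- singular simplices as continuous maps -/
def sx (X : Type) [TopologicalSpace X] (n : ℕ) :
    C(Spx (n+1), X) ≃ (TopCat.toSSet.obj (TopCat.of X)).obj (Opposite.op (SimplexCategory.mk n)) :=
  (TopCat.toSSetObjEquiv (TopCat.of X) (Opposite.op (SimplexCategory.mk n))).symm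

/-- chains versus the singular complex -/
def eqv (X : Type) [TopologicalSpace X] (n : ℕ) :
    Ch X (n+1) ≃ₗ[ℚ] ((singularChainComplex X).X n : ModuleCat ℚ) :=
  Finsupp.domLCongr (sx X n)

lemma eqv_s (n : ℕ) (s : C(Spx (n+1), X)) :
    eqv X n (Cs s) = ModuleCat.freeMk (R := ℚ) (sx X n s) :=
  Finsupp.domLCongr_single _ _ _

lemma fc_map {k : ℕ} (i : Fin (k+1)) (x : Spx k) : fc i x = stdSimplex.map i.succAbove x := by
  apply Subtype.ext
  funext j
  change ∑ a, x.1 a * (Pi.single (i.succAbove a) 1 : Fin (k+1) → ℝ) j =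
    FunOnFinite.linearMap ℝ ℝ i.succAbove x.1 j
  rw [FunOnFinite.linearMap_apply_apply]
  rw [Finset.sum_filter]
  refine Finset.sum_congr rfl fun a _ => ?_
  by_cases h : i.succAbove a = j
  · subst h; simp
  · rw [Pi.single_eq_of_ne (Ne.symm h), if_neg h, mul_zero]

lemma sx_face (n : ℕ) (i : Fin (n+2)) (s : C(Spx (n+2), X)) :
    (TopCat.toSSet.obj (TopCat.of X)).δ i (sx X (n+1) s) = sx X n (s.comp (fc i)) := by
  apply (sx X n).symm.injective
  rw [Equiv.symm_apply_apply]
  ext1 x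
  rw [ContinuousMap.comp_apply, fc_map]
  rfl

lemma d_single (n : ℕ) (s : C(Spx (n+2), X)) :
    (∑ i : Fin (n+2), ((-1 : ℤ)^(i : ℕ)) •
      (ModuleCat.free ℚ).map ((TopCat.toSSet.obj (TopCat.of X)).δ i)).hom
      (ModuleCat.freeMk (sx X (n+1) s)) =
    ∑ i : Fin (n+2), ((-1 : ℚ)^(i : ℕ)) • ModuleCat.freeMk (R := ℚ) (sx X n (s.comp (fc i))) := by
  rw [ModuleCat.hom_sum, LinearMap.sum_apply]
  refine Finset.sum_congr rfl fun i _ => ?_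
  rw [← sx_face, ModuleCat.hom_zsmul, LinearMap.smul_apply]
  rw [← Int.cast_smul_eq_zsmul ℚ]
  push_cast
  congr 1
  exact ModuleCat.free_map_apply _ _

lemma d_eqv (n : ℕ) (c : Ch X (n+2)) :
    (singularChainComplex X).d (n+1) n (eqv X (n+1) c) = eqv X n (cd (n+1) c) := by
  suffices h : ((singularChainComplex X).d (n+1) n).hom ∘ₗ (eqv X (n+1)).toLinearMap =
      (eqv X n).toLinearMap ∘ₗ cd (n+1) from LinearMap.congr_fun h c
  apply C_ext
  intro s
  rw [LinearMap.comp_apply, LinearMap.comp_apply, cd_s, map_sum]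
  simp only [LinearEquiv.coe_coe, map_smul, eqv_s]
  have key : (singularChainComplex X).d (n+1) n = ∑ i : Fin (n+2), ((-1 : ℤ)^(i : ℕ)) •
      (ModuleCat.free ℚ).map ((TopCat.toSSet.obj (TopCat.of X)).δ i) :=
    alternatingFaceMapComplex_obj_d _ _
  rw [key]
  exact d_single n s

lemma chain_exact (n : ℕ) (hn : 1 ≤ n) (hn' : n ≤ 4) (z : ((singularChainComplex ZPunct).X n))
    (hz : (singularChainComplex ZPunct).d n (n-1) z = 0) :
    ∃ w, (singularChainComplex ZPunct).d (n+1) n w = z := by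
  obtain ⟨m, rfl⟩ : ∃ m, n = m + 1 := ⟨n-1, by omega⟩
  obtain ⟨c, rfl⟩ := (eqv ZPunct (m+1)).surjective z
  change (singularChainComplex ZPunct).d (m+1) m _ = 0 at hz
  rw [d_eqv, LinearEquiv.map_eq_zero_iff] at hz
  obtain ⟨w, hw⟩ := main_exact (m+1) hn' c hz
  exact ⟨eqv _ _ w, by rw [d_eqv, hw]⟩

lemma extend {A B C : Type} [AddCommGroup A] [AddCommGroup B] [AddCommGroup C] [Module ℚ A]
    [Module ℚ B] [Module ℚ C] (a : A →ₗ[ℚ] B) (b : B →ₗ[ℚ] C)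
    (h : ∀ z, b z = 0 → ∃ w, a w = z) (f : B →ₗ[ℚ] ℚ) (hf : f ∘ₗ a = 0) :
    ∃ g : C →ₗ[ℚ] ℚ, g ∘ₗ b = f := by
  have hk : LinearMap.ker b ≤ LinearMap.ker f := by
    intro z hz
    obtain ⟨w, rfl⟩ := h z hz
    exact LinearMap.congr_fun hf w
  obtain ⟨g, hg⟩ := LinearMap.exists_extend
    ((LinearMap.ker b).liftQ f hk ∘ₗ b.quotKerEquivRange.symm.toLinearMap)
  refine ⟨g, ?_⟩
  ext z
  have h1 := LinearMap.congr_fun hg ⟨b z, LinearMap.mem_range_self b z⟩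
  have h2 : b.quotKerEquivRange.symm ⟨b z, LinearMap.mem_range_self b z⟩ =
      (LinearMap.ker b).mkQ z := LinearMap.quotKerEquivRange_symm_apply_image b z _
  rw [LinearMap.comp_apply, LinearMap.comp_apply, LinearEquiv.coe_coe, h2] at h1
  exact h1

lemma cochain_exact (n : ℕ) (hn : 1 ≤ n) (hn' : n ≤ 4) :
    Subsingleton ((singularCochainComplex ZPunct).homology n) := by
  obtain ⟨m, rfl⟩ : ∃ m, n = m + 1 := ⟨n-1, by omega⟩
  apply ModuleCat.subsingleton_of_isZero
  apply HomologicalComplex.ExactAt.isZero_homology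
  rw [HomologicalComplex.exactAt_iff' _ m (m+1) (m+2)
    (ComplexShape.prev_eq' _ (by simp)) (ComplexShape.next_eq' _ (by simp))]
  rw [ShortComplex.moduleCat_exact_iff]
  intro f hf
  change ((singularChainComplex ZPunct).X (m+1) ⟶ ModuleCat.of ℚ ℚ) at f
  change (singularChainComplex ZPunct).d (m+2) (m+1) ≫ f = 0 at hf
  obtain ⟨g, hg⟩ := extend ((singularChainComplex ZPunct).d (m+2) (m+1)).hom
    ((singularChainComplex ZPunct).d (m+1) m).hom (fun z hz => chain_exact (m+1) hn hn' z hz)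
    f.hom (by rw [← ModuleCat.hom_comp, hf]; rfl)
  refine ⟨(ModuleCat.ofHom g : (singularChainComplex ZPunct).X m ⟶ ModuleCat.of ℚ ℚ), ?_⟩
  change (singularChainComplex ZPunct).d (m+1) m ≫ ModuleCat.ofHom g = f
  ext1
  exact hg

end P10
end

/-- For the affine hypersurface `Z : x₄³ = x₁x₂x₃(x₁+x₂+x₃)` in `ℂ⁴`,
the singular cohomology groups `H²(Z ∖ {0}; ℚ)` and `H³(Z ∖ {0}; ℚ)` both vanish
(equivalently, since `ℚ` is a field, the singular homology groups `H₂` and `H₃` of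
`Z ∖ {0}` with `ℚ`-coefficients vanish). -/
theorem stmt10 :
    Subsingleton ((singularCochainComplex ZPunct).homology 2) ∧
    Subsingleton ((singularCochainComplex ZPunct).homology 3) := by
  exact ⟨P10.cochain_exact 2 (by norm_num) (by norm_num),
    P10.cochain_exact 3 (by norm_num) (by norm_num)⟩
end
end
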